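/- Let (d,n,r) be one of the triples (6,2,9), (4,3,8), (3,5,9). Then for a generic choice of vectors a₁,…,a_r ∈ ℂ^{n+1}, the homogeneous polynomial f = Σᵢ ℓ_{aᵢ}^d ∈ ℂ[x₀,…,xₙ] satisfies: (1) f is not a sum of fewer than r d-th powers of linear forms; and (2) the set of multisets { {ℓ_{b₁}^d, …, ℓ_{b_r}^d} : b₁,…,b_r ∈ ℂ^{n+1} and Σᵢ ℓ_{bᵢ}^d = f } has exactly two elements. In other words, in these three exceptional cases the general symmetric tensor of rank r has exactly two Waring decompositions. -/

import Mathlib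

/-!
A decomposition of length `r` is viewed as a set of `r` points, and two point sets `a`, `b` give the
same form of degree `d` iff all forms `g` of degree `d` satisfy `∑ g (a i) = ∑ g (b i)` (`apolar`,
`SameSum`).

*The cases (6, 2, 9) and (4, 3, 8).* Both are instances of one argument. Write `d = 2e + 2`. The
points `a` lie on a complete intersection curve `q = 0` of `k` forms of degree `e + 1`, where
`k * e = 2`: a plane cubic, or the intersection of two quadrics in space. A certificate `GoodData`
records this curve together with the genericity that is needed.

* Products of the forms `q` of one decomposition with forms dual to the points of another one show
  that all decompositions lie on the same curve (`q_vanishes`), and that two of them which share a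
  point agree (`eqv_of_proportional`).
* Let `s` be a form of degree `d`. In any linear relation between the values of all forms of degree
  `d` at common zeros of `q` and `s`, the coefficients are inversely proportional to the Jacobian of
  `(q, s)` (`euler_jacobi`, a version of the Euler–Jacobi theorem). The form `s = ∑ (a i)₀ w i` of
  the certificate vanishes at `a`, with Jacobian normalized so that the coefficients at the points
  `a` agree. Noether's theorem (`Saturated`) shows that the `2r` points of `q = s = 0` impose
  dependent conditions on forms of degree `d`, so there is a nontrivial relation between them.
  After rescaling, it says that the points other than `a` give a second decomposition
  (`exists_second`).
* Conversely, a decomposition `b` sharing no point with `a` lies on `s = 0`, and its Jacobian there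
  is determined (`residual`). For two such decompositions `b` and `c`, disjoint from each other, the
  relation `∑ g (b i) - ∑ g (c i) = 0` would force Jacobians of opposite sign (`no_three`).

So a form all of whose decompositions have certificates has exactly two of them (`core`). A
certificate is constructed explicitly for points on a cuspidal rational curve
(`exists_goodData_of_curve`). It deforms to generic points, since the equations of a certificate have
surjective differential in the unknowns (`generic_good`). Finally the power sum map has injective
differential, so that its coordinates contain `r (n + 1)` algebraically independent polynomials; a
generic condition on `t` then holds at every point of the fibre through a generic `t`
(`generic_transfer`), and in particular every decomposition of a generic form has a certificate.

*The case (3, 5, 9).* Nine generic points of `ℙ⁵` lie on a Veronese surface (`generic_veronese`). Its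
secant variety is a cubic hypersurface, singular exactly along the surface, so in particular at the
nine points. By Terracini's lemma (`generic_cubic_terracini`) a cubic singular at the points of one
decomposition is singular at those of every other one, so all decompositions lie on the same
Veronese surface. Restriction to the surface turns cubics in six variables into sextics in three,
and the claim becomes the case (6, 2, 9) (`sum_six_iff`, `eqv_six_iff`, `twoDec_cubic`).
-/

open MvPolynomial

noncomputable section

/-- The linear form `a₀x₀ + ⋯ + aₙxₙ` with coefficient vector `a`. -/
def linForm {n : ℕ} (a : Fin (n + 1) → ℂ) : MvPolynomial (Fin (n + 1)) ℂ :=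
  ∑ i, C (a i) * X i

/-- Evaluation at the point `v`, as a linear map. -/
def evalAt {n : ℕ} (v : Fin (n + 1) → ℂ) : MvPolynomial (Fin (n + 1)) ℂ →ₗ[ℂ] ℂ :=
  (aeval v).toLinearMap

/-- The linear map `f ↦ (∂f/∂xᵢ)(p)`. -/
def evalPDeriv {n : ℕ} (p : Fin (n + 1) → ℂ) (i : Fin (n + 1)) :
    MvPolynomial (Fin (n + 1)) ℂ →ₗ[ℂ] ℂ :=
  evalAt p ∘ₗ (pderiv i).toLinearMap

/-- `f` is singular at `p`: all partial derivatives of `f` vanish at `p`. -/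
def SingularAt {n : ℕ} (f : MvPolynomial (Fin (n + 1)) ℂ) (p : Fin (n + 1) → ℂ) : Prop :=
  ∀ i, evalPDeriv p i f = 0

/-- The space of homogeneous degree-`d` polynomials in `n+1` variables that vanish at every
point of `V` and are singular at every point of `S`. -/
def SingSpace (n : ℕ) (d : ℕ) (S V : Set (Fin (n + 1) → ℂ)) :
    Submodule ℂ (MvPolynomial (Fin (n + 1)) ℂ) :=
  homogeneousSubmodule (Fin (n + 1)) ℂ d ⊓ (⨅ v ∈ V, LinearMap.ker (evalAt v)) ⊓
    ⨅ p ∈ S, ⨅ i, LinearMap.ker (evalPDeriv p i)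

/-- A property of parameters `t : ι → ℂ` holds for a generic choice of `t` if there is a
nonzero polynomial `F` in the variables `ι` such that the property holds whenever
`F(t) ≠ 0`. -/
def Generic {ι : Type} [Fintype ι] (P : (ι → ℂ) → Prop) : Prop :=
  ∃ F : MvPolynomial ι ℂ, F ≠ 0 ∧ ∀ t : ι → ℂ, eval t F ≠ 0 → P t

end

/-! ### Forms, coefficient families and apolarity -/

namespace WaringTwo

open Finset

/-- Exponent vectors of total degree `d` in `n` variables. -/
abbrev Mon (n d : ℕ) : Type :=
  {m : Fin n →₀ ℕ // m ∈ (univ : Finset (Fin n)).finsuppAntidiag d}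

/-- The form of degree `d` with coefficient family `c`. -/
noncomputable def fm {n d : ℕ} (c : Mon n d → ℂ) : MvPolynomial (Fin n) ℂ :=
  ∑ m : Mon n d, monomial m.1 (c m)

theorem mon_degree {n d : ℕ} (m : Mon n d) : ∑ i, m.1 i = d := (mem_finsuppAntidiag.1 m.2).1

theorem card_mon (n d : ℕ) : Fintype.card (Mon n d) = (n + d - 1).choose d := by
  rw [Fintype.card_coe, card_finsuppAntidiag_nat_eq_choose]; simp

theorem isHomogeneous_fm {n d : ℕ} (c : Mon n d → ℂ) : (fm c).IsHomogeneous d := by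
  refine IsHomogeneous.sum _ _ _ fun m _ => isHomogeneous_monomial _ ?_
  rw [Finsupp.degree_eq_sum]; exact mon_degree m

/-- Every form of degree `d` has a coefficient family. -/
theorem exists_fm {n d : ℕ} {p : MvPolynomial (Fin n) ℂ} (hp : p.IsHomogeneous d) :
    ∃ c : Mon n d → ℂ, fm c = p := by
  refine ⟨fun m => coeff m.1 p, ?_⟩
  ext m
  unfold fm
  rw [coeff_sum]
  simp only [coeff_monomial]
  by_cases hm : m ∈ (univ : Finset (Fin n)).finsuppAntidiag d
  · rw [Finset.sum_eq_single (⟨m, hm⟩ : Mon n d)]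
    · simp
    · intro b _ hb
      rw [if_neg]; rintro rfl; exact hb rfl
    · simp
  · rw [Finset.sum_eq_zero]
    · by_contra hc
      refine hm (mem_finsuppAntidiag.2 ⟨?_, by simp⟩)
      have := hp (Ne.symm hc)
      rw [← Finsupp.degree_eq_sum, Finsupp.degree_eq_weight_one]
      exact this
    · intro b _
      rw [if_neg]; rintro rfl; exact hm b.2

theorem eval_fm {n d : ℕ} (c : Mon n d → ℂ) (x : Fin n → ℂ) :
    eval x (fm c) = ∑ m : Mon n d, c m * ∏ i, x i ^ m.1 i := by
  simp [fm, map_sum, eval_monomial, Finsupp.prod_fintype]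

theorem fm_add {n d : ℕ} (c c' : Mon n d → ℂ) : fm (c + c') = fm c + fm c' := by
  simp [fm, Finset.sum_add_distrib]

theorem fm_smul {n d : ℕ} (t : ℂ) (c : Mon n d → ℂ) : fm (t • c) = C t * fm c := by
  simp [fm, Finset.mul_sum, C_mul_monomial]

/-- `fm` as a linear map. -/
noncomputable def fmL (n d : ℕ) : (Mon n d → ℂ) →ₗ[ℂ] MvPolynomial (Fin n) ℂ where
  toFun := fm
  map_add' := fm_add
  map_smul' t c := by simp [fm_smul, smul_eq_C_mul]

theorem fm_injective {n d : ℕ} : Function.Injective (fm : (Mon n d → ℂ) → _) := by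
  intro c c' h
  funext m
  have := congrArg (coeff m.1) h
  have key : ∀ c : Mon n d → ℂ, coeff m.1 (fm c) = c m := by
    intro c
    unfold fm
    rw [coeff_sum]
    simp only [coeff_monomial]
    rw [Finset.sum_eq_single m]
    · simp
    · intro b _ hb
      rw [if_neg]; intro hh; exact hb (Subtype.ext hh)
    · simp
  rwa [key, key] at this

theorem coeff_linForm_pow {n d : ℕ} (a : Fin (n + 1) → ℂ) (m : Fin (n + 1) →₀ ℕ) :
    coeff m (linForm a ^ d) =
      if ∑ i, m i = d then (Nat.multinomial univ m : ℂ) * ∏ i, a i ^ m i else 0 := by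
  unfold linForm
  rw [Finset.sum_pow_eq_sum_piAntidiag, coeff_sum]
  have h1 : ∀ k : Fin (n + 1) → ℕ,
      coeff m ((Nat.multinomial univ k : MvPolynomial (Fin (n + 1)) ℂ) *
        ∏ i, (C (a i) * X i) ^ k i) =
      if k = m then (Nat.multinomial univ k : ℂ) * ∏ i, a i ^ k i else 0 := by
    intro k
    have : (Nat.multinomial univ k : MvPolynomial (Fin (n + 1)) ℂ) *
        ∏ i, (C (a i) * X i) ^ k i =
        monomial (Finsupp.equivFunOnFinite.symm k)
          ((Nat.multinomial univ k : ℂ) * ∏ i, a i ^ k i) := by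
      rw [monomial_eq, Finsupp.prod_fintype _ _ (by simp)]
      simp [mul_pow, Finset.prod_mul_distrib, mul_assoc]
    rw [this, coeff_monomial]
    congr 1
    rw [Equiv.symm_apply_eq]; rfl
  simp only [h1]
  rw [Finset.sum_ite_eq']
  simp [mem_piAntidiag]

/-- Apolarity: two sums of `d`-th powers agree iff the corresponding sums of point evaluations
agree on all forms of degree `d`. -/
theorem apolar {n d : ℕ} {I J : Type*} [Fintype I] [Fintype J]
    (a : I → Fin (n + 1) → ℂ) (b : J → Fin (n + 1) → ℂ) :
    ∑ i, linForm (a i) ^ d = ∑ j, linForm (b j) ^ d ↔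
      ∀ g : MvPolynomial (Fin (n + 1)) ℂ, g.IsHomogeneous d →
        ∑ i, eval (a i) g = ∑ j, eval (b j) g := by
  have h1 : ∑ i, linForm (a i) ^ d = ∑ j, linForm (b j) ^ d ↔
      ∀ m : Fin (n + 1) →₀ ℕ, ∑ i, m i = d →
        ∑ k, ∏ i, a k i ^ m i = ∑ k, ∏ i, b k i ^ m i := by
    rw [MvPolynomial.ext_iff]
    refine forall_congr' fun m => ?_
    simp only [coeff_sum, coeff_linForm_pow]
    by_cases hm : ∑ i, m i = d
    · simp only [hm, if_true, forall_true_left, ← Finset.mul_sum]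
      refine mul_right_inj' ?_
      exact_mod_cast (Nat.multinomial_pos _ _).ne'
    · simp [hm]
  rw [h1]
  constructor
  · intro h g hg
    obtain ⟨c, rfl⟩ := exists_fm hg
    simp only [eval_fm]
    rw [Finset.sum_comm, Finset.sum_comm (s := univ) (t := univ) (f := fun j m => c m * _)]
    refine Finset.sum_congr rfl fun m _ => ?_
    rw [← Finset.mul_sum, ← Finset.mul_sum, h m.1 (mon_degree m)]
  · intro h m hm
    have := h (monomial m 1) (isHomogeneous_monomial _ (by rw [Finsupp.degree_eq_sum]; exact hm))
    simpa [eval_monomial, Finsupp.prod_fintype] using this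

theorem linForm_smul {n : ℕ} (t : ℂ) (a : Fin (n + 1) → ℂ) :
    linForm (t • a) = C t * linForm a := by
  simp [linForm, Finset.mul_sum, mul_assoc]

theorem linForm_smul_pow {n : ℕ} (t : ℂ) (a : Fin (n + 1) → ℂ) (d : ℕ) :
    linForm (t • a) ^ d = C (t ^ d) * linForm a ^ d := by
  rw [linForm_smul, mul_pow, C_pow]

theorem linForm_injective {n : ℕ} : Function.Injective (linForm (n := n)) := by
  intro a b h
  funext i
  have := congrArg (eval (Pi.single i 1)) h
  simpa [linForm, Pi.single_apply] using this

theorem linForm_zero {n : ℕ} : linForm (0 : Fin (n + 1) → ℂ) = 0 := by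
  simp [linForm]

/-- Equal `d`-th powers of linear forms come from vectors differing by a `d`-th root of unity. -/
theorem linForm_pow_eq_iff {n d : ℕ} (hd : d ≠ 0) (a b : Fin (n + 1) → ℂ) :
    linForm a ^ d = linForm b ^ d ↔ ∃ z : ℂ, z ^ d = 1 ∧ a = z • b := by
  constructor
  · intro h
    by_cases hb : b = 0
    · subst hb
      rw [linForm_zero, zero_pow hd] at h
      have : linForm a = linForm 0 := by rw [linForm_zero]; exact pow_eq_zero_iff hd |>.1 h
      exact ⟨1, by simp, by simpa using linForm_injective this⟩
    · -- values of the two forms at `x` have equal powers; a coordinate of `b` gives the ratio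
      obtain ⟨i, hi⟩ : ∃ i, b i ≠ 0 := by
        by_contra hc; push Not at hc; exact hb (funext hc)
      have hv : ∀ m : Fin (n + 1) →₀ ℕ, ∑ i, m i = d → ∏ i, a i ^ m i = ∏ i, b i ^ m i := by
        intro m hm
        have := congrArg (coeff m) h
        rw [coeff_linForm_pow, coeff_linForm_pow, if_pos hm, if_pos hm] at this
        refine mul_left_cancel₀ ?_ this
        exact_mod_cast (Nat.multinomial_pos _ _).ne'
      have hii : a i ^ d = b i ^ d := by
        have := hv (Finsupp.single i d) (by simp [Finsupp.single_apply])
        simpa [Finsupp.single_apply, Finset.prod_ite_eq, pow_ite] using this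
      have hai : a i ≠ 0 := by
        intro h0; rw [h0, zero_pow hd] at hii; exact hi (pow_eq_zero_iff hd |>.1 hii.symm)
      refine ⟨a i / b i, by rw [div_pow, hii, div_self (pow_ne_zero _ hi)], ?_⟩
      obtain ⟨e, rfl⟩ := Nat.exists_eq_succ_of_ne_zero hd
      rw [Nat.succ_eq_add_one] at *
      funext j
      have hij : a i ^ e * a j = b i ^ e * b j := by
        by_cases hj : j = i
        · subst hj; rw [← pow_succ, ← pow_succ, hii]
        · have := hv (Finsupp.single i e + Finsupp.single j 1) (by
            simp [Finsupp.single_apply, Finset.sum_add_distrib])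
          have hp : ∀ a : Fin (n + 1) → ℂ,
              ∏ x, a x ^ (Finsupp.single i e + Finsupp.single j 1 : Fin (n + 1) →₀ ℕ) x = a i ^ e * a j := by
            intro a
            simp only [Finsupp.add_apply, pow_add, Finset.prod_mul_distrib]
            simp [Finsupp.single_apply, pow_ite]
          rwa [hp, hp] at this
      have h2 : a i ^ e * a i = b i ^ e * b i := by rw [← pow_succ, ← pow_succ, hii]
      simp only [Pi.smul_apply, smul_eq_mul]
      refine mul_left_cancel₀ (pow_ne_zero e hai) ?_
      rw [hij]
      field_simp
      linear_combination (-b j) * h2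
  · rintro ⟨z, hz, rfl⟩
    rw [linForm_smul_pow, hz, C_1, one_mul]

theorem eval_smul_of_homogeneous {n d : ℕ} {g : MvPolynomial (Fin n) ℂ} (hg : g.IsHomogeneous d)
    (t : ℂ) (x : Fin n → ℂ) : eval (t • x) g = t ^ d * eval x g := by
  obtain ⟨c, rfl⟩ := exists_fm hg
  simp only [eval_fm, Pi.smul_apply, smul_eq_mul, mul_pow, Finset.prod_mul_distrib,
    Finset.mul_sum]
  refine Finset.sum_congr rfl fun m _ => ?_
  rw [Finset.prod_pow_eq_pow_sum, mon_degree]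
  ring

end WaringTwo

/-! ### Euler–Jacobi relations -/

namespace WaringTwo

open Finset

theorem isHomogeneous_of_X_mul {σ : Type*} {i : σ} {d : ℕ} {g : MvPolynomial σ ℂ}
    (h : (X i * g).IsHomogeneous (d + 1)) : g.IsHomogeneous d := by
  intro m hm
  have h1 : coeff (Finsupp.single i 1 + m) (X i * g) ≠ 0 := by rwa [coeff_X_mul]
  have h2 := h h1
  rw [map_add, Finsupp.weight_single] at h2
  simp at h2
  omega

/-- Jacobian determinant of `F` with respect to the variables `x₁, …, x_N`, at the point `x`. -/
noncomputable def Jac {N : ℕ} (F : Fin N → MvPolynomial (Fin (N + 1)) ℂ) (x : Fin (N + 1) → ℂ) : ℂ :=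
  Matrix.det (Matrix.of fun i j : Fin N => eval x (pderiv j.succ (F i)))

/-- Division of a form `q` of degree `m` by the ideal of the point `p`, in the affine chart
`x₀ = 1`: modulo `x₀` the quotients do not depend on the point. -/
theorem exists_decomposition {N m : ℕ} {q : MvPolynomial (Fin (N + 1)) ℂ}
    (hq : q.IsHomogeneous m) :
    ∃ g : Fin N → MvPolynomial (Fin (N + 1)) ℂ, ∀ p : Fin (N + 1) → ℂ, p 0 = 1 →
      ∃ H : Fin N → MvPolynomial (Fin (N + 1)) ℂ, (∀ j, (X 0 * H j).IsHomogeneous m) ∧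
        (∀ j, X 0 ∣ H j - g j) ∧
        q - C (eval p q) * X 0 ^ m = ∑ j : Fin N, (X j.succ - C (p j.succ) * X 0) * H j := by
  obtain ⟨c, rfl⟩ := exists_fm hq
  clear hq
  -- the statement is linear in `q`, so monomials suffice
  have key : ∀ (s : Multiset (Fin (N + 1))),
      ∃ g : Fin N → MvPolynomial (Fin (N + 1)) ℂ, ∀ p : Fin (N + 1) → ℂ, p 0 = 1 →
      ∃ H : Fin N → MvPolynomial (Fin (N + 1)) ℂ,
        (∀ j, (X 0 * H j).IsHomogeneous (Multiset.card s)) ∧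
        (∀ j, X 0 ∣ H j - g j) ∧
        (s.map X).prod - C (eval p (s.map X).prod) * X 0 ^ (Multiset.card s) =
          ∑ j : Fin N, (X j.succ - C (p j.succ) * X 0) * H j := by
    intro s
    induction s using Multiset.induction with
    | empty =>
      refine ⟨0, fun p hp => ⟨0, fun j => ?_, fun j => ?_, ?_⟩⟩
      · simpa using isHomogeneous_zero _ _ _
      · simp
      · simp
    | cons i s ih =>
      have hhom : ((s.map X).prod : MvPolynomial (Fin (N + 1)) ℂ).IsHomogeneous
          (Multiset.card s) := by
        clear ih
        induction s using Multiset.induction with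
        | empty => simpa using isHomogeneous_one _ _
        | cons a s ih =>
          rw [Multiset.map_cons, Multiset.prod_cons, Multiset.card_cons, Nat.add_comm (Multiset.card s) 1]
          exact (isHomogeneous_X _ _).mul ih
      obtain ⟨g, hg⟩ := ih
      set P : MvPolynomial (Fin (N + 1)) ℂ := (s.map X).prod with hP
      refine Fin.cases ?_ (fun i => ?_) i
      · refine ⟨0, fun p hp => ?_⟩
        obtain ⟨H, h1, h2, h3⟩ := hg p hp
        refine ⟨fun j => X 0 * H j, fun j => ?_, fun j => ?_, ?_⟩
        · rw [Multiset.card_cons, Nat.add_comm (Multiset.card s) 1]; exact (isHomogeneous_X _ _).mul (h1 j)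
        · simp
        · simp only [Multiset.map_cons, Multiset.prod_cons, Multiset.card_cons, ← hP, map_mul,
            eval_X, hp, one_mul]
          rw [pow_succ]
          calc _ = X 0 * (P - C (eval p P) * X 0 ^ (Multiset.card s)) := by ring
            _ = _ := by
              rw [h3, Finset.mul_sum]
              exact Finset.sum_congr rfl fun j _ => by ring
      · refine ⟨fun j => if j = i then P else 0, fun p hp => ?_⟩
        obtain ⟨H, h1, h2, h3⟩ := hg p hp
        refine ⟨fun j => (if j = i then P else 0) + C (p i.succ) * (X 0 * H j),
          fun j => ?_, fun j => ?_, ?_⟩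
        · rw [Multiset.card_cons, Nat.add_comm (Multiset.card s) 1]
          refine (isHomogeneous_X _ _).mul (IsHomogeneous.add ?_ ?_)
          · split_ifs
            · exact hhom
            · exact isHomogeneous_zero _ _ _
          · simpa using (isHomogeneous_C _ (p i.succ)).mul (h1 j)
        · rw [add_sub_cancel_left]
          exact ⟨C (p i.succ) * H j, by ring⟩
        · simp only [Multiset.map_cons, Multiset.prod_cons, Multiset.card_cons, ← hP, map_mul,
            eval_X]
          rw [pow_succ]
          calc _ = (X i.succ - C (p i.succ) * X 0) * P +
                C (p i.succ) * X 0 * (P - C (eval p P) * X 0 ^ (Multiset.card s)) := by ring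
            _ = _ := by
              rw [h3, Finset.mul_sum]
              simp only [mul_add, Finset.sum_add_distrib, mul_ite, mul_zero, Finset.sum_ite_eq',
                Finset.mem_univ, if_true]
              congr 1
              exact Finset.sum_congr rfl fun j _ => by ring
  have key2 : ∀ μ : Mon (N + 1) m,
      ∃ g : Fin N → MvPolynomial (Fin (N + 1)) ℂ, ∀ p : Fin (N + 1) → ℂ, p 0 = 1 →
      ∃ H : Fin N → MvPolynomial (Fin (N + 1)) ℂ, (∀ j, (X 0 * H j).IsHomogeneous m) ∧
        (∀ j, X 0 ∣ H j - g j) ∧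
        monomial μ.1 1 - C (eval p (monomial μ.1 1)) * X 0 ^ m =
          ∑ j : Fin N, (X j.succ - C (p j.succ) * X 0) * H j := by
    intro μ
    have h1 := key (Finsupp.toMultiset μ.1)
    have h2 : ((Finsupp.toMultiset μ.1).map X).prod = (monomial μ.1 1 : MvPolynomial _ ℂ) := by
      rw [Finsupp.toMultiset_map, Finsupp.prod_toMultiset, monomial_eq]
      simp [Finsupp.prod_mapDomain_index, pow_add]
    have h3 : Multiset.card (Finsupp.toMultiset μ.1) = m := by
      rw [Finsupp.card_toMultiset, Finsupp.sum_fintype _ _ (by simp)]; exact mon_degree μ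
    rwa [h2, h3] at h1
  choose g H hH using key2
  refine ⟨fun j => ∑ μ, C (c μ) * g μ j, fun p hp =>
    ⟨fun j => ∑ μ, C (c μ) * H μ p hp j, fun j => ?_, fun j => ?_, ?_⟩⟩
  · rw [Finset.mul_sum]
    refine IsHomogeneous.sum _ _ _ fun μ _ => ?_
    have := (isHomogeneous_C _ (c μ)).mul ((hH μ p hp).1 j)
    rw [zero_add] at this
    convert this using 1; ring
  · rw [← Finset.sum_sub_distrib]
    refine Finset.dvd_sum fun μ _ => ?_
    rw [← mul_sub]
    exact Dvd.dvd.mul_left ((hH μ p hp).2.1 j) _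
  · have h4 : fm c = ∑ μ, C (c μ) * monomial μ.1 1 := by
      simp [fm, C_mul_monomial]
    simp only [h4, map_sum, map_mul, eval_C, Finset.sum_mul, ← Finset.sum_sub_distrib,
      Finset.mul_sum]
    rw [Finset.sum_comm]
    refine Finset.sum_congr rfl fun μ _ => ?_
    have := (hH μ p hp).2.2
    calc _ = C (c μ) * (monomial μ.1 1 - C (eval p (monomial μ.1 1)) * X 0 ^ m) := by ring
      _ = _ := by
        rw [this, Finset.mul_sum]
        exact Finset.sum_congr rfl fun j _ => by ring

/-- Matrices congruent modulo `x` have congruent determinants. -/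
theorem det_sub_dvd {N : ℕ} {R : Type*} [CommRing R] (x : R) (A B : Matrix (Fin N) (Fin N) R)
    (h : ∀ i j, x ∣ A i j - B i j) : x ∣ A.det - B.det := by
  rw [← Ideal.mem_span_singleton, ← Ideal.Quotient.mk_eq_mk_iff_sub_mem, RingHom.map_det,
    RingHom.map_det]
  congr 1
  ext i j
  simp only [RingHom.mapMatrix_apply, Matrix.map_apply]
  rw [Ideal.Quotient.mk_eq_mk_iff_sub_mem, Ideal.mem_span_singleton]
  exact h i j

theorem isHomogeneous_det {N : ℕ} {σ : Type*} (A : Matrix (Fin N) (Fin N) (MvPolynomial σ ℂ))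
    (ε : Fin N → ℕ) (h : ∀ i j, (A i j).IsHomogeneous (ε i)) :
    A.det.IsHomogeneous (∑ i, ε i) := by
  rw [← Matrix.det_transpose, Matrix.det_apply]
  refine IsHomogeneous.sum _ _ _ fun s _ => ?_
  have : (∏ i, A.transpose (s i) i).IsHomogeneous (∑ i, ε i) :=
    IsHomogeneous.prod _ _ _ fun i _ => h _ _
  rcases Int.units_eq_one_or (Equiv.Perm.sign s) with h1 | h1 <;> rw [h1]
  · simpa using this
  · simpa using this.neg

/-- **Euler–Jacobi relations** (Bezoutian form): if `F` is a system of `N` forms whose degrees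
`ε i + 1` satisfy `∑ ε i = D + 1`, any linear relation between the evaluations of degree-`D` forms at common zeros
of `F` has its coefficients inversely proportional to the Jacobian of `F`.  The points need not be
distinct, so coefficients at equal points are added. -/
theorem euler_jacobi {N D : ℕ} (F : Fin N → MvPolynomial (Fin (N + 1)) ℂ) (ε : Fin N → ℕ)
    (hF : ∀ i, (F i).IsHomogeneous (ε i + 1)) (hε : ∑ i, ε i = D + 1)
    {L : Type*} [Fintype L] (p : L → Fin (N + 1) → ℂ) (c : L → ℂ)
    (hp : ∀ l, p l 0 = 1) (hz : ∀ i l, eval (p l) (F i) = 0)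
    (hc : ∀ g : MvPolynomial (Fin (N + 1)) ℂ, g.IsHomogeneous D → ∑ l, c l * eval (p l) g = 0)
    [DecidableEq (Fin (N + 1) → ℂ)] (l l' : L) :
    (∑ m with p m = p l, c m) * Jac F (p l) = (∑ m with p m = p l', c m) * Jac F (p l') := by
  -- the determinant of the quotients at `p l` separates `p l` from the other common zeros, and its
  -- value at `p l` is the Jacobian
  choose g H hX hd hdec using fun i => exists_decomposition (hF i)
  let M : L → Matrix (Fin N) (Fin N) (MvPolynomial (Fin (N + 1)) ℂ) := fun l =>
    Matrix.of fun i j => H i (p l) (hp l) j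
  have hJ : ∀ l, eval (p l) (M l).det = Jac F (p l) := by
    intro l
    rw [RingHom.map_det, Jac]
    congr 1
    ext i j
    simp only [RingHom.mapMatrix_apply, Matrix.map_apply, Matrix.of_apply, M]
    have h1 := congrArg (fun q => eval (p l) (pderiv j.succ q)) (hdec i (p l) (hp l))
    simp only [map_sub, map_sum, pderiv_mul, pderiv_C, hz, zero_mul, map_zero, sub_zero,
      map_add, map_mul, pderiv_X, eval_X, eval_C, hp] at h1
    rw [h1, Finset.sum_eq_single j]
    · simp [(Fin.succ_ne_zero j).symm]
    · intro k _ hk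
      simp [(Fin.succ_ne_zero j).symm, hk]
    · simp
  have hZ : ∀ l m, p m ≠ p l → eval (p m) (M l).det = 0 := by
    intro l m hne
    rw [RingHom.map_det]
    refine Matrix.exists_mulVec_eq_zero_iff.1
      ⟨fun j : Fin N => p m j.succ - p l j.succ, fun h0 => hne ?_, ?_⟩
    · funext j
      refine Fin.cases ?_ (fun j => ?_) j
      · rw [hp, hp]
      · exact sub_eq_zero.1 (congrFun h0 j)
    · funext i
      have h1 := congrArg (eval (p m)) (hdec i (p l) (hp l))
      simp only [map_sub, map_sum, hz, zero_mul, map_zero, sub_zero,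
        map_mul, eval_X, eval_C, hp, mul_one] at h1
      simp only [Matrix.mulVec, dotProduct, RingHom.mapMatrix_apply, Matrix.map_apply,
        Matrix.of_apply, M, Pi.zero_apply]
      rw [h1]
      exact Finset.sum_congr rfl fun j _ => by ring
  have hhom : ∀ l, (M l).det.IsHomogeneous (D + 1) := by
    intro l
    rw [← hε]
    exact isHomogeneous_det _ _ fun i j => isHomogeneous_of_X_mul (hX i (p l) (hp l) j)
  have hsum : ∀ l, ∑ m, c m * eval (p m) (M l).det =
      (∑ m with p m = p l, c m) * Jac F (p l) := by
    intro l
    rw [Finset.sum_mul, ← Finset.sum_filter_add_sum_filter_not univ (fun m => p m = p l),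
      Finset.sum_eq_zero (s := univ.filter fun m => ¬ p m = p l), add_zero]
    · refine Finset.sum_congr rfl fun m hm => ?_
      rw [(Finset.mem_filter.1 hm).2, hJ]
    · intro m hm
      rw [hZ l m (Finset.mem_filter.1 hm).2, mul_zero]
  rw [← hsum, ← hsum, ← sub_eq_zero, ← Finset.sum_sub_distrib]
  -- two such determinants differ by a multiple of `X 0`, and the cofactor has degree `D`
  obtain ⟨G, hG⟩ : X 0 ∣ (M l).det - (M l').det := by
    refine det_sub_dvd _ _ _ fun i j => ?_
    have := dvd_sub (hd i (p l) (hp l) j) (hd i (p l') (hp l') j)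
    simpa [M] using this
  rw [← hc G (isHomogeneous_of_X_mul (i := 0) (hG ▸ (hhom l).sub (hhom l')))]
  refine Finset.sum_congr rfl fun m _ => ?_
  rw [← mul_sub, ← map_sub, hG, map_mul, eval_X, hp, one_mul]

end WaringTwo

/-! ### Fibres of polynomial maps with injective differential -/

namespace WaringTwo

open Finset

/-- The chain rule for polynomial substitutions. -/
theorem pderiv_aeval {ι κ : Type*} [Fintype κ] (ψ : κ → MvPolynomial ι ℂ) (R : MvPolynomial κ ℂ)
    (j : ι) : pderiv j (aeval ψ R) = ∑ k, aeval ψ (pderiv k R) * pderiv j (ψ k) := by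
  induction R using MvPolynomial.induction_on with
  | C a => simp [algebraMap_eq]
  | add p q hp hq => simp only [map_add, hp, hq, add_mul, Finset.sum_add_distrib]
  | mul_X p k hp =>
    have h1 : ∀ i, aeval ψ (pderiv i (p * X k)) * pderiv j (ψ i) =
        aeval ψ (pderiv i p) * pderiv j (ψ i) * ψ k +
          aeval ψ p * (aeval ψ (pderiv i (X k : MvPolynomial κ ℂ)) * pderiv j (ψ i)) := by
      intro i
      rw [pderiv_mul, map_add, map_mul, map_mul, aeval_X]; ring
    have h2 : ∑ i, aeval ψ (pderiv i (X k : MvPolynomial κ ℂ)) * pderiv j (ψ i) =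
        pderiv j (ψ k) := by
      rw [Finset.sum_eq_single k]
      · rw [pderiv_X_self, map_one, one_mul]
      · intro i _ hi; rw [pderiv_X_of_ne hi.symm, map_zero, zero_mul]
      · simp
    rw [Finset.sum_congr rfl fun i _ => h1 i, Finset.sum_add_distrib, ← Finset.mul_sum, h2,
      ← Finset.sum_mul, ← hp, map_mul, aeval_X, pderiv_mul]

theorem eval_aeval {ι κ : Type*} (ψ : κ → MvPolynomial ι ℂ) (x : ι → ℂ) (P : MvPolynomial κ ℂ) :
    eval x (aeval ψ P) = eval (fun k => eval x (ψ k)) P := by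
  induction P using MvPolynomial.induction_on with
  | C a => simp [algebraMap_eq]
  | add p q hp hq => rw [map_add, map_add, map_add, hp, hq]
  | mul_X p k hp => rw [map_mul, map_mul, map_mul, hp, aeval_X, eval_X]

theorem totalDegree_pderiv_lt {κ : Type*} {k : κ} {R : MvPolynomial κ ℂ} (h : pderiv k R ≠ 0) :
    (pderiv k R).totalDegree < R.totalDegree := by
  obtain ⟨m, hm, hd⟩ := exists_mem_eq_sup (pderiv k R).support
    (support_nonempty.2 h) (fun m => m.sum fun _ e => e)
  have h1 : (pderiv k R).totalDegree = m.sum fun _ e => e := hd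
  rw [mem_support_iff, coeff_pderiv] at hm
  have h2 : m + Finsupp.single k 1 ∈ R.support := by
    rw [mem_support_iff]; intro h0; rw [h0] at hm; simp at hm
  have h3 := le_totalDegree h2
  rw [Finsupp.sum_add_index' (by simp) (by simp), Finsupp.sum_single_index rfl] at h3
  omega

theorem exists_pderiv_ne_zero {κ : Type*} {R : MvPolynomial κ ℂ} (h : R.totalDegree ≠ 0) :
    ∃ k, pderiv k R ≠ 0 := by
  by_contra hc
  push Not at hc
  apply h
  rw [totalDegree_eq_zero_iff]
  intro m hm k
  rw [mem_support_iff] at hm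
  by_contra hne
  have h1 := congrArg (coeff (m - Finsupp.single k 1)) (hc k)
  have h2 : m - Finsupp.single k 1 + Finsupp.single k 1 = m := by
    refine tsub_add_cancel_of_le ?_
    rw [Finsupp.single_le_iff]; omega
  rw [coeff_pderiv, h2, coeff_zero] at h1
  rcases mul_eq_zero.1 h1 with h3 | h3
  · exact hm h3
  · exact Nat.cast_add_one_ne_zero _ h3

/-- In characteristic zero an algebraically dependent family has a relation not all of whose
partial derivatives are relations: take one of minimal degree. -/
theorem exists_relation {ι κ : Type*} (ψ : κ → MvPolynomial ι ℂ)
    (h : ¬ AlgebraicIndependent ℂ ψ) :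
    ∃ R : MvPolynomial κ ℂ, aeval ψ R = 0 ∧ ∃ k, aeval ψ (pderiv k R) ≠ 0 := by
  classical
  rw [algebraicIndependent_iff] at h
  push Not at h
  have hex : ∃ d : ℕ, ∃ R : MvPolynomial κ ℂ, R.totalDegree = d ∧ aeval ψ R = 0 ∧ R ≠ 0 := by
    obtain ⟨R, h1, h2⟩ := h; exact ⟨_, R, rfl, h1, h2⟩
  obtain ⟨R, hd, h1, h2⟩ := Nat.find_spec hex
  refine ⟨R, h1, ?_⟩
  have h3 : R.totalDegree ≠ 0 := by
    intro h0
    rw [totalDegree_eq_zero_iff_eq_C] at h0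
    rw [h0] at h1 h2
    simp only [algHom_C, algebraMap_eq, map_eq_zero_iff C (C_injective _ _)] at h1
    rw [h1] at h2; simp at h2
  obtain ⟨k, hk⟩ := exists_pderiv_ne_zero h3
  refine ⟨k, fun h0 => ?_⟩
  have := Nat.find_min' hex ⟨pderiv k R, rfl, h0, hk⟩
  have h4 := totalDegree_pderiv_lt hk
  omega

/-- The differential of the polynomial map `φ` is injective at `t`. -/
def InjAt {ι M : Type*} [Fintype ι] (φ : M → MvPolynomial ι ℂ) (t : ι → ℂ) : Prop :=
  ∀ v : ι → ℂ, (∀ m, ∑ i, v i * eval t (pderiv i (φ m)) = 0) → v = 0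

/-- An injective differential has a nonvanishing maximal minor. -/
theorem exists_minor {ι M : Type*} [Fintype ι] [DecidableEq ι] (φ : M → MvPolynomial ι ℂ)
    (t : ι → ℂ) (h : InjAt φ t) :
    ∃ s : ι → M, (Matrix.of fun i j : ι => eval t (pderiv j (φ (s i)))).det ≠ 0 := by
  let r : M → (ι → ℂ) := fun m j => eval t (pderiv j (φ m))
  have hspan : Submodule.span ℂ (Set.range r) = ⊤ := by
    by_contra hne
    obtain ⟨f, hf, hf2⟩ := Submodule.exists_le_ker_of_lt_top _ (lt_top_iff_ne_top.2 hne)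
    have h1 : ∀ x, f x = ∑ i, f (Pi.single i 1) * x i := by
      intro x
      conv_lhs => rw [pi_eq_sum_univ' x]
      simp [map_sum, mul_comm]
    have h2 := h (fun i => f (Pi.single i 1)) fun m => by
      have : f (r m) = 0 := hf2 (Submodule.subset_span ⟨m, rfl⟩)
      rwa [h1] at this
    exact hf (LinearMap.ext fun x => by
      rw [h1]; simp [fun i => congrFun h2 i])
  obtain ⟨b, hb, hbs, hbi⟩ := exists_linearIndependent ℂ (Set.range r)
  rw [hspan] at hbs
  let B : Module.Basis b ℂ (ι → ℂ) := Module.Basis.mk hbi (by simp [hbs])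
  let e : ι ≃ b := (Pi.basisFun ℂ ι).indexEquiv B
  choose s hs using fun i => hb (e i).2
  refine ⟨s, ?_⟩
  have h3 : (Matrix.of fun i j : ι => eval t (pderiv j (φ (s i)))) = fun i => ((e i : b) : ι → ℂ) :=
    funext hs
  rw [h3]
  have h4 : LinearIndependent ℂ (fun i : ι => ((e i : b) : ι → ℂ)) := hbi.comp e e.injective
  have h5 := (Matrix.linearIndependent_rows_iff_isUnit (A := fun i => ((e i : b) : ι → ℂ))).1 h4
  exact ((Matrix.isUnit_iff_isUnit_det _).1 h5).ne_zero

/-- Polynomial version of a Jacobian minor. -/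
theorem eval_det_pderiv {ι : Type*} [Fintype ι] [DecidableEq ι] (ψ : ι → MvPolynomial ι ℂ)
    (t : ι → ℂ) : eval t (Matrix.of fun i j : ι => pderiv j (ψ i)).det =
      (Matrix.of fun i j : ι => eval t (pderiv j (ψ i))).det := by
  rw [RingHom.map_det]; rfl

/-- Jacobian criterion: differentiating a relation of minimal degree gives a linear dependence
between the rows of the Jacobian matrix. -/
theorem algebraicIndependent_of_det {ι : Type*} [Fintype ι] [DecidableEq ι]
    (ψ : ι → MvPolynomial ι ℂ) (h : (Matrix.of fun i j : ι => pderiv j (ψ i)).det ≠ 0) :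
    AlgebraicIndependent ℂ ψ := by
  by_contra hc
  obtain ⟨R, h1, k, hk⟩ := exists_relation ψ hc
  have := (Matrix.exists_vecMul_eq_zero_iff (M := Matrix.of fun i j => pderiv j (ψ i))).1
    ⟨fun k => aeval ψ (pderiv k R), fun h0 => hk (congrFun h0 k), ?_⟩
  · exact h this
  · funext j
    have := pderiv_aeval ψ R j
    rw [h1, map_zero] at this
    simp only [Matrix.vecMul, dotProduct, Matrix.of_apply, Pi.zero_apply]
    exact this.symm

/-- If the differential of `φ` is somewhere injective, then for generic `t` every point of the
fibre of `φ` through `t` avoids a given hypersurface. -/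
theorem generic_transfer {ι M : Type} [Fintype ι] (φ : M → MvPolynomial ι ℂ) (t₀ : ι → ℂ)
    (h : InjAt φ t₀) (G : MvPolynomial ι ℂ) (hG : G ≠ 0) :
    Generic fun t : ι → ℂ => ∀ b : ι → ℂ, (∀ m, eval b (φ m) = eval t (φ m)) → eval b G ≠ 0 := by
  classical
  obtain ⟨s, hs⟩ := exists_minor φ t₀ h
  set ψ : ι → MvPolynomial ι ℂ := fun i => φ (s i) with hψ
  have hdet : (Matrix.of fun i j : ι => pderiv j (ψ i)).det ≠ 0 := by
    intro h0; apply hs; rw [← eval_det_pderiv (fun i => φ (s i)), h0, map_zero]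
  have hind := algebraicIndependent_of_det ψ hdet
  have htr : IsTranscendenceBasis ℂ ψ := by
    refine hind.isTranscendenceBasis_of_lift_trdeg_le_of_finite ?_
    rw [MvPolynomial.trdeg_of_isDomain]; simp
  have halg := htr.isAlgebraic
  obtain ⟨⟨r, hrm⟩, hr0, H, hH⟩ :=
    (halg.isAlgebraic G).exists_nonzero_dvd (mem_nonZeroDivisors_of_ne_zero hG)
  have hrm' := hrm
  rw [Algebra.adjoin_range_eq_range_aeval] at hrm'
  obtain ⟨c, hc⟩ := hrm'
  refine ⟨r, fun h0 => hr0 (Subtype.ext h0), fun t ht b hb hGb => ht ?_⟩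
  have e1 : ∀ x : ι → ℂ, eval x r = eval (fun i => eval x (ψ i)) c := by
    intro x
    rw [← hc]
    exact eval_aeval ψ x c
  have h2 : eval b r = 0 := by
    have : r = G * H := hH
    rw [this, map_mul, hGb, zero_mul]
  rw [e1] at h2 ⊢
  rw [← h2]
  congr 2
  funext i
  exact (hb (s i)).symm

/-- Terracini: if the differential of `φ` is somewhere injective, then for generic `t` the image of
the differential of `φ` does not grow along the fibre of `φ` through `t`. -/
theorem generic_terracini {ι M : Type} [Fintype ι] [Fintype M] (φ : M → MvPolynomial ι ℂ)
    (t₀ : ι → ℂ) (h : InjAt φ t₀) :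
    Generic fun t : ι → ℂ => ∀ b : ι → ℂ, (∀ m, eval b (φ m) = eval t (φ m)) →
      ∀ ω : M → ℂ, (∀ i, ∑ m, ω m * eval t (pderiv i (φ m)) = 0) →
        ∀ i, ∑ m, ω m * eval b (pderiv i (φ m)) = 0 := by
  classical
  obtain ⟨s, hs⟩ := exists_minor φ t₀ h
  set ψ : ι → MvPolynomial ι ℂ := fun i => φ (s i) with hψ
  set Δ := (Matrix.of fun i j : ι => pderiv j (ψ i)).det with hΔ
  have hdet : Δ ≠ 0 := by
    intro h0; apply hs; rw [← eval_det_pderiv (fun i => φ (s i)), ← hΔ, h0, map_zero]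
  -- each coordinate satisfies a separable relation over the chosen ones
  have hrel : ∀ m, ∃ R : MvPolynomial (Option ι) ℂ,
      aeval (fun o => o.elim (φ m) ψ) R = 0 ∧
      aeval (fun o => o.elim (φ m) ψ) (pderiv none R) ≠ 0 := by
    intro m
    set χ : Option ι → MvPolynomial ι ℂ := fun o => o.elim (φ m) ψ with hχ
    have hdep : ¬ AlgebraicIndependent ℂ χ := by
      intro hi
      have := hi.lift_cardinalMk_le_trdeg
      rw [MvPolynomial.trdeg_of_isDomain] at this
      simp at this
    obtain ⟨R, h1, k, hk⟩ := exists_relation χ hdep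
    refine ⟨R, h1, fun h0 => ?_⟩
    have := (Matrix.exists_vecMul_eq_zero_iff (M := Matrix.of fun i j => pderiv j (ψ i))).1
      ⟨fun k => aeval χ (pderiv (some k) R), ?_, ?_⟩
    · exact hdet this
    · intro h2
      rcases k with _ | k
      · exact hk h0
      · exact hk (congrFun h2 k)
    · funext j
      have := pderiv_aeval χ R j
      rw [h1, map_zero, Fintype.sum_option, h0, zero_mul, zero_add] at this
      simp only [Matrix.vecMul, dotProduct, Matrix.of_apply, Pi.zero_apply]
      exact this.symm
  choose R hR1 hR2 using hrel
  refine ⟨Δ * ∏ m, aeval (fun o : Option ι => o.elim (φ m) ψ) (pderiv none (R m)),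
    mul_ne_zero hdet (Finset.prod_ne_zero_iff.2 fun m _ => hR2 m), ?_⟩
  intro t ht b hb ω hω
  rw [map_mul, map_prod] at ht
  have ht1 := left_ne_zero_of_mul ht
  have ht2 := fun m => Finset.prod_ne_zero_iff.1 (right_ne_zero_of_mul ht) m (mem_univ m)
  have ev : ∀ (x : ι → ℂ) (m : M) (P : MvPolynomial (Option ι) ℂ),
      eval x (aeval (fun o : Option ι => o.elim (φ m) ψ) P) =
        eval (fun o => eval x (o.elim (φ m) ψ)) P := fun x m P => eval_aeval _ x P
  have evb : ∀ (m : M) (P : MvPolynomial (Option ι) ℂ),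
      eval b (aeval (fun o : Option ι => o.elim (φ m) ψ) P) =
        eval t (aeval (fun o : Option ι => o.elim (φ m) ψ) P) := by
    intro m P
    rw [ev, ev]
    congr 2
    funext o
    rcases o with _ | i
    · exact hb m
    · exact hb (s i)
  -- express every differential through the chosen ones, with the same coefficients at `t` and `b`
  let c : M → ι → ℂ := fun m k =>
    - eval t (aeval (fun o : Option ι => o.elim (φ m) ψ) (pderiv (some k) (R m))) /
      eval t (aeval (fun o : Option ι => o.elim (φ m) ψ) (pderiv none (R m)))
  have hc : ∀ x : ι → ℂ, (x = t ∨ x = b) → ∀ m i,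
      eval x (pderiv i (φ m)) = ∑ k, c m k * eval x (pderiv i (ψ k)) := by
    intro x hx m i
    have hxt : ∀ P : MvPolynomial (Option ι) ℂ,
        eval x (aeval (fun o : Option ι => o.elim (φ m) ψ) P) =
        eval t (aeval (fun o : Option ι => o.elim (φ m) ψ) P) := by
      rcases hx with rfl | rfl
      · intro P; rfl
      · exact evb m
    have h1 := congrArg (eval x) (pderiv_aeval (fun o : Option ι => o.elim (φ m) ψ) (R m) i)
    rw [hR1, map_zero, map_zero, map_sum, Fintype.sum_option] at h1
    simp only [map_mul, hxt, Option.elim_none, Option.elim_some] at h1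
    have h2 := ht2 m
    simp only [c, div_mul_eq_mul_div, ← Finset.sum_div]
    rw [eq_div_iff h2]
    simp only [neg_mul, Finset.sum_neg_distrib]
    linear_combination -h1
  have hcomb : ∀ k, ∑ m, ω m * c m k = 0 := by
    by_contra hne
    push Not at hne
    obtain ⟨k, hk⟩ := hne
    refine ht1 ?_
    rw [hΔ, eval_det_pderiv]
    refine Matrix.exists_vecMul_eq_zero_iff.1 ⟨fun k => ∑ m, ω m * c m k,
      fun h0 => hk (congrFun h0 k), ?_⟩
    funext j
    simp only [Matrix.vecMul, dotProduct, Matrix.of_apply, Pi.zero_apply]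
    rw [← hω j]
    simp only [hc t (Or.inl rfl), Finset.mul_sum, Finset.sum_mul]
    rw [Finset.sum_comm]
    exact Finset.sum_congr rfl fun m _ => Finset.sum_congr rfl fun k _ => by ring
  intro i
  simp only [hc b (Or.inr rfl), Finset.mul_sum]
  rw [Finset.sum_comm]
  refine Finset.sum_eq_zero fun k _ => ?_
  calc _ = (∑ m, ω m * c m k) * eval b (pderiv i (ψ k)) := by
        rw [Finset.sum_mul]; exact Finset.sum_congr rfl fun m _ => by ring
    _ = 0 := by rw [hcomb, zero_mul]

end WaringTwo

/-! ### Generic solvability of polynomial systems -/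

namespace WaringTwo

open Finset

/-- A Zariski dense projection of a locally closed algebraic set contains a nonempty Zariski open
set (Chevalley and the Nullstellensatz). -/
theorem generic_of_dense {ι κ Λ : Type} [Fintype ι] [Fintype κ] [Fintype Λ]
    (p : Λ → MvPolynomial (ι ⊕ κ) ℂ) (g : MvPolynomial (ι ⊕ κ) ℂ)
    (hd : ∀ G : MvPolynomial ι ℂ, (∀ (t : ι → ℂ) (y : κ → ℂ),
      (∀ l, eval (Sum.elim t y) (p l) = 0) → eval (Sum.elim t y) g ≠ 0 → eval t G = 0) → G = 0) :
    Generic fun t : ι → ℂ => ∃ y : κ → ℂ, (∀ l, eval (Sum.elim t y) (p l) = 0) ∧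
      eval (Sum.elim t y) g ≠ 0 := by
  classical
  -- Rabinowitsch: the extra variable `X none` inverts `g`, so that `R ⧸ I` is the coordinate ring
  -- of the locally closed set
  let R := MvPolynomial (Option (ι ⊕ κ)) ℂ
  let q : Option Λ → R := fun o => o.elim (X none * rename some g - 1) fun l => rename some (p l)
  let I : Ideal R := Ideal.span (Set.range q)
  let f₀ : MvPolynomial ι ℂ →ₐ[ℂ] R := rename fun i => some (Sum.inl i)
  have hf₀ : ∀ (z : Option (ι ⊕ κ) → ℂ) (G : MvPolynomial ι ℂ),
      eval z (f₀ G) = eval (fun i => z (some (Sum.inl i))) G := fun z G => eval_rename _ _ G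
  let f : MvPolynomial ι ℂ →ₐ[ℂ] (R ⧸ I) := (Ideal.Quotient.mkₐ ℂ I).comp f₀
  have hI : ∀ z : Option (ι ⊕ κ) → ℂ, (∀ o, eval z (q o) = 0) → ∀ x ∈ I, eval z x = 0 := by
    intro z hz x hx
    have : I ≤ RingHom.ker (eval z) := by
      rw [Ideal.span_le]; rintro _ ⟨o, rfl⟩; exact hz o
    exact this hx
  have hinj : Function.Injective f := by
    rw [injective_iff_map_eq_zero]
    intro G hG
    have hG' : f₀ G ∈ I := Ideal.Quotient.eq_zero_iff_mem.1 hG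
    refine hd G fun t y h1 h2 => ?_
    have h3 := hI (fun o => o.elim (eval (Sum.elim t y) g)⁻¹ (Sum.elim t y)) ?_ _ hG'
    · rw [hf₀] at h3
      exact h3
    · rintro (_ | l)
      · simp only [q, Option.elim, map_sub, map_mul, eval_X, eval_rename, map_one]
        have : ((fun o : Option (ι ⊕ κ) => o.elim (eval (Sum.elim t y) g)⁻¹ (Sum.elim t y)) ∘ some)
          = Sum.elim t y := rfl
        erw [this]
        rw [inv_mul_cancel₀ h2, sub_self]
      · simp only [q, Option.elim, eval_rename]
        exact h1 l
  have hfp : f.toRingHom.FinitePresentation := by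
    refine RingHom.FinitePresentation.of_finiteType.1 ?_
    refine RingHom.FiniteType.of_comp_finiteType (f := algebraMap ℂ (MvPolynomial ι ℂ)) ?_
    have : f.toRingHom.comp (algebraMap ℂ (MvPolynomial ι ℂ)) = algebraMap ℂ (R ⧸ I) :=
      f.comp_algebraMap
    rw [this, RingHom.finiteType_algebraMap]
    infer_instance
  -- by Chevalley the image is constructible; it contains the generic point, as `f` is injective
  obtain ⟨S, hS⟩ := PrimeSpectrum.exists_constructibleSetData_iff.2
    (PrimeSpectrum.isConstructible_range_comap hfp)
  have hη : (⟨⊥, Ideal.isPrime_bot⟩ : PrimeSpectrum (MvPolynomial ι ℂ)) ∈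
      Set.range (PrimeSpectrum.comap f.toRingHom) := by
    obtain ⟨P, hP, hP2⟩ := Ideal.exists_comap_eq_of_mem_minimalPrimes_of_injective
      (f := f.toRingHom) hinj ⊥ (by rw [IsDomain.minimalPrimes_eq_singleton_bot]; rfl)
    exact ⟨⟨P, hP⟩, PrimeSpectrum.ext hP2⟩
  rw [← hS, PrimeSpectrum.ConstructibleSetData.toSet] at hη
  simp only [Set.mem_iUnion] at hη
  obtain ⟨C, hC, hη1, hη2⟩ := hη
  have hg0 : ∀ x ∈ Set.range C.g, x = 0 := fun x hx => hη1 hx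
  have hF : C.f ≠ 0 := fun h => hη2 (by simp [h])
  refine ⟨C.f, hF, fun t ht => ?_⟩
  let m : Ideal (MvPolynomial ι ℂ) := RingHom.ker (eval t)
  have hm : m.IsMaximal := RingHom.ker_isMaximal_of_surjective _
    fun c => ⟨MvPolynomial.C c, eval_C c⟩
  have hmem : (⟨m, hm.isPrime⟩ : PrimeSpectrum (MvPolynomial ι ℂ)) ∈
      Set.range (PrimeSpectrum.comap f.toRingHom) := by
    rw [← hS, PrimeSpectrum.ConstructibleSetData.toSet]
    simp only [Set.mem_iUnion]
    refine ⟨C, hC, ?_, ?_⟩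
    · intro x hx; rw [hg0 x hx]; exact m.zero_mem
    · intro h
      exact ht (h rfl)
  obtain ⟨⟨P, hP⟩, hPm⟩ := hmem
  have hPm' : P.comap f.toRingHom = m := congrArg PrimeSpectrum.asIdeal hPm
  obtain ⟨M, hM, hPM⟩ := P.exists_le_maximal hP.ne_top
  let M' : Ideal R := M.comap (Ideal.Quotient.mk I)
  have hM' : M'.IsMaximal := Ideal.comap_isMaximal_of_surjective _ Ideal.Quotient.mk_surjective
  obtain ⟨z, hz⟩ := MvPolynomial.eq_vanishingIdeal_singleton_of_isMaximal ℂ hM'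
  have hzM : ∀ x ∈ M', eval z x = 0 := by
    intro x hx
    rw [hz, MvPolynomial.mem_vanishingIdeal_singleton_iff] at hx
    rwa [aeval_eq_eval] at hx
  have hzI : ∀ x ∈ I, eval z x = 0 := fun x hx => hzM x (by
    change Ideal.Quotient.mk I x ∈ M
    rw [Ideal.Quotient.eq_zero_iff_mem.2 hx]; exact M.zero_mem)
  have hzt : ∀ i, z (some (Sum.inl i)) = t i := by
    intro i
    have h1 : (X i - MvPolynomial.C (t i)) ∈ m := by
      change eval t _ = 0
      simp
    rw [← hPm'] at h1
    have h2 : f₀ (X i - MvPolynomial.C (t i)) ∈ M' := hPM h1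
    have h3 := hzM _ h2
    rw [hf₀, map_sub, eval_X, eval_C] at h3
    exact sub_eq_zero.1 h3
  refine ⟨fun k => z (some (Sum.inr k)), ?_⟩
  have hze : (z ∘ some) = Sum.elim t fun k => z (some (Sum.inr k)) := by
    funext x; rcases x with i | k
    · exact hzt i
    · rfl
  rw [← hze]
  have hq : ∀ o, eval z (q o) = 0 := fun o => hzI _ (Ideal.subset_span ⟨o, rfl⟩)
  constructor
  · intro l
    have := hq (some l)
    simpa only [q, Option.elim, eval_rename] using this
  · intro h0
    have := hq none
    simp only [q, Option.elim, eval_rename, map_sub, map_mul, map_one, h0, mul_zero] at this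
    norm_num at this

end WaringTwo

/-! ### Polynomial functions -/

namespace WaringTwo

open Finset

/-- Polynomial functions on a complex vector space. -/
inductive PolyFun {E : Type*} [AddCommGroup E] [Module ℂ E] : (E → ℂ) → Prop
  | const (c : ℂ) : PolyFun fun _ => c
  | lin (f : E →ₗ[ℂ] ℂ) : PolyFun fun x => f x
  | add {f g : E → ℂ} : PolyFun f → PolyFun g → PolyFun fun x => f x + g x
  | mul {f g : E → ℂ} : PolyFun f → PolyFun g → PolyFun fun x => f x * g x

namespace PolyFun

section

variable {E : Type*} [AddCommGroup E] [Module ℂ E]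

theorem neg {f : E → ℂ} (hf : PolyFun f) : PolyFun fun x => - f x := by
  have := (PolyFun.const (E := E) (-1)).mul hf
  simpa using this

theorem sub {f g : E → ℂ} (hf : PolyFun f) (hg : PolyFun g) : PolyFun fun x => f x - g x := by
  simpa [sub_eq_add_neg] using hf.add hg.neg

theorem pow {f : E → ℂ} (hf : PolyFun f) (n : ℕ) : PolyFun fun x => f x ^ n := by
  induction n with
  | zero => simpa using PolyFun.const (E := E) 1
  | succ n ih => simpa [pow_succ] using ih.mul hf

theorem sum {ι : Type*} (s : Finset ι) {f : ι → E → ℂ} (hf : ∀ i ∈ s, PolyFun (f i)) :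
    PolyFun fun x => ∑ i ∈ s, f i x := by
  classical
  induction s using Finset.induction_on with
  | empty => simpa using PolyFun.const (E := E) 0
  | insert a s ha ih =>
    simp only [Finset.sum_insert ha]
    exact (hf a (by simp)).add (ih fun i hi => hf i (by simp [hi]))

theorem prod {ι : Type*} (s : Finset ι) {f : ι → E → ℂ} (hf : ∀ i ∈ s, PolyFun (f i)) :
    PolyFun fun x => ∏ i ∈ s, f i x := by
  classical
  induction s using Finset.induction_on with
  | empty => simpa using PolyFun.const (E := E) 1
  | insert a s ha ih =>
    simp only [Finset.prod_insert ha]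
    exact (hf a (by simp)).mul (ih fun i hi => hf i (by simp [hi]))

theorem det {ι : Type*} [Fintype ι] [DecidableEq ι] {M : E → Matrix ι ι ℂ}
    (hM : ∀ i j, PolyFun fun x => M x i j) : PolyFun fun x => (M x).det := by
  simp only [Matrix.det_apply']
  exact sum _ fun σ _ => (PolyFun.const _).mul (prod _ fun i _ => hM _ _)

theorem eval {ι : Type*} {x : E → ι → ℂ} (hx : ∀ i, PolyFun fun e => x e i)
    (P : MvPolynomial ι ℂ) : PolyFun fun e => eval (x e) P := by
  induction P using MvPolynomial.induction_on with
  | C a => simpa using PolyFun.const (E := E) a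
  | add p q hp hq => simpa using hp.add hq
  | mul_X p i hp => simpa using hp.mul (hx i)

theorem comp_linear {F : Type*} [AddCommGroup F] [Module ℂ F] {f : E → ℂ} (hf : PolyFun f)
    (L : F →ₗ[ℂ] E) : PolyFun fun y => f (L y) := by
  induction hf with
  | const c => exact PolyFun.const c
  | lin f => exact PolyFun.lin (f.comp L)
  | add _ _ h1 h2 => exact h1.add h2
  | mul _ _ h1 h2 => exact h1.mul h2

/-- In linear coordinates a polynomial function is given by a polynomial. -/
theorem exists_eval {V : Type*} [Fintype V] {f : (V → ℂ) → ℂ} (hf : PolyFun f) :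
    ∃ P : MvPolynomial V ℂ, ∀ v, f v = MvPolynomial.eval v P := by
  classical
  induction hf with
  | const c => exact ⟨MvPolynomial.C c, fun v => by simp⟩
  | lin f =>
    refine ⟨∑ i, MvPolynomial.C (f (Pi.single i 1)) * X i, fun v => ?_⟩
    conv_lhs => rw [pi_eq_sum_univ' v]
    simp [map_sum, mul_comm]
  | add _ _ h1 h2 =>
    obtain ⟨P, hP⟩ := h1; obtain ⟨Q, hQ⟩ := h2
    exact ⟨P + Q, fun v => by simp only [hP, hQ, map_add]⟩
  | mul _ _ h1 h2 =>
    obtain ⟨P, hP⟩ := h1; obtain ⟨Q, hQ⟩ := h2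
    exact ⟨P * Q, fun v => by simp only [hP, hQ, map_mul]⟩

end

theorem contDiff {E : Type*} [NormedAddCommGroup E] [NormedSpace ℂ E] [FiniteDimensional ℂ E]
    {f : E → ℂ} (hf : PolyFun f) : ContDiff ℂ 1 f := by
  induction hf with
  | const c => exact contDiff_const
  | lin f => exact (LinearMap.toContinuousLinearMap f).contDiff
  | add _ _ h1 h2 => exact h1.add h2
  | mul _ _ h1 h2 => exact h1.mul h2

end PolyFun

open Topology Filter

/-- A polynomial vanishing near a point is zero. -/
theorem eq_zero_of_eventually {ι : Type*} [Fintype ι] {G : MvPolynomial ι ℂ} {x : ι → ℂ}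
    (h : ∀ᶠ t in 𝓝 x, eval t G = 0) : G = 0 := by
  rw [Metric.eventually_nhds_iff] at h
  obtain ⟨ε, hε, h⟩ := h
  refine funext_set (fun i => Metric.ball (x i) (ε / 2)) (fun i => ?_) fun t ht => ?_
  · exact (infinite_of_mem_nhds (x i) (Metric.ball_mem_nhds _ (by positivity)))
  · rw [map_zero]
    refine h ?_
    rw [dist_pi_lt_iff hε]
    intro i
    have := ht i (Set.mem_univ i)
    rw [Metric.mem_ball] at this
    linarith

/-- A polynomial map whose differential at `e` is surjective is open at `e`. -/
theorem map_nhds_of_polyFun {E Λ : Type*} [NormedAddCommGroup E] [NormedSpace ℂ E]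
    [FiniteDimensional ℂ E] [Fintype Λ] (f : E → Λ → ℂ) (hf : ∀ l, PolyFun fun e => f e l) (e : E)
    (hs : ∀ ρ : Λ → ℂ, ∃ v : E, ∀ l, HasDerivAt (fun ε : ℂ => f (e + ε • v) l) (ρ l) 0) :
    map f (𝓝 e) = 𝓝 (f e) := by
  have : CompleteSpace E := FiniteDimensional.complete ℂ E
  have hc : ContDiff ℂ 1 f := contDiff_pi.2 fun l => (hf l).contDiff
  have hd := hc.contDiffAt (x := e) |>.hasStrictFDerivAt one_ne_zero
  refine hd.map_nhds_eq_of_surj ?_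
  rw [LinearMap.range_eq_top]
  intro ρ
  obtain ⟨v, hv⟩ := hs ρ
  refine ⟨v, funext fun l => ?_⟩
  have h1 := hasFDerivAt_pi'.1 hd.hasFDerivAt l
  have h2 := h1.hasLineDerivAt v
  exact HasDerivAt.unique h2 (hv l)

/-- If a polynomial system in `(t, y)` has a solution at which the derivative in the `y`-direction
is surjective, then for generic `t` it has a solution `y`, and a given nonvanishing condition may
be imposed as well. -/
theorem generic_exists {ι Λ Y : Type} [Fintype ι] [Fintype Λ] [NormedAddCommGroup Y]
    [NormedSpace ℂ Y] [FiniteDimensional ℂ Y] (f : Λ → (ι → ℂ) × Y → ℂ)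
    (hf : ∀ l, PolyFun (f l)) (g : (ι → ℂ) × Y → ℂ) (hg : PolyFun g) (x : ι → ℂ) (y : Y)
    (h0 : ∀ l, f l (x, y) = 0) (hg0 : g (x, y) ≠ 0)
    (hs : ∀ ρ : Λ → ℂ, ∃ v : Y, ∀ l, HasDerivAt (fun ε : ℂ => f l (x, y + ε • v)) (ρ l) 0) :
    Generic fun t : ι → ℂ => ∃ y : Y, (∀ l, f l (t, y) = 0) ∧ g (t, y) ≠ 0 := by
  classical
  -- near `x` solutions exist, by the open mapping property of `(t, y) ↦ (t, f (t, y))`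
  have hev : ∀ᶠ t in 𝓝 x, ∃ y : Y, (∀ l, f l (t, y) = 0) ∧ g (t, y) ≠ 0 := by
    let Φ : (ι → ℂ) × Y → (ι ⊕ Λ) → ℂ := fun e o => o.elim (fun i => e.1 i) fun l => f l e
    have hΦ : map Φ (𝓝 (x, y)) = 𝓝 (Φ (x, y)) := by
      refine map_nhds_of_polyFun Φ ?_ _ ?_
      · rintro (i | l)
        · exact PolyFun.lin ((LinearMap.proj i).comp (LinearMap.fst ℂ (ι → ℂ) Y))
        · exact hf l
      · intro ρ
        have hD : ∀ l, HasFDerivAt (f l) (fderiv ℂ (f l) (x, y)) (x, y) := fun l =>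
          ((hf l).contDiff.differentiable one_ne_zero _).hasFDerivAt
        let u : ι → ℂ := fun i => ρ (Sum.inl i)
        obtain ⟨v, hv⟩ := hs fun l => ρ (Sum.inr l) - fderiv ℂ (f l) (x, y) (u, 0)
        refine ⟨(u, v), ?_⟩
        rintro (i | l)
        · have h1 : (fun ε : ℂ => Φ ((x, y) + ε • (u, v)) (Sum.inl i)) = fun ε => x i + ε * u i := by
            funext ε; simp [Φ]
          rw [h1]
          simpa [u] using ((hasDerivAt_id (0 : ℂ)).mul_const (u i)).const_add (x i)
        · have h1 : HasDerivAt (fun ε : ℂ => f l ((x, y) + ε • (u, v)))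
              (fderiv ℂ (f l) (x, y) (u, v)) 0 := (hD l).hasLineDerivAt (u, v)
          have h2 : HasDerivAt (fun ε : ℂ => f l ((x, y) + ε • ((0 : ι → ℂ), v)))
              (fderiv ℂ (f l) (x, y) (0, v)) 0 := (hD l).hasLineDerivAt (0, v)
          have h3 : (fun ε : ℂ => f l ((x, y) + ε • ((0 : ι → ℂ), v))) =
              fun ε => f l (x, y + ε • v) := by
            funext ε; simp
          rw [h3] at h2
          have h4 := HasDerivAt.unique h2 (hv l)
          have h5 : fderiv ℂ (f l) (x, y) (u, v) = ρ (Sum.inr l) := by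
            have : ((u, v) : (ι → ℂ) × Y) = (u, 0) + (0, v) := by simp
            rw [this, map_add, h4]; ring
          rw [h5] at h1
          exact h1
    have hU : {e : (ι → ℂ) × Y | g e ≠ 0} ∈ 𝓝 (x, y) :=
      (hg.contDiff.continuous.isOpen_preimage _ isOpen_ne).mem_nhds hg0
    have h2 : Φ '' {e | g e ≠ 0} ∈ 𝓝 (Φ (x, y)) := hΦ ▸ image_mem_map hU
    have h3 : Continuous fun t : ι → ℂ => (fun o => o.elim (fun i => t i) fun _ => 0 : ι ⊕ Λ → ℂ) := by
      refine continuous_pi ?_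
      rintro (i | l)
      · exact continuous_apply i
      · exact continuous_const
    have h4 : (fun o => o.elim (fun i => x i) fun _ => 0 : ι ⊕ Λ → ℂ) = Φ (x, y) := by
      funext o
      rcases o with i | l
      · rfl
      · exact (h0 l).symm
    have h5 := h3.continuousAt (x := x)
    rw [ContinuousAt, h4] at h5
    filter_upwards [h5 h2] with t ht
    obtain ⟨⟨t', y'⟩, h6, h7⟩ := ht
    have h8 : t' = t := funext fun i => congrFun h7 (Sum.inl i)
    subst h8
    exact ⟨y', fun l => congrFun h7 (Sum.inr l), h6⟩
  -- pass to linear coordinates on `Y`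
  let n := Module.finrank ℂ Y
  let L : (Fin n → ℂ) ≃ₗ[ℂ] Y := (Module.finBasis ℂ Y).equivFun.symm
  let T : ((ι ⊕ Fin n) → ℂ) →ₗ[ℂ] (ι → ℂ) × Y :=
    LinearMap.prod (LinearMap.funLeft ℂ ℂ Sum.inl) (L.toLinearMap.comp (LinearMap.funLeft ℂ ℂ Sum.inr))
  have hT : ∀ t z, T (Sum.elim t z) = (t, L z) := fun t z => rfl
  choose p hp using fun l => ((hf l).comp_linear T).exists_eval
  obtain ⟨q, hq⟩ := (hg.comp_linear T).exists_eval
  have := generic_of_dense p q ?_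
  · obtain ⟨F, hF, hF2⟩ := this
    refine ⟨F, hF, fun t ht => ?_⟩
    obtain ⟨z, h1, h2⟩ := hF2 t ht
    refine ⟨L z, fun l => ?_, ?_⟩
    · rw [← hT, hp, h1]
    · rw [← hT, hq]; exact h2
  · intro G hG
    refine eq_zero_of_eventually (x := x) ?_
    filter_upwards [hev] with t ht
    obtain ⟨y', h1, h2⟩ := ht
    refine hG t (L.symm y') (fun l => ?_) ?_
    · rw [← hp, hT, L.apply_symm_apply, h1]
    · rw [← hq, hT, L.apply_symm_apply]; exact h2

end WaringTwo

/-! ### Jacobians along a curve -/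

namespace WaringTwo

open Finset

/-- The Jacobian of `s, q₁, …, q_k`; up to scaling, the derivative of `s` along the curve
`q = 0`. -/
noncomputable def J {k : ℕ} (q : Fin k → MvPolynomial (Fin (k + 2)) ℂ)
    (s : MvPolynomial (Fin (k + 2)) ℂ) (x : Fin (k + 2) → ℂ) : ℂ :=
  Jac (Fin.cons s q : Fin (k + 1) → MvPolynomial (Fin (k + 1 + 1)) ℂ) x

/-- The cofactors expressing `J q s x` through the derivatives of `s`. -/
noncomputable def cof {k : ℕ} (q : Fin k → MvPolynomial (Fin (k + 2)) ℂ) (x : Fin (k + 2) → ℂ)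
    (j : Fin (k + 1)) : ℂ :=
  (-1) ^ (j : ℕ) * Matrix.det (Matrix.of fun (i l : Fin k) =>
    eval x (pderiv (j.succAbove l).succ (q i)))

section Jacobian

variable {k : ℕ} (q : Fin k → MvPolynomial (Fin (k + 2)) ℂ) (x : Fin (k + 2) → ℂ)

theorem J_eq (s : MvPolynomial (Fin (k + 2)) ℂ) :
    J q s x = ∑ j : Fin (k + 1), cof q x j * eval x (pderiv j.succ s) := by
  rw [J, Jac, Matrix.det_succ_row_zero]
  refine Finset.sum_congr rfl fun j _ => ?_
  simp only [cof, Matrix.of_apply, Fin.cons_zero]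
  have : (Matrix.of fun i j : Fin (k + 1) => eval x (pderiv j.succ
      ((Fin.cons s q : Fin (k + 1) → MvPolynomial (Fin (k + 1 + 1)) ℂ) i))).submatrix
        Fin.succ j.succAbove = Matrix.of fun (i l : Fin k) =>
    eval x (pderiv (j.succAbove l).succ (q i)) := by
    ext i l; simp
  rw [this]; ring

theorem J_add (s s' : MvPolynomial (Fin (k + 2)) ℂ) : J q (s + s') x = J q s x + J q s' x := by
  simp only [J_eq, map_add, mul_add, Finset.sum_add_distrib]

theorem J_mul (s s' : MvPolynomial (Fin (k + 2)) ℂ) :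
    J q (s * s') x = eval x s * J q s' x + eval x s' * J q s x := by
  simp only [J_eq, pderiv_mul, map_add, map_mul, mul_add, Finset.sum_add_distrib, Finset.mul_sum]
  rw [add_comm]
  congr 1 <;> exact Finset.sum_congr rfl fun j _ => by ring

theorem J_C (c : ℂ) : J q (C c) x = 0 := by simp [J_eq]

theorem J_zero : J q 0 x = 0 := by simp [J_eq]

theorem J_C_mul (c : ℂ) (s : MvPolynomial (Fin (k + 2)) ℂ) : J q (C c * s) x = c * J q s x := by
  rw [J_mul, J_C, eval_C]; ring

theorem J_sum {ι : Type*} (S : Finset ι) (s : ι → MvPolynomial (Fin (k + 2)) ℂ) :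
    J q (∑ i ∈ S, s i) x = ∑ i ∈ S, J q (s i) x := by
  simp only [J_eq, map_sum, Finset.mul_sum]
  rw [Finset.sum_comm]

theorem J_self (i : Fin k) : J q (q i) x = 0 := by
  rw [J, Jac]
  refine Matrix.det_zero_of_row_eq (i := 0) (j := i.succ) (Fin.succ_ne_zero i).symm ?_
  funext j
  simp

theorem J_smul {ε δ : ℕ} (hq : ∀ i, (q i).IsHomogeneous (ε + 1)) {s : MvPolynomial (Fin (k + 2)) ℂ}
    (hs : s.IsHomogeneous (δ + 1)) (t : ℂ) : J q s (t • x) = t ^ (δ + k * ε) * J q s x := by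
  have h1 : ∀ y, J q s y = eval y (Matrix.det (Matrix.of fun i j : Fin (k + 1) =>
      pderiv j.succ ((Fin.cons s q : Fin (k + 1) → MvPolynomial (Fin (k + 1 + 1)) ℂ) i))) := by
    intro y
    rw [RingHom.map_det]; rfl
  have h2 := isHomogeneous_det (Matrix.of fun i j : Fin (k + 1) =>
      pderiv j.succ ((Fin.cons s q : Fin (k + 1) → MvPolynomial (Fin (k + 1 + 1)) ℂ) i))
      (Fin.cons δ fun _ => ε) (by
        intro i j
        refine Fin.cases ?_ (fun i => ?_) i
        · simpa using hs.pderiv (i := j.succ)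
        · simpa using (hq i).pderiv (i := j.succ))
  rw [h1, h1, eval_smul_of_homogeneous h2]
  congr 2
  simp [Fin.sum_univ_succ]

end Jacobian

/-- Euler–Jacobi for points with nonzero first coordinate and arbitrary weights: two points that
are proportional to none of the others have weights inversely proportional to the Jacobian. -/
theorem euler_jacobi' {k e : ℕ} (hke : k * e = 2) (q : Fin k → MvPolynomial (Fin (k + 2)) ℂ)
    (hq : ∀ i, (q i).IsHomogeneous (e + 1)) {s : MvPolynomial (Fin (k + 2)) ℂ}
    (hs : s.IsHomogeneous (2 * e + 2)) {L : Type*} [Fintype L] (P : L → Fin (k + 2) → ℂ)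
    (σ : L → ℂ) (hP : ∀ l, P l 0 ≠ 0) (hzs : ∀ l, eval (P l) s = 0)
    (hzq : ∀ i l, eval (P l) (q i) = 0)
    (hc : ∀ g : MvPolynomial (Fin (k + 2)) ℂ, g.IsHomogeneous (2 * e + 2) →
      ∑ l, σ l * eval (P l) g = 0) (l l' : L)
    (hl : ∀ m, m ≠ l → ∀ z : ℂ, P m ≠ z • P l)
    (hl' : (∀ m, m ≠ l' → ∀ z : ℂ, P m ≠ z • P l') ∨ J q s (P l') = 0) :
    σ l * J q s (P l) * P l' 0 = σ l' * J q s (P l') * P l 0 := by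
  classical
  let p : L → Fin (k + 1 + 1) → ℂ := fun l => (P l 0)⁻¹ • P l
  have hiso : ∀ l, (∀ m, m ≠ l → ∀ z : ℂ, P m ≠ z • P l) →
      (∑ m with p m = p l, σ m * P m 0 ^ (2 * e + 2)) = σ l * P l 0 ^ (2 * e + 2) := by
    intro l hl
    have : (univ.filter fun m => p m = p l) = {l} := by
      ext m
      simp only [mem_filter, mem_univ, true_and, mem_singleton]
      constructor
      · intro h
        by_contra hne
        refine hl m hne (P m 0 * (P l 0)⁻¹) ?_
        calc P m = P m 0 • p m := (smul_inv_smul₀ (hP m) _).symm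
          _ = _ := by rw [h, smul_smul]
      · rintro rfl; rfl
    rw [this, sum_singleton]
  have hJp : ∀ l, Jac (Fin.cons s q : Fin (k + 1) → MvPolynomial (Fin (k + 1 + 1)) ℂ) (p l) =
      (P l 0)⁻¹ ^ (2 * e + 2 + 1) * J q s (P l) := by
    intro l
    have := J_smul q (P l) hq (δ := 2 * e + 1) hs (P l 0)⁻¹
    rw [hke] at this
    exact this
  have key := euler_jacobi (D := 2 * e + 2)
    (Fin.cons s q : Fin (k + 1) → MvPolynomial (Fin (k + 1 + 1)) ℂ)
    (Fin.cons (2 * e + 1) fun _ => e) ?_ ?_ p (fun l => σ l * P l 0 ^ (2 * e + 2)) ?_ ?_ ?_ l l'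
  · rw [hJp, hJp, hiso l hl] at key
    have a1 := hP l
    have a2 := hP l'
    by_cases h0 : J q s (P l') = 0
    · rw [h0, mul_zero, mul_zero] at key
      have : σ l * J q s (P l) = 0 := by
        have h3 : σ l * P l 0 ^ (2 * e + 2) * ((P l 0)⁻¹ ^ (2 * e + 2 + 1) * J q s (P l)) =
          σ l * J q s (P l) * (P l 0)⁻¹ := by
          rw [pow_succ (P l 0)⁻¹, inv_pow]; field_simp
        rw [h3] at key
        rcases mul_eq_zero.1 key with h | h
        · exact h
        · exact absurd h (inv_ne_zero a1)
      rw [this, h0]; ring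
    · rw [hiso l' (hl'.resolve_right h0)] at key
      have h3 : ∀ l, P l 0 ≠ 0 →
          σ l * P l 0 ^ (2 * e + 2) * ((P l 0)⁻¹ ^ (2 * e + 2 + 1) * J q s (P l)) =
          σ l * J q s (P l) * (P l 0)⁻¹ := by
        intro l hl
        rw [pow_succ (P l 0)⁻¹, inv_pow]; field_simp
      rw [h3 l a1, h3 l' a2] at key
      field_simp at key
      linear_combination key
  · intro i
    refine Fin.cases ?_ (fun i => ?_) i
    · simpa using hs
    · simpa using hq i
  · simp [Fin.sum_univ_succ, hke]
  · intro l; simp [p, hP l]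
  · intro i l
    refine Fin.cases ?_ (fun i => ?_) i
    · simp only [p, Fin.cons_zero]
      rw [eval_smul_of_homogeneous hs, hzs, mul_zero]
    · simp only [p, Fin.cons_succ]
      rw [eval_smul_of_homogeneous (hq i), hzq, mul_zero]
  · intro g hg
    rw [← hc g hg]
    refine Finset.sum_congr rfl fun l _ => ?_
    simp only [p]
    rw [eval_smul_of_homogeneous hg, inv_pow]
    have := hP l
    field_simp

/-- A linear map to `ι → ℂ` that is not surjective satisfies a nontrivial linear relation. -/
theorem exists_relation_of_not_surjective {V ι : Type*} [AddCommGroup V] [Module ℂ V] [Fintype ι]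
    (T : V →ₗ[ℂ] (ι → ℂ)) (h : ¬ Function.Surjective T) :
    ∃ c : ι → ℂ, c ≠ 0 ∧ ∀ v, ∑ i, c i * T v i = 0 := by
  classical
  rw [← LinearMap.range_eq_top] at h
  obtain ⟨f, hf, hf2⟩ := Submodule.exists_le_ker_of_lt_top _ (lt_top_iff_ne_top.2 h)
  have h1 : ∀ x, f x = ∑ i, f (Pi.single i 1) * x i := by
    intro x
    conv_lhs => rw [pi_eq_sum_univ' x]
    simp [map_sum, mul_comm]
  refine ⟨fun i => f (Pi.single i 1), fun h0 => hf (LinearMap.ext fun x => ?_), fun v => ?_⟩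
  · rw [h1]; simp [fun i => congrFun h0 i]
  · rw [← h1]; exact hf2 ⟨v, rfl⟩

end WaringTwo

/-! ### Certificates of general position -/

namespace WaringTwo

open Finset

/-- Evaluation of forms at `x`, on coefficient families. -/
noncomputable def evL {n d : ℕ} (x : Fin n → ℂ) : (Mon n d → ℂ) →ₗ[ℂ] ℂ where
  toFun c := eval x (fm c)
  map_add' c c' := by rw [fm_add, map_add]
  map_smul' t c := by rw [fm_smul, map_mul, eval_C]; rfl

/-- `s ↦ J q s x`, on coefficient families. -/
noncomputable def JL {k d : ℕ} (q : Fin k → MvPolynomial (Fin (k + 2)) ℂ) (x : Fin (k + 2) → ℂ) :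
    (Mon (k + 2) d → ℂ) →ₗ[ℂ] ℂ where
  toFun c := J q (fm c) x
  map_add' c c' := by rw [fm_add, J_add]
  map_smul' t c := by rw [fm_smul, J_C_mul]; rfl

/-- Evaluation of forms at a family of points, on coefficient families. -/
noncomputable def evPts {n d : ℕ} {L : Type*} (P : L → Fin n → ℂ) : (Mon n d → ℂ) →ₗ[ℂ] (L → ℂ) :=
  LinearMap.pi fun l => evL (P l)

theorem evPts_apply {n d : ℕ} {L : Type*} (P : L → Fin n → ℂ) (v : Mon n d → ℂ) (l : L) :
    evPts P v l = eval (P l) (fm v) := rfl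

/-- If `S` is onto and `T` is not, with the same finite target, then `ker T` is too large to lie in
`ker S`. -/
theorem exists_ker_of_not_surjective {V ι : Type*} [AddCommGroup V] [Module ℂ V]
    [FiniteDimensional ℂ V] [Fintype ι] {S T : V →ₗ[ℂ] (ι → ℂ)} (hS : Function.Surjective S)
    (hT : ¬ Function.Surjective T) : ∃ v, T v = 0 ∧ S v ≠ 0 := by
  by_contra hc
  push Not at hc
  have h1 : LinearMap.ker T ≤ LinearMap.ker S := hc
  have h2 := Submodule.finrank_mono h1
  have h3 := T.finrank_range_add_finrank_ker
  have h4 := S.finrank_range_add_finrank_ker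
  rw [LinearMap.range_eq_top.2 hS, finrank_top] at h4
  have h5 : Module.finrank ℂ (LinearMap.range T) < Module.finrank ℂ (ι → ℂ) :=
    Submodule.finrank_lt fun h => hT (LinearMap.range_eq_top.1 h)
  omega

/-- If `ker S` lies properly in `ker T`, then `T` is not onto, as its rank is less than that of
`S`. -/
theorem not_surjective_of_ker {V ι : Type*} [AddCommGroup V] [Module ℂ V]
    [FiniteDimensional ℂ V] [Fintype ι] {S T : V →ₗ[ℂ] (ι → ℂ)}
    (hST : ∀ v, S v = 0 → T v = 0) (h : ∃ v, T v = 0 ∧ S v ≠ 0) : ¬ Function.Surjective T := by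
  intro hT
  obtain ⟨v, h1, h2⟩ := h
  have h3 : LinearMap.ker S < LinearMap.ker T :=
    lt_of_le_of_ne hST fun he => h2 (by
      have : v ∈ LinearMap.ker T := h1
      rwa [← he] at this)
  have h4 := Submodule.finrank_lt_finrank_of_lt h3
  have h5 := T.finrank_range_add_finrank_ker
  have h6 := S.finrank_range_add_finrank_ker
  rw [LinearMap.range_eq_top.2 hT, finrank_top] at h5
  have h7 := Submodule.finrank_le (LinearMap.range S)
  omega

/-- Certificates of general position for `r` points `a`: forms `q` of degree `e + 1` cutting out a
curve through the points, dual forms `h` in degree `e + 1`, and forms `w` of degree `2e + 2`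
vanishing at the points with prescribed first-order behaviour along the curve, such that
`s = ∑ (a i)₀ w i` meets the curve in `r` further reduced points `b`. The dual form `h i` is
required to meet the curve transversally at the points `a j`, `j ≠ i`. All points lie in the chart
`x₀ ≠ 0`, and the points `b` have distinct second affine coordinates, different from those
of `a`. -/
structure GoodData (k e r : ℕ) (a : Fin r → Fin (k + 2) → ℂ) where
  q : Fin k → MvPolynomial (Fin (k + 2)) ℂ
  h : Fin r → MvPolynomial (Fin (k + 2)) ℂ
  w : Fin r → MvPolynomial (Fin (k + 2)) ℂ
  b : Fin r → Fin (k + 2) → ℂ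
  q_hom : ∀ i, (q i).IsHomogeneous (e + 1)
  h_hom : ∀ i, (h i).IsHomogeneous (e + 1)
  w_hom : ∀ i, (w i).IsHomogeneous (2 * e + 2)
  b_zero : ∀ j, b j 0 = 1
  q_a : ∀ i j, eval (a j) (q i) = 0
  h_a : ∀ i j, eval (a j) (h i) = if i = j then 1 else 0
  w_a : ∀ i j, eval (a j) (w i) = 0
  J_w : ∀ i j, J q (w i) (a j) = if i = j then 1 else 0
  q_b : ∀ i j, eval (b j) (q i) = 0
  s_b : ∀ j, eval (b j) (∑ i, C (a i 0) * w i) = 0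
  a_zero : ∀ i, a i 0 ≠ 0
  J_h : ∀ i j, i ≠ j → J q (h i) (a j) ≠ 0
  J_b : ∀ j, J q (∑ i, C (a i 0) * w i) (b j) ≠ 0
  b_ne : ∀ i j, i ≠ j → b i 1 ≠ b j 1
  b_ne_a : ∀ i j, b j 1 * a i 0 ≠ a i 1

namespace GoodData

variable {k e r : ℕ} {a : Fin r → Fin (k + 2) → ℂ} (D : GoodData k e r a)

/-- The form `s = ∑ (a i)₀ w i`. -/
noncomputable def s : MvPolynomial (Fin (k + 2)) ℂ := ∑ i, C (a i 0) * D.w i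

theorem s_hom : D.s.IsHomogeneous (2 * e + 2) :=
  IsHomogeneous.sum _ _ _ fun i _ => by
    simpa using (isHomogeneous_C _ (a i 0)).mul (D.w_hom i)

theorem s_a (j : Fin r) : eval (a j) D.s = 0 := by simp [s, D.w_a]

theorem J_s (j : Fin r) : J D.q D.s (a j) = a j 0 := by
  simp [s, J_sum, J_C_mul, D.J_w]

include D in
theorem a_ne {i j : Fin r} (hij : i ≠ j) (z : ℂ) : a i ≠ z • a j := by
  intro h
  have h1 := D.h_a i i
  rw [h, eval_smul_of_homogeneous (D.h_hom i), D.h_a, if_neg hij] at h1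
  simp at h1

theorem b_ne' {i j : Fin r} (hij : i ≠ j) (z : ℂ) : D.b i ≠ z • D.b j := by
  intro h
  have h0 := congrFun h 0
  have h1 := congrFun h 1
  simp only [Pi.smul_apply, D.b_zero, smul_eq_mul, mul_one] at h0 h1
  rw [← h0, one_mul] at h1
  exact D.b_ne i j hij h1

theorem a_ne_b (i j : Fin r) (z : ℂ) : a i ≠ z • D.b j := by
  intro h
  have h0 := congrFun h 0
  have h1 := congrFun h 1
  simp only [Pi.smul_apply, D.b_zero, smul_eq_mul, mul_one] at h0 h1
  exact D.b_ne_a i j (by rw [h0, h1]; ring)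

theorem b_ne_a' (i j : Fin r) (z : ℂ) : D.b j ≠ z • a i := by
  intro h
  have h0 := congrFun h 0
  have h1 := congrFun h 1
  simp only [Pi.smul_apply, D.b_zero, smul_eq_mul] at h0 h1
  exact D.b_ne_a i j (by rw [h1]; linear_combination -(a i 1) * h0)

/-- Values at the points and first derivatives along the curve. -/
noncomputable def TZ : (Mon (k + 2) (2 * e + 2) → ℂ) →ₗ[ℂ] (Fin r ⊕ Fin r → ℂ) :=
  LinearMap.pi fun o => Sum.elim (fun i => evL (a i)) (fun i => JL D.q (a i)) o

theorem TZ_inl (v) (i : Fin r) : D.TZ v (Sum.inl i) = eval (a i) (fm v) := rfl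

theorem TZ_inr (v) (i : Fin r) : D.TZ v (Sum.inr i) = J D.q (fm v) (a i) := rfl

/-- The squares of the forms `h i` realize all values, and the `w i` correct the derivatives. -/
theorem TZ_surjective : Function.Surjective D.TZ := by
  intro ρ
  let u : Fin r → ℂ := fun i => ρ (Sum.inl i)
  let s1 : MvPolynomial (Fin (k + 2)) ℂ := ∑ i, C (u i) * (D.h i * D.h i)
  have hs1 : s1.IsHomogeneous (2 * e + 2) := IsHomogeneous.sum _ _ _ fun i _ => by
    have := (isHomogeneous_C (Fin (k + 2)) (u i)).mul ((D.h_hom i).mul (D.h_hom i))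
    convert this using 1; ring
  let s2 : MvPolynomial (Fin (k + 2)) ℂ := s1 + ∑ i, C (ρ (Sum.inr i) - J D.q s1 (a i)) * D.w i
  have hs2 : s2.IsHomogeneous (2 * e + 2) := hs1.add (IsHomogeneous.sum _ _ _ fun i _ => by
    simpa using (isHomogeneous_C _ (ρ (Sum.inr i) - J D.q s1 (a i))).mul (D.w_hom i))
  obtain ⟨c, hc⟩ := exists_fm hs2
  refine ⟨c, ?_⟩
  funext o
  rcases o with i | i
  · rw [TZ_inl, hc]
    simp [s2, s1, D.w_a, D.h_a, u]
  · rw [TZ_inr, hc]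
    simp only [s2, J_add, J_sum, J_C_mul, D.J_w]
    simp

end GoodData

/-- Two decompositions agree, as multisets of `d`-th powers. -/
def Eqv {n r : ℕ} (d : ℕ) (a b : Fin r → Fin (n + 1) → ℂ) : Prop :=
  (univ.val.map fun i => linForm (a i) ^ d) = univ.val.map fun i => linForm (b i) ^ d

/-- A form of degree `2e + 2` vanishing doubly along the curve `q` at the points `a` vanishes on
the curve. -/
def Saturated {k e r : ℕ} {a : Fin r → Fin (k + 2) → ℂ} (D : GoodData k e r a) : Prop :=
  ∀ s : MvPolynomial (Fin (k + 2)) ℂ, s.IsHomogeneous (2 * e + 2) → (∀ i, eval (a i) s = 0) →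
    (∀ i, J D.q s (a i) = 0) → ∀ x, (∀ i, eval x (D.q i) = 0) → eval x s = 0

section Two

variable {k e r : ℕ} {a b c : Fin r → Fin (k + 2) → ℂ}

/-- Forms of degree `2e + 2` have equal sums over the two point sets. -/
def SameSum (k e : ℕ) {r : ℕ} (a b : Fin r → Fin (k + 2) → ℂ) : Prop :=
  ∀ g : MvPolynomial (Fin (k + 2)) ℂ, g.IsHomogeneous (2 * e + 2) →
    ∑ i, eval (a i) g = ∑ j, eval (b j) g

/-- Testing with `Da.q i * Db.h j` shows that the forms `q` of one decomposition vanish on the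
other. -/
theorem q_vanishes (Da : GoodData k e r a) (Db : GoodData k e r b) (hab : SameSum k e a b)
    (i : Fin k) (j : Fin r) : eval (b j) (Da.q i) = 0 := by
  have := hab (Da.q i * Db.h j) (by
    convert (Da.q_hom i).mul (Db.h_hom j) using 1; ring)
  simp [Da.q_a, Db.h_a] at this
  exact this.symm

/-- If two decompositions share one point up to scaling, they agree. -/
theorem eqv_of_proportional (hke : k * e = 2) (hr : 3 ≤ r) (Da : GoodData k e r a)
    (Db : GoodData k e r b) (hab : SameSum k e a b) {i₀ j₀ : Fin r} {z : ℂ}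
    (hz : b j₀ = z • a i₀) : Eqv (2 * e + 2) a b := by
  classical
  have hz0 : z ≠ 0 := by
    rintro rfl
    exact Db.a_zero j₀ (by rw [hz]; simp)
  -- test forms: products of the dual forms of the two decompositions
  have htest : ∀ i j, eval (b j) (Da.h i) = eval (a i) (Db.h j) := by
    intro i j
    have := hab (Da.h i * Db.h j) (by
      convert (Da.h_hom i).mul (Db.h_hom j) using 1; ring)
    simpa [Da.h_a, Db.h_a] using this.symm
  have hscale : ∀ i j (z : ℂ), b j = z • a i → z ^ (2 * e + 2) = 1 := by
    intro i j z hz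
    have h1 := htest i j
    rw [hz, eval_smul_of_homogeneous (Da.h_hom i), Da.h_a, if_pos rfl, mul_one] at h1
    have h2 := Db.h_a j j
    rw [hz, eval_smul_of_homogeneous (Db.h_hom j), ← h1, if_pos rfl] at h2
    rw [← h2]; ring
  have hvan : ∀ j, j ≠ j₀ → eval (b j) (Da.h i₀) = 0 := by
    intro j hj
    rw [htest]
    have h1 := Db.h_a j j₀
    rw [hz, eval_smul_of_homogeneous (Db.h_hom j), if_neg hj] at h1
    exact (mul_eq_zero.1 h1).resolve_left (pow_ne_zero _ hz0)
  have hmatch : ∀ i, ∃ j, ∃ z : ℂ, b j = z • a i := by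
    intro i₁
    by_cases h10 : i₁ = i₀
    · exact ⟨j₀, z, h10 ▸ hz⟩
    by_contra hno
    push Not at hno
    obtain ⟨i₂, hi₂⟩ : ∃ i₂ : Fin r, i₂ ∉ ({i₀, i₁} : Finset (Fin r)) := by
      by_contra hc
      push Not at hc
      have h1 : (univ : Finset (Fin r)) ⊆ {i₀, i₁} := fun i _ => hc i
      have h2 := (card_le_card h1).trans card_le_two
      rw [card_univ, Fintype.card_fin] at h2
      omega
    simp only [mem_insert, mem_singleton, not_or] at hi₂
    -- Euler–Jacobi for `q, h i₀ * h i₁` and the remaining points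
    let P : {i // i ≠ i₀} ⊕ {j // j ≠ j₀} → Fin (k + 2) → ℂ :=
      Sum.elim (fun i => a i) (fun j => b j)
    let σ : {i // i ≠ i₀} ⊕ {j // j ≠ j₀} → ℂ := Sum.elim (fun _ => 1) (fun _ => -1)
    have key := euler_jacobi' hke Da.q Da.q_hom (s := Da.h i₀ * Da.h i₁)
      (by convert (Da.h_hom i₀).mul (Da.h_hom i₁) using 1; ring) P σ
      (by rintro (i | j); exacts [Da.a_zero _, Db.a_zero _])
      (by
        rintro (⟨i, hi⟩ | ⟨j, hj⟩)
        · simp [P, Da.h_a, Ne.symm hi]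
        · simp [P, hvan j hj])
      (by rintro i (l | l); exacts [Da.q_a _ _, q_vanishes Da Db hab _ _])
      (by
        intro g hg
        have h1 := hab g hg
        rw [← Finset.add_sum_erase _ _ (mem_univ i₀), ← Finset.add_sum_erase _ _ (mem_univ j₀), hz,
          eval_smul_of_homogeneous hg, hscale _ _ _ hz, one_mul] at h1
        have h2 := add_left_cancel h1
        rw [Fintype.sum_sum_type]
        simp only [P, σ, Sum.elim_inl, Sum.elim_inr, one_mul, neg_mul, Finset.sum_neg_distrib]
        rw [← Finset.sum_subtype (univ.erase i₀) (by simp) fun i => eval (a i) g,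
          ← Finset.sum_subtype (univ.erase j₀) (by simp) fun j => eval (b j) g, h2]
        ring)
      (Sum.inl ⟨i₁, h10⟩) (Sum.inl ⟨i₂, hi₂.1⟩)
      (by
        rintro (⟨i, hi⟩ | ⟨j, hj⟩) hne z
        · exact Da.a_ne (fun h : i = i₁ => hne (by subst h; rfl)) z
        · exact hno j z)
      (Or.inr (by
        simp [P, J_mul, Da.h_a, Ne.symm hi₂.1, Ne.symm hi₂.2]))
    have hJ2 : J Da.q (Da.h i₀ * Da.h i₁) (a i₂) = 0 := by
      simp [J_mul, Da.h_a, Ne.symm hi₂.1, Ne.symm hi₂.2]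
    have hJ1 : J Da.q (Da.h i₀ * Da.h i₁) (a i₁) = J Da.q (Da.h i₀) (a i₁) := by
      simp [J_mul, Da.h_a, Ne.symm h10]
    simp only [P, σ, Sum.elim_inl, hJ1, hJ2, one_mul, zero_mul] at key
    rcases mul_eq_zero.1 key with h | h
    · exact Da.J_h i₀ i₁ (Ne.symm h10) h
    · exact Da.a_zero _ h
  choose f z' hf using hmatch
  have hinj : Function.Injective f := by
    intro i i' h
    by_contra hne
    have h1 := hf i
    rw [h, hf i'] at h1
    have h2 : z' i' ≠ 0 := by
      intro h0
      have := hscale _ _ _ (hf i')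
      rw [h0] at this; simp at this
    refine Da.a_ne (Ne.symm hne) ((z' i')⁻¹ * z' i) ?_
    rw [← smul_smul, ← h1, smul_smul, inv_mul_cancel₀ h2, one_smul]
  let F : Fin r ≃ Fin r := Equiv.ofBijective f (Finite.injective_iff_bijective.1 hinj)
  have h1 : ∀ i, linForm (a i) ^ (2 * e + 2) = linForm (b (F i)) ^ (2 * e + 2) := by
    intro i
    change _ = linForm (b (f i)) ^ (2 * e + 2)
    rw [hf i, linForm_smul_pow, hscale _ _ _ (hf i), map_one, one_mul]
  unfold Eqv
  rw [Multiset.map_congr rfl fun i _ => h1 i]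
  have h2 : (univ : Finset (Fin r)).val.map F = univ.val := by
    have := congrArg Finset.val (Finset.map_univ_equiv F)
    simp
  conv_rhs => rw [← h2, Multiset.map_map]
  rfl

end Two

end WaringTwo

/-! ### Residual points and the second decomposition -/

namespace WaringTwo

open Finset

section Two

variable {k e r : ℕ} {a b c : Fin r → Fin (k + 2) → ℂ}

/-- No point of `b` is a multiple of a point of `a`. -/
def Apart (a b : Fin r → Fin (k + 2) → ℂ) : Prop := ∀ i j, ∀ z : ℂ, b j ≠ z • a i

/-- Among the points of `a` and `b` no two are proportional. -/
theorem isolated (ha : ∀ i, a i 0 ≠ 0) (haa : ∀ i j, i ≠ j → ∀ z : ℂ, a i ≠ z • a j)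
    (hbb : ∀ i j, i ≠ j → ∀ z : ℂ, b i ≠ z • b j) (hab : Apart a b) (l : Fin r ⊕ Fin r) :
    ∀ m, m ≠ l → ∀ z : ℂ, (Sum.elim a b : Fin r ⊕ Fin r → _) m ≠ z • Sum.elim a b l := by
  intro m hm z
  rcases m with i | i <;> rcases l with j | j
  · exact haa i j (fun h => hm (by rw [h])) z
  · intro h
    simp only [Sum.elim_inl, Sum.elim_inr] at h
    have hz : z ≠ 0 := by
      rintro rfl
      exact ha i (by rw [h]; simp)
    exact hab i j z⁻¹ (by rw [h, smul_smul, inv_mul_cancel₀ hz, one_smul])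
  · exact hab j i z
  · exact hbb i j (fun h => hm (by rw [h])) z

theorem SameSum.relation (hab : SameSum k e a b) (g : MvPolynomial (Fin (k + 2)) ℂ)
    (hg : g.IsHomogeneous (2 * e + 2)) :
    ∑ l, (Sum.elim (fun _ => 1) (fun _ => -1) : Fin r ⊕ Fin r → ℂ) l *
      eval ((Sum.elim a b : Fin r ⊕ Fin r → _) l) g = 0 := by
  have := hab g hg
  rw [Fintype.sum_sum_type]
  simp [this]

/-- A second decomposition without common points lies on the residual intersection of the curve
`q` and the hypersurface `s` attached to the first one. The Euler–Jacobi relation with weights `1`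
and `-1` determines the Jacobian there. -/
theorem residual (hke : k * e = 2) (Da : GoodData k e r a) (hS : Saturated Da)
    (Db : GoodData k e r b) (hab : SameSum k e a b) (hn : Apart a b) (j : Fin r) :
    eval (b j) Da.s = 0 ∧ J Da.q Da.s (b j) = - b j 0 := by
  let P : Fin r ⊕ Fin r → Fin (k + 2) → ℂ := Sum.elim a b
  have hP : ∀ l, P l 0 ≠ 0 := by rintro (i | i); exacts [Da.a_zero i, Db.a_zero i]
  have hPq : ∀ i l, eval (P l) (Da.q i) = 0 := by
    rintro i (l | l); exacts [Da.q_a _ _, q_vanishes Da Db hab _ _]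
  have hiso := isolated Da.a_zero (fun i j h => Da.a_ne h) (fun i j h => Db.a_ne h) hn
  have hT : ¬ Function.Surjective (evPts (d := 2 * e + 2) P) := by
    intro h
    obtain ⟨v, hv⟩ := h (Pi.single (Sum.inl j) 1)
    have h1 := hab.relation (fm v) (isHomogeneous_fm v)
    have h2 : ∀ l, eval ((Sum.elim a b : Fin r ⊕ Fin r → _) l) (fm v) =
      (Pi.single (Sum.inl j) 1 : Fin r ⊕ Fin r → ℂ) l := fun l => by
      rw [← hv]; rfl
    simp only [h2, Fintype.sum_sum_type] at h1
    simp [Pi.single_apply] at h1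
  -- a form through all the points that is not doubly tangent to the curve at the points `a`; by
  -- Euler–Jacobi and saturation it agrees, up to a scalar, with `s` on the curve
  obtain ⟨v, hv, hv'⟩ := exists_ker_of_not_surjective Da.TZ_surjective hT
  have hvP : ∀ l, eval (P l) (fm v) = 0 := fun l => by
    rw [← evPts_apply, hv]; rfl
  have hrel := fun l l' => euler_jacobi' hke Da.q Da.q_hom (isHomogeneous_fm v) P
    (Sum.elim (fun _ => 1) (fun _ => -1)) hP hvP hPq hab.relation l l' (hiso l) (Or.inl (hiso l'))
  obtain ⟨i₁, hi₁⟩ : ∃ i, J Da.q (fm v) (a i) ≠ 0 := by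
    by_contra hc
    push Not at hc
    exact hv' (funext fun o => by
      rcases o with i | i
      · rw [Da.TZ_inl]; exact hvP (Sum.inl i)
      · rw [Da.TZ_inr]; exact hc i)
  let κ := J Da.q (fm v) (a i₁) / a i₁ 0
  have hκ : κ ≠ 0 := div_ne_zero hi₁ (Da.a_zero _)
  have hJ : ∀ i, J Da.q (fm v) (a i) = κ * a i 0 := by
    intro i
    have := hrel (Sum.inl i) (Sum.inl i₁)
    simp only [P, Sum.elim_inl, one_mul] at this
    rw [div_mul_eq_mul_div, eq_div_iff (Da.a_zero _), this]
  have hsat := hS (fm v + C (-κ) * Da.s)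
    ((isHomogeneous_fm v).add (by simpa using (isHomogeneous_C _ (-κ)).mul Da.s_hom))
    (fun i => by
      have := hvP (Sum.inl i)
      simp only [P, Sum.elim_inl] at this
      simp [this, Da.s_a])
    (fun i => by rw [J_add, J_C_mul, hJ, Da.J_s]; ring)
  have hs : ∀ j, eval (b j) Da.s = 0 := by
    intro j
    have h1 := hsat (b j) fun i => hPq i (Sum.inr j)
    have h2 := hvP (Sum.inr j)
    simp only [P, Sum.elim_inr] at h2
    simp only [map_add, map_mul, eval_C, h2, zero_add] at h1
    exact (mul_eq_zero.1 h1).resolve_left (neg_ne_zero.2 hκ)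
  refine ⟨hs j, ?_⟩
  have := euler_jacobi' hke Da.q Da.q_hom Da.s_hom P
    (Sum.elim (fun _ => 1) (fun _ => -1)) hP (by rintro (i | i); exacts [Da.s_a i, hs i])
    hPq hab.relation (Sum.inl i₁) (Sum.inr j) (hiso _) (Or.inl (hiso _))
  simp only [P, Sum.elim_inl, Sum.elim_inr, Da.J_s, one_mul] at this
  refine mul_left_cancel₀ (Da.a_zero i₁) ?_
  linear_combination this

/-- There are no three decompositions that are pairwise without common points: by `residual` the
Jacobian has the same sign at the points of `b` and of `c`, in contradiction to the Euler–Jacobi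
relation between them. -/
theorem no_three (hke : k * e = 2) (hr : 0 < r) (Da : GoodData k e r a) (hS : Saturated Da)
    (Db : GoodData k e r b) (Dc : GoodData k e r c) (hab : SameSum k e a b)
    (hac : SameSum k e a c) (h1 : Apart a b) (h2 : Apart a c) (h3 : Apart b c) : False := by
  have hbc : SameSum k e b c := fun g hg => (hab g hg).symm.trans (hac g hg)
  have hb := residual hke Da hS Db hab h1
  have hc := residual hke Da hS Dc hac h2
  let P : Fin r ⊕ Fin r → Fin (k + 2) → ℂ := Sum.elim b c
  have hiso := isolated Db.a_zero (fun i j h => Db.a_ne h) (fun i j h => Dc.a_ne h) h3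
  have := euler_jacobi' hke Da.q Da.q_hom Da.s_hom P
    (Sum.elim (fun _ => 1) (fun _ => -1))
    (by rintro (i | i); exacts [Db.a_zero i, Dc.a_zero i])
    (by rintro (i | i); exacts [(hb i).1, (hc i).1])
    (by rintro i (l | l); exacts [q_vanishes Da Db hab _ _, q_vanishes Da Dc hac _ _])
    hbc.relation (Sum.inl ⟨0, hr⟩) (Sum.inr ⟨0, hr⟩) (hiso _) (Or.inl (hiso _))
  simp only [P, Sum.elim_inl, Sum.elim_inr, (hb _).2, (hc _).2, one_mul] at this
  -- the relation between `b` and `c` has weights `1, -1`, while the Jacobians have equal signs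
  have h4 : b ⟨0, hr⟩ 0 * c ⟨0, hr⟩ 0 = 0 := by linear_combination -this / 2
  exact mul_ne_zero (Db.a_zero _) (Dc.a_zero _) h4

/-- Rescaling the residual points gives a second decomposition. -/
theorem exists_second (hke : k * e = 2) (hr : 0 < r) (D : GoodData k e r a) (hS : Saturated D) :
    ∃ b, SameSum k e a b ∧ Apart a b := by
  let P : Fin r ⊕ Fin r → Fin (k + 2) → ℂ := Sum.elim a D.b
  have hP : ∀ l, P l 0 ≠ 0 := by
    rintro (i | i)
    · exact D.a_zero i
    · simp [P, D.b_zero]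
  have hPq : ∀ i l, eval (P l) (D.q i) = 0 := by
    rintro i (l | l); exacts [D.q_a _ _, D.q_b _ _]
  have hPs : ∀ l, eval (P l) D.s = 0 := by
    rintro (l | l); exacts [D.s_a _, D.s_b _]
  have hiso := isolated D.a_zero (fun i j h => D.a_ne h) (fun i j h => D.b_ne' h)
    (fun i j z => D.b_ne_a' i j z)
  have hT : ¬ Function.Surjective (evPts (d := 2 * e + 2) P) := by
    refine not_surjective_of_ker (S := D.TZ) (fun v hv => ?_) ?_
    · funext l
      exact hS (fm v) (isHomogeneous_fm v) (fun i => by rw [← D.TZ_inl, hv]; rfl)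
        (fun i => by rw [← D.TZ_inr, hv]; rfl) (P l) fun i => hPq i l
    · obtain ⟨v, hv⟩ := exists_fm D.s_hom
      refine ⟨v, funext fun l => ?_, fun h => ?_⟩
      · rw [evPts_apply, hv]; exact hPs l
      · have h1 : J D.q (fm v) (a ⟨0, hr⟩) = 0 := by
          rw [← D.TZ_inr, h]; rfl
        rw [hv, D.J_s] at h1
        exact D.a_zero _ h1
  obtain ⟨c, hc0, hc⟩ := exists_relation_of_not_surjective _ hT
  have hrel : ∀ g : MvPolynomial (Fin (k + 2)) ℂ, g.IsHomogeneous (2 * e + 2) →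
      ∑ l, c l * eval (P l) g = 0 := by
    intro g hg
    obtain ⟨v, rfl⟩ := exists_fm hg
    exact hc v
  have key := fun l l' => euler_jacobi' hke D.q D.q_hom D.s_hom P c hP hPs hPq hrel l l' (hiso _)
    (Or.inl (hiso _))
  let K := c (Sum.inl ⟨0, hr⟩)
  have hca : ∀ i, c (Sum.inl i) = K := by
    intro i
    have := key (Sum.inl i) (Sum.inl ⟨0, hr⟩)
    simp only [P, Sum.elim_inl, D.J_s] at this
    refine mul_right_cancel₀ (mul_ne_zero (D.a_zero i) (D.a_zero ⟨0, hr⟩)) ?_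
    linear_combination this
  have hcb : ∀ j, c (Sum.inr j) * J D.q D.s (D.b j) = K := by
    intro j
    have := key (Sum.inr j) (Sum.inl ⟨0, hr⟩)
    simp only [P, Sum.elim_inl, Sum.elim_inr, D.J_s, D.b_zero, mul_one] at this
    exact mul_right_cancel₀ (D.a_zero ⟨0, hr⟩) this
  have hK : K ≠ 0 := by
    intro hK
    refine hc0 (funext ?_)
    rintro (i | j)
    · exact (hca i).trans hK
    · have := hcb j
      rw [hK] at this
      exact (mul_eq_zero.1 this).resolve_right (D.J_b j)
  have hroot : ∀ j, ∃ z : ℂ, z ^ (2 * e + 2) = - c (Sum.inr j) / K := fun j =>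
    IsAlgClosed.exists_pow_nat_eq _ (by omega)
  choose ν hν using hroot
  refine ⟨fun j => ν j • D.b j, fun g hg => ?_, fun i j z h => ?_⟩
  · have h1 := hrel g hg
    rw [Fintype.sum_sum_type] at h1
    simp only [hca, P, Sum.elim_inl, Sum.elim_inr, ← Finset.mul_sum] at h1
    have h2 : ∀ j, eval (ν j • D.b j) g = (-1 / K) * (c (Sum.inr j) * eval (D.b j) g) := by
      intro j
      rw [eval_smul_of_homogeneous hg, hν]; ring
    simp only [h2, ← Finset.mul_sum]
    field_simp
    linear_combination h1
  · have hν0 : ν j ≠ 0 := by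
      intro h0
      have h1 := hν j
      rw [h0, zero_pow (by omega)] at h1
      have h2 : c (Sum.inr j) = 0 := by
        have := (div_eq_zero_iff.1 h1.symm).resolve_right hK
        simpa using this
      have h3 := hcb j
      rw [h2, zero_mul] at h3
      exact hK h3.symm
    refine D.b_ne_a' i j ((ν j)⁻¹ * z) ?_
    rw [← smul_smul, ← h, smul_smul, inv_mul_cancel₀ hν0, one_smul]

theorem sameSum_iff : SameSum k e a b ↔
    ∑ i, linForm (b i) ^ (2 * e + 2) = ∑ i, linForm (a i) ^ (2 * e + 2) := by
  rw [apolar]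
  exact ⟨fun h g hg => (h g hg).symm, fun h g hg => (h g hg).symm⟩

/-- The conclusion of the theorem for one family of points. -/
def TwoDec (d n r : ℕ) (a : Fin r → Fin (n + 1) → ℂ) : Prop :=
  (∀ s : ℕ, s < r → ∀ b : Fin s → Fin (n + 1) → ℂ,
      ∑ i, linForm (a i) ^ d ≠ ∑ i, linForm (b i) ^ d) ∧
    {D : Multiset (MvPolynomial (Fin (n + 1)) ℂ) |
      ∃ b : Fin r → Fin (n + 1) → ℂ, (∑ i, linForm (b i) ^ d) = ∑ i, linForm (a i) ^ d ∧
        D = Finset.univ.val.map fun i => linForm (b i) ^ d}.ncard = 2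

/-- `TwoDec` follows when every decomposition has nonzero vectors only and the given one has, up to
`Eqv`, exactly one other. -/
theorem twoDec_of_exists {d n r : ℕ} (a : Fin r → Fin (n + 1) → ℂ)
    (hz : ∀ b : Fin r → Fin (n + 1) → ℂ,
      ∑ i, linForm (b i) ^ d = ∑ i, linForm (a i) ^ d → ∀ i, b i ≠ 0) (hd : d ≠ 0)
    (h : ∃ b : Fin r → Fin (n + 1) → ℂ, ∑ i, linForm (b i) ^ d = ∑ i, linForm (a i) ^ d ∧
      ¬ Eqv d a b ∧ ∀ c : Fin r → Fin (n + 1) → ℂ,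
        ∑ i, linForm (c i) ^ d = ∑ i, linForm (a i) ^ d → Eqv d a c ∨ Eqv d b c) :
    TwoDec d n r a := by
  constructor
  · intro s hs b hb
    obtain ⟨m, rfl⟩ := Nat.exists_eq_add_of_lt hs
    let b' : Fin (s + m + 1) → Fin (n + 1) → ℂ := 
      Fin.append (Fin.append b fun _ : Fin m => 0) fun _ : Fin 1 => 0
    refine hz b' ?_ (Fin.natAdd (s + m) 0) (by simp [b'])
    rw [hb, Fin.sum_univ_add (a := s + m) (b := 1), Fin.sum_univ_add]
    simp [b', linForm_zero, hd]
  · obtain ⟨b, hb, hab, hc⟩ := h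
    rw [show {D : Multiset (MvPolynomial (Fin (n + 1)) ℂ) |
      ∃ b : Fin r → Fin (n + 1) → ℂ, (∑ i, linForm (b i) ^ d) = ∑ i, linForm (a i) ^ d ∧
        D = Finset.univ.val.map fun i => linForm (b i) ^ d} =
        {univ.val.map fun i => linForm (a i) ^ d, univ.val.map fun i => linForm (b i) ^ d} from ?_]
    · exact Set.ncard_pair hab
    · ext D
      simp only [Set.mem_ofPred_eq, Set.mem_insert_iff, Set.mem_singleton_iff]
      constructor
      · rintro ⟨c, h1, rfl⟩
        rcases hc c h1 with h | h
        · exact Or.inl h.symm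
        · exact Or.inr h.symm
      · rintro (rfl | rfl)
        · exact ⟨a, rfl, rfl⟩
        · exact ⟨b, hb, rfl⟩

theorem not_eqv_of_apart {d : ℕ} (hd : d ≠ 0) (hr : 0 < r) (h : Apart a b) : ¬ Eqv d a b := by
  intro he
  have h1 : linForm (b ⟨0, hr⟩) ^ d ∈ (univ.val.map fun i => linForm (a i) ^ d) := by
    unfold Eqv at he
    rw [he]
    exact Multiset.mem_map.2 ⟨_, Finset.mem_univ_val _, rfl⟩
  obtain ⟨i, -, hi⟩ := Multiset.mem_map.1 h1
  obtain ⟨z, -, hz⟩ := (linForm_pow_eq_iff hd _ _).1 hi.symm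
  exact h i _ z hz

/-- If every decomposition of the power sum of `a` has a saturated certificate, then the power sum
has exactly two decompositions: `exists_second` provides the second one and `no_three` excludes a
third. -/
theorem core (hke : k * e = 2) (hr : 3 ≤ r) (a : Fin r → Fin (k + 2) → ℂ)
    (H : ∀ b, SameSum k e a b → ∃ D : GoodData k e r b, Saturated D) :
    TwoDec (2 * e + 2) (k + 1) r a := by
  obtain ⟨Da, hS⟩ := H a fun _ _ => rfl
  refine twoDec_of_exists a (fun b hb i h0 => ?_) (by omega) ?_
  · obtain ⟨Db, -⟩ := H b (sameSum_iff.2 hb)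
    exact Db.a_zero i (by rw [h0]; rfl)
  obtain ⟨b, hab, hb⟩ := exists_second hke (by omega) Da hS
  obtain ⟨Db, hSb⟩ := H b hab
  refine ⟨b, sameSum_iff.1 hab, not_eqv_of_apart (by omega) (by omega) hb, fun c hc => ?_⟩
  have hac := sameSum_iff.2 hc
  obtain ⟨Dc, -⟩ := H c hac
  by_cases h1 : Apart a c
  · by_cases h2 : Apart b c
    · exact (no_three hke (by omega) Da hS Db Dc hab hac hb h1 h2).elim
    · unfold Apart at h2
      push Not at h2
      obtain ⟨i, j, z, h⟩ := h2
      exact Or.inr (eqv_of_proportional hke hr Db Dc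
        (fun g hg => (hab g hg).symm.trans (hac g hg)) h)
  · unfold Apart at h1
    push Not at h1
    obtain ⟨i, j, z, h⟩ := h1
    exact Or.inl (eqv_of_proportional hke hr Da Dc hac h)

end Two

end WaringTwo

/-! ### Saturation -/

namespace WaringTwo

open Finset

section Sat

theorem fm_zero {n d : ℕ} : fm (0 : Mon n d → ℂ) = 0 := (fmL n d).map_zero

variable {k e r : ℕ} {a : Fin r → Fin (k + 2) → ℂ}

/-- The forms `q` are transversal at the points. -/
theorem GoodData.grad_indep (D : GoodData k e r a) (i₀ : Fin r) (α : Fin k → ℂ)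
    (h : ∀ j : Fin (k + 1), ∑ i, α i * eval (a i₀) (pderiv j.succ (D.q i)) = 0) : α = 0 := by
  have h1 := D.J_w i₀ i₀
  rw [if_pos rfl, J, Jac] at h1
  have h2 := Matrix.eq_zero_of_vecMul_eq_zero (M := Matrix.of fun i j : Fin (k + 1) =>
    eval (a i₀) (pderiv j.succ
      ((Fin.cons (D.w i₀) D.q : Fin (k + 1) → MvPolynomial (Fin (k + 1 + 1)) ℂ) i)))
    (by rw [h1]; exact one_ne_zero) (v := Fin.cons 0 α) (by
      funext j
      rw [Matrix.vecMul, dotProduct, Fin.sum_univ_succ]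
      simpa using h j)
  funext i
  have := congrFun h2 i.succ
  simpa using this

/-- The quotient step of the saturation argument: multiples of the `q i` exhaust the kernel of
`TZ` as soon as there are enough of them. -/
theorem saturated_of_finrank (D : GoodData k e r a)
    (Φ : (Fin k → Mon (k + 2) (e + 1) → ℂ) →ₗ[ℂ] MvPolynomial (Fin (k + 2)) ℂ)
    (hΦ : ∀ g, Φ g = ∑ i, D.q i * fm (g i))
    (hcard : Fintype.card (Mon (k + 2) (2 * e + 2)) + Module.finrank ℂ (LinearMap.ker Φ) ≤
      2 * r + k * Fintype.card (Mon (k + 2) (e + 1))) : Saturated D := by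
  let K := (LinearMap.ker D.TZ).map (fmL (k + 2) (2 * e + 2))
  have hle : LinearMap.range Φ ≤ K := by
    rintro _ ⟨g, rfl⟩
    have hh : (Φ g).IsHomogeneous (2 * e + 2) := by
      rw [hΦ]
      refine IsHomogeneous.sum _ _ _ fun i _ => ?_
      convert (D.q_hom i).mul (isHomogeneous_fm (g i)) using 1; ring
    obtain ⟨v, hv⟩ := exists_fm hh
    refine ⟨v, ?_, hv⟩
    change D.TZ v = 0
    funext o
    rcases o with i | i
    · rw [D.TZ_inl, hv, hΦ]
      simp [D.q_a]
    · rw [D.TZ_inr, hv, hΦ]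
      simp [J_sum, J_mul, J_self, D.q_a]
  have h1 : Module.finrank ℂ K = Module.finrank ℂ (LinearMap.ker D.TZ) :=
    (LinearEquiv.finrank_eq (Submodule.equivMapOfInjective (fmL (k + 2) (2 * e + 2))
      fm_injective _)).symm
  have h2 := D.TZ.finrank_range_add_finrank_ker
  rw [LinearMap.range_eq_top.2 D.TZ_surjective, finrank_top] at h2
  have h3 := Φ.finrank_range_add_finrank_ker
  simp only [Module.finrank_pi, Module.finrank_pi_fintype, Fintype.card_sum, Fintype.card_fin,
    Finset.sum_const, Finset.card_univ, smul_eq_mul] at h2 h3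
  have h4 := Submodule.eq_of_le_of_finrank_le hle (by omega)
  intro s hs h0 hJ x hx
  obtain ⟨v, rfl⟩ := exists_fm hs
  have hv : fm v ∈ K := by
    refine ⟨v, ?_, rfl⟩
    change D.TZ v = 0
    funext o
    rcases o with i | i
    · exact h0 i
    · exact hJ i
  rw [← h4] at hv
  obtain ⟨g, hg⟩ := hv
  rw [← hg, hΦ]
  simp [hx]

/-- Multiplication by the forms `q`. -/
noncomputable def mulQ {k d : ℕ} (q : Fin k → MvPolynomial (Fin (k + 2)) ℂ) :
    (Fin k → Mon (k + 2) d → ℂ) →ₗ[ℂ] MvPolynomial (Fin (k + 2)) ℂ where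
  toFun g := ∑ i, q i * fm (g i)
  map_add' g g' := by simp [fm_add, mul_add, Finset.sum_add_distrib]
  map_smul' t g := by
    simp only [Pi.smul_apply, fm_smul, RingHom.id_apply, smul_eq_C_mul, Finset.mul_sum]
    exact Finset.sum_congr rfl fun i _ => by ring

/-- Noether's theorem for nine points of a plane cubic: the sextics number 28 and the
multiples of the cubic form a subspace of dimension 10, so the 18 conditions of `TZ` leave nothing
else. -/
theorem saturated_one {a : Fin 9 → Fin 3 → ℂ} (D : GoodData 1 2 9 a) : Saturated D := by
  refine saturated_of_finrank D (mulQ D.q) (fun _ => rfl) ?_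
  have hq : D.q 0 ≠ 0 := by
    intro h
    have := congrFun (D.grad_indep 0 1 (by simp [h])) 0
    simp at this
  have : LinearMap.ker (mulQ (d := 2 + 1) D.q) = ⊥ := by
    rw [LinearMap.ker_eq_bot']
    intro g hg
    have h1 : D.q 0 * fm (g 0) = 0 := by simpa [mulQ] using hg
    funext i
    rw [Subsingleton.elim i 0]
    refine fm_injective ?_
    rw [(mul_eq_zero.1 h1).resolve_left hq]
    exact fm_zero.symm
  rw [this, finrank_bot, card_mon, card_mon]
  decide

/-- The case of eight points in space: of the 35 quartics, the 16 conditions of `TZ` leave a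
space of dimension 19, which is the dimension of the space of combinations of `q 0` and `q 1`, as
`(g 0, g 1) = (q 1, -q 0)` is the only syzygy in degree 2. -/
theorem saturated_two {a : Fin 8 → Fin 4 → ℂ} (D : GoodData 2 1 8 a) : Saturated D := by
  refine saturated_of_finrank D (mulQ D.q) (fun _ => rfl) ?_
  obtain ⟨c₀, hc₀⟩ := exists_fm (D.q_hom 0)
  obtain ⟨c₁, hc₁⟩ := exists_fm (D.q_hom 1)
  have hind : ∀ α β : ℂ, C α * D.q 0 + C β * D.q 1 = 0 → α = 0 ∧ β = 0 := by
    intro α β h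
    have := D.grad_indep 0 ![α, β] (fun j => by
      have := congrArg (fun p => eval (a 0) (pderiv j.succ p)) h
      simpa using this)
    exact ⟨congrFun this 0, congrFun this 1⟩
  have hli : LinearIndependent ℂ ![c₀, c₁] := by
    rw [LinearIndependent.pair_iff]
    intro α β h
    refine hind α β ?_
    have := congrArg fm h
    rwa [fm_add, fm_smul, fm_smul, hc₀, hc₁, fm_zero] at this
  -- the quadrics through the eight points form the pencil spanned by `q`
  have hpencil : ∀ c : Mon 4 2 → ℂ, (∀ i, eval (a i) (fm c) = 0) →
      ∃ α β : ℂ, α • c₀ + β • c₁ = c := by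
    have hsurj : Function.Surjective (evPts (d := 2) a) := by
      intro ρ
      obtain ⟨v, hv⟩ := exists_fm (IsHomogeneous.sum univ (fun i => C (ρ i) * D.h i) 2 fun i _ => by
        simpa using (isHomogeneous_C _ (ρ i)).mul (D.h_hom i))
      refine ⟨v, funext fun l => ?_⟩
      rw [evPts_apply, hv]
      simp [D.h_a]
    have h1 := (evPts (d := 2) a).finrank_range_add_finrank_ker
    rw [LinearMap.range_eq_top.2 hsurj, finrank_top, Module.finrank_pi, Module.finrank_pi,
      card_mon, Fintype.card_fin] at h1
    have h2 : Submodule.span ℂ (Set.range ![c₀, c₁]) = LinearMap.ker (evPts (d := 2) a) := by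
      refine Submodule.eq_of_le_of_finrank_le ?_ ?_
      · rw [Submodule.span_le]
        rintro _ ⟨i, rfl⟩
        change evPts a _ = 0
        funext l
        rw [evPts_apply]
        fin_cases i
        · change eval (a l) (fm c₀) = 0
          rw [hc₀]; exact D.q_a _ _
        · change eval (a l) (fm c₁) = 0
          rw [hc₁]; exact D.q_a _ _
      · rw [finrank_span_eq_card hli, Fintype.card_fin]
        have : (4 + 2 - 1).choose 2 = 10 := by decide
        rw [this] at h1
        exact Nat.le_of_add_le_add_left (h1.le : 8 + _ ≤ 8 + 2)
    intro c hc
    have h3 : c ∈ LinearMap.ker (evPts (d := 2) a) := funext hc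
    rw [← h2, Matrix.range_cons, Matrix.range_cons, Matrix.range_empty, Set.union_empty,
      Set.singleton_union, Submodule.mem_span_pair] at h3
    exact h3
  have hker : LinearMap.ker (mulQ (d := 1 + 1) D.q) ≤ Submodule.span ℂ {![c₁, -c₀]} := by
    intro g hg
    have h1 : D.q 0 * fm (g 0) + D.q 1 * fm (g 1) = 0 := by
      have : mulQ D.q g = 0 := hg
      simpa [mulQ] using this
    have h2 : ∀ i, eval (a i) (fm (g 0)) = 0 ∧ eval (a i) (fm (g 1)) = 0 := by
      intro i
      have := D.grad_indep i ![eval (a i) (fm (g 0)), eval (a i) (fm (g 1))] (fun j => by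
        have := congrArg (fun p => eval (a i) (pderiv j.succ p)) h1
        simpa [pderiv_mul, D.q_a, mul_comm] using this)
      exact ⟨congrFun this 0, congrFun this 1⟩
    obtain ⟨α, β, h3⟩ := hpencil (g 0) fun i => (h2 i).1
    obtain ⟨γ, δ, h4⟩ := hpencil (g 1) fun i => (h2 i).2
    have h5 : C α * D.q 0 ^ 2 + C (β + γ) * (D.q 0 * D.q 1) + C δ * D.q 1 ^ 2 = 0 := by
      rw [← h3, ← h4, fm_add, fm_add, fm_smul, fm_smul, fm_smul, fm_smul, hc₀, hc₁] at h1
      rw [← h1, map_add]; ring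
    have hα : α = 0 := by
      by_contra hα
      -- factor the binary quadratic form over `ℂ`
      obtain ⟨D', hD'⟩ := IsAlgClosed.exists_pow_nat_eq ((β + γ) ^ 2 - 4 * α * δ) two_pos
      have h6 : (C (2 * α) * D.q 0 + C (β + γ - D') * D.q 1) *
          (C (2 * α) * D.q 0 + C (β + γ + D') * D.q 1) = 0 := by
        have h7 : (C (D' ^ 2) : MvPolynomial (Fin (2 + 2)) ℂ) =
          C ((β + γ) ^ 2 - 4 * α * δ) := by rw [hD']
        simp only [map_mul, map_sub, map_add, map_pow] at h5 h7 ⊢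
        have : (C (4 : ℂ) : MvPolynomial (Fin (2 + 2)) ℂ) = 4 := map_ofNat C 4
        have h2' : (C (2 : ℂ) : MvPolynomial (Fin (2 + 2)) ℂ) = 2 := map_ofNat C 2
        rw [this] at h7
        rw [h2']
        linear_combination 4 * C α * h5 - D.q 1 ^ 2 * h7
      rcases mul_eq_zero.1 h6 with h | h
      · exact hα (by simpa using (hind _ _ h).1)
      · exact hα (by simpa using (hind _ _ h).1)
    have hq1 : D.q 1 ≠ 0 := fun h => one_ne_zero (hind 0 1 (by simp [h])).2
    have h6 : D.q 1 * (C (β + γ) * D.q 0 + C δ * D.q 1) = 0 := by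
      rw [← h5, hα, map_zero]; ring
    obtain ⟨h7, h8⟩ := hind _ _ ((mul_eq_zero.1 h6).resolve_left hq1)
    rw [Submodule.mem_span_singleton]
    refine ⟨β, ?_⟩
    funext i
    fin_cases i
    · change β • c₁ = g 0
      rw [← h3, hα]; simp
    · change β • (-c₀) = g 1
      rw [← h4, h8, eq_neg_of_add_eq_zero_right h7]; simp
  have h1 := (Submodule.finrank_mono hker).trans (finrank_span_le_card _)
  rw [Set.toFinset_singleton, card_singleton] at h1
  rw [card_mon, card_mon]
  have : (2 + 2 + (2 * 1 + 2) - 1).choose (2 * 1 + 2) = 35 := by decide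
  have : (2 + 2 + (1 + 1) - 1).choose (1 + 1) = 10 := by decide
  omega

end Sat

end WaringTwo

/-! ### Infinitesimal rigidity -/

namespace WaringTwo

open Finset

theorem euler_eval {n d : ℕ} {s : MvPolynomial (Fin n) ℂ} (hs : s.IsHomogeneous d)
    (x : Fin n → ℂ) : ∑ j, x j * eval x (pderiv j s) = d * eval x s := by
  have := congrArg (eval x) hs.sum_X_mul_pderiv
  simpa using this

section Tangent

variable {k e r : ℕ} {a : Fin r → Fin (k + 2) → ℂ}

/-- A direction killed by the differentials of the `q i` is a combination of the direction of the
curve and of the radial direction. -/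
theorem GoodData.tangent (D : GoodData k e r a) (l : Fin r) (v : Fin (k + 2) → ℂ)
    (hv : ∀ i, ∑ j, v j * eval (a l) (pderiv j (D.q i)) = 0) :
    ∃ lam τ : ℂ, (∀ s : MvPolynomial (Fin (k + 2)) ℂ, ∀ d, s.IsHomogeneous d →
      ∑ j, v j * eval (a l) (pderiv j s) = lam * J D.q s (a l) + τ * (d * eval (a l) s)) ∧
      (lam = 0 → v = τ • a l) := by
  let τ := v 0 / a l 0
  let u : Fin (k + 1) → ℂ := fun j => v j.succ - τ * a l j.succ
  have hvu : ∀ j, v j = τ * a l j + (Fin.cons 0 u : Fin (k + 2) → ℂ) j := by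
    intro j
    refine Fin.cases ?_ (fun j => ?_) j
    · simp [τ, div_mul_cancel₀ _ (D.a_zero l)]
    · simp [u]
  have hsplit : ∀ s : MvPolynomial (Fin (k + 2)) ℂ, ∀ d, s.IsHomogeneous d →
      ∑ j, v j * eval (a l) (pderiv j s) =
        ∑ j : Fin (k + 1), u j * eval (a l) (pderiv j.succ s) + τ * (d * eval (a l) s) := by
    intro s d hs
    rw [← euler_eval hs]
    conv_lhs => enter [2, j]; rw [hvu j, add_mul, mul_assoc]
    rw [Finset.sum_add_distrib, ← Finset.mul_sum, add_comm]
    congr 1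
    rw [Fin.sum_univ_succ]
    simp
  let lam := ∑ j : Fin (k + 1), u j * eval (a l) (pderiv j.succ (D.w l))
  let M : Matrix (Fin (k + 1)) (Fin (k + 1)) ℂ := Matrix.of fun i j =>
    eval (a l) (pderiv j.succ
      ((Fin.cons (D.w l) D.q : Fin (k + 1) → MvPolynomial (Fin (k + 1 + 1)) ℂ) i))
  have hM : M.det ≠ 0 := by
    have := D.J_w l l
    rw [if_pos rfl, J, Jac] at this
    rw [this]; exact one_ne_zero
  have hu : u = lam • cof D.q (a l) := by
    have h1 : u - lam • cof D.q (a l) = 0 := by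
      refine Matrix.eq_zero_of_mulVec_eq_zero hM ?_
      funext i
      rw [Matrix.mulVec, dotProduct]
      simp only [Pi.sub_apply, Pi.smul_apply, smul_eq_mul, mul_sub, Finset.sum_sub_distrib,
        Pi.zero_apply]
      refine Fin.cases ?_ (fun i => ?_) i
      · have h2 := D.J_w l l
        rw [if_pos rfl, J_eq] at h2
        have h3 : ∑ j, M 0 j * (lam * cof D.q (a l) j) = lam := by
          refine Eq.trans ?_ (congrArg (lam * ·) h2 |>.trans (mul_one lam))
          simp only [Finset.mul_sum]
          refine Finset.sum_congr rfl fun j _ => ?_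
          simp [M]; ring
        rw [h3, sub_eq_zero]
        refine Finset.sum_congr rfl fun j _ => ?_
        simp [M]; ring
      · have h2 := J_self D.q (a l) i
        rw [J_eq] at h2
        have h3 : ∑ j, M i.succ j * (lam * cof D.q (a l) j) = 0 := by
          rw [← mul_zero lam, ← h2, Finset.mul_sum]
          refine Finset.sum_congr rfl fun j _ => ?_
          simp [M]; ring
        have h4 := hsplit _ _ (D.q_hom i)
        rw [hv, D.q_a, mul_zero, mul_zero, add_zero] at h4
        rw [h3, sub_zero, h4]
        refine Finset.sum_congr rfl fun j _ => ?_
        simp [M]; ring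
    exact sub_eq_zero.1 h1
  refine ⟨lam, τ, fun s d hs => ?_, fun h0 => ?_⟩
  · rw [hsplit s d hs, J_eq, hu]
    simp only [Pi.smul_apply, smul_eq_mul, Finset.mul_sum, mul_assoc]
  · rw [h0, zero_smul] at hu
    funext j
    rw [hvu, hu]
    refine Fin.cases ?_ (fun j => ?_) j <;> simp

/-- Infinitesimal rigidity: the tangent spaces to the variety of powers at the points are
independent (Terracini). -/
theorem GoodData.rigid (D : GoodData k e r a) (v : Fin r → Fin (k + 2) → ℂ)
    (hv : ∀ s : MvPolynomial (Fin (k + 2)) ℂ, s.IsHomogeneous (2 * e + 2) →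
      ∑ l, ∑ j, v l j * eval (a l) (pderiv j s) = 0) : v = 0 := by
  have hq : ∀ l i, ∑ j, v l j * eval (a l) (pderiv j (D.q i)) = 0 := by
    intro l i
    have := hv (D.q i * D.h l) (by convert (D.q_hom i).mul (D.h_hom l) using 1; ring)
    rw [Finset.sum_eq_single l] at this
    · simpa [pderiv_mul, D.q_a, D.h_a] using this
    · intro l' _ hl'
      simp [D.q_a, D.h_a, Ne.symm hl']
    · simp
  choose lam τ h1 h2 using fun l => D.tangent l (v l) (hq l)
  have hlam : ∀ l, lam l = 0 := by
    intro l
    have := hv (D.w l) (D.w_hom l)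
    simp only [fun l' => h1 l' (D.w l) _ (D.w_hom l), D.J_w, D.w_a] at this
    simpa using this
  funext l
  have h3 := hv (D.h l * D.h l) (by convert (D.h_hom l).mul (D.h_hom l) using 1; ring)
  simp only [fun l' => h1 l' (D.h l * D.h l) _ ((D.h_hom l).mul (D.h_hom l)), map_mul, D.h_a,
    hlam] at h3
  have h4 : τ l = 0 := by
    simp at h3
    refine h3.resolve_right ?_
    norm_cast
  rw [h2 l (hlam l), h4, zero_smul]; rfl

end Tangent

/-- The power sum map in coordinates: moments of a family of points. -/
noncomputable def moment (r n d : ℕ) (m : Mon n d) : MvPolynomial (Fin r × Fin n) ℂ :=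
  ∑ i, rename (Prod.mk i) (monomial m.1 1)

theorem eval_moment {r n d : ℕ} (t : Fin r × Fin n → ℂ) (m : Mon n d) :
    eval t (moment r n d m) = ∑ i, eval (fun j => t (i, j)) (monomial m.1 1) := by
  simp only [moment, map_sum, eval_rename]
  rfl

theorem pderiv_rename_prod {r n : ℕ} (i i' : Fin r) (j : Fin n) (p : MvPolynomial (Fin n) ℂ) :
    pderiv (i, j) (rename (Prod.mk i') p) =
      if i' = i then rename (Prod.mk i') (pderiv j p) else 0 := by
  split_ifs with h
  · subst h
    exact pderiv_rename (Prod.mk_right_injective _) _ _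
  · refine pderiv_eq_zero_of_notMem_vars fun hm => ?_
    have := vars_rename _ _ hm
    rw [Finset.mem_image] at this
    obtain ⟨x, -, hx⟩ := this
    exact h (congrArg Prod.fst hx)

theorem eval_pderiv_moment {r n d : ℕ} (t : Fin r × Fin n → ℂ) (m : Mon n d) (i : Fin r)
    (j : Fin n) : eval t (pderiv (i, j) (moment r n d m)) =
      eval (fun j => t (i, j)) (pderiv j (monomial m.1 1)) := by
  simp only [moment, map_sum, pderiv_rename_prod]
  rw [Finset.sum_eq_single i]
  · rw [if_pos rfl, eval_rename]; rfl
  · intro i' _ h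
    rw [if_neg h, map_zero]
  · simp

theorem fm_eq_sum {n d : ℕ} (c : Mon n d → ℂ) : fm c = ∑ m, C (c m) * monomial m.1 1 := by
  unfold fm
  refine Finset.sum_congr rfl fun m _ => ?_
  rw [C_mul_monomial, mul_one]

theorem moment_eq_iff {r n d : ℕ} (b t : Fin r × Fin n → ℂ) :
    (∀ m, eval b (moment r n d m) = eval t (moment r n d m)) ↔
      ∀ g : MvPolynomial (Fin n) ℂ, g.IsHomogeneous d →
        ∑ i, eval (fun j => b (i, j)) g = ∑ i, eval (fun j => t (i, j)) g := by
  simp only [eval_moment]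
  constructor
  · intro h g hg
    obtain ⟨c, rfl⟩ := exists_fm hg
    simp only [fm_eq_sum, map_sum, map_mul, eval_C]
    rw [Finset.sum_comm, Finset.sum_comm (s := univ (α := Fin r))]
    simp only [← Finset.mul_sum, h]
  · intro h m
    refine h _ (isHomogeneous_monomial _ ?_)
    rw [Finsupp.degree_eq_sum]; exact mon_degree m

/-- Injectivity of the differential of the power sum map, tested on forms of degree `d`. -/
theorem injAt_moment {r n d : ℕ} (t : Fin r × Fin n → ℂ)
    (h : ∀ v : Fin r → Fin n → ℂ, (∀ s : MvPolynomial (Fin n) ℂ, s.IsHomogeneous d →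
      ∑ l, ∑ j, v l j * eval (fun j => t (l, j)) (pderiv j s) = 0) → v = 0) :
    InjAt (moment r n d) t := by
  intro v hv
  have := h (fun l j => v (l, j)) fun s hs => by
    obtain ⟨c, rfl⟩ := exists_fm hs
    have h1 : ∀ l j, eval (fun j => t (l, j)) (pderiv j (fm c)) =
        ∑ m, c m * eval t (pderiv (l, j) (moment r n d m)) := by
      intro l j
      simp only [fm_eq_sum, map_sum, eval_pderiv_moment, pderiv_C_mul, map_mul, eval_C]
    simp only [h1, Finset.mul_sum]
    rw [← Fintype.sum_prod_type' (f := fun l j => ∑ m, v (l, j) * (c m * eval t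
      (pderiv (l, j) (moment r n d m)))), Finset.sum_comm]
    refine Finset.sum_eq_zero fun m _ => ?_
    rw [← mul_zero (c m), ← hv m, Finset.mul_sum]
    exact Finset.sum_congr rfl fun i _ => by ring
  funext ⟨l, j⟩
  exact congrFun (congrFun this l) j

end WaringTwo

/-! ### Deformation of certificates -/

namespace WaringTwo

open Finset

section PF

variable {E : Type*} [AddCommGroup E] [Module ℂ E]

theorem PolyFun.eval_fm {n d : ℕ} {x : E → Fin n → ℂ} (hx : ∀ i, PolyFun fun u => x u i)
    {c : E → Mon n d → ℂ} (hc : ∀ m, PolyFun fun u => c u m) :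
    PolyFun fun u => MvPolynomial.eval (x u) (fm (c u)) := by
  simp only [WaringTwo.eval_fm]
  exact PolyFun.sum _ fun m _ => (hc m).mul (PolyFun.prod _ fun i _ => (hx i).pow _)

theorem PolyFun.eval_pderiv_fm {n d : ℕ} {x : E → Fin n → ℂ} (hx : ∀ i, PolyFun fun u => x u i)
    {c : E → Mon n d → ℂ} (hc : ∀ m, PolyFun fun u => c u m) (j : Fin n) :
    PolyFun fun u => MvPolynomial.eval (x u) (pderiv j (fm (c u))) := by
  simp only [fm_eq_sum, map_sum, pderiv_C_mul, map_mul, eval_C]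
  exact PolyFun.sum _ fun m _ => (hc m).mul (PolyFun.eval hx _)

theorem PolyFun.J_fm {k d d' : ℕ} {x : E → Fin (k + 2) → ℂ} (hx : ∀ i, PolyFun fun u => x u i)
    {q : E → Fin k → Mon (k + 2) d → ℂ} (hq : ∀ i m, PolyFun fun u => q u i m)
    {c : E → Mon (k + 2) d' → ℂ} (hc : ∀ m, PolyFun fun u => c u m) :
    PolyFun fun u => J (fun i => fm (q u i)) (fm (c u)) (x u) := by
  unfold J Jac
  refine PolyFun.det fun i j => ?_
  simp only [Matrix.of_apply]
  refine Fin.cases ?_ (fun i => ?_) i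
  · exact PolyFun.eval_pderiv_fm hx hc _
  · exact PolyFun.eval_pderiv_fm hx (hq i) _

end PF

theorem hasDerivAt_of_affine {F : ℂ → ℂ} (A c : ℂ) (h : ∀ ε, F ε = A + ε * c) :
    HasDerivAt F c 0 := by
  have : F = fun ε => A + ε * c := funext h
  rw [this]
  simpa using ((hasDerivAt_id (0 : ℂ)).mul_const c).const_add A

theorem hasDerivAt_eval_line {n : ℕ} (p : MvPolynomial (Fin n) ℂ) (x v : Fin n → ℂ) :
    HasDerivAt (fun ε : ℂ => eval (x + ε • v) p) (∑ j, v j * eval x (pderiv j p)) 0 := by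
  induction p using MvPolynomial.induction_on with
  | C a => simpa using hasDerivAt_const (0 : ℂ) a
  | add p q hp hq =>
    simp only [map_add, mul_add, Finset.sum_add_distrib]
    exact hp.add hq
  | mul_X p i hp =>
    have h1 : HasDerivAt (fun ε : ℂ => (x + ε • v) i) (v i) 0 :=
      hasDerivAt_of_affine (x i) (v i) fun ε => by simp
    have h2 := hp.mul h1
    have h3 : (fun ε : ℂ => eval (x + ε • v) (p * X i)) =
        (fun ε : ℂ => eval (x + ε • v) p) * fun ε : ℂ => (x + ε • v) i := by
      funext ε
      simp
    rw [h3]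
    refine h2.congr_deriv ?_
    simp only [pderiv_mul, map_add, map_mul, eval_X, mul_add, Finset.sum_add_distrib, zero_smul,
      add_zero, Finset.sum_mul]
    congr 1
    · exact Finset.sum_congr rfl fun j _ => by ring
    · simp [pderiv_X, Pi.single_apply, apply_ite, mul_comm]

section GenericGood

/-- The unknowns of a certificate: coefficients of `q`, `h`, `w` and affine coordinates of `b`. -/
abbrev Unk (k e r : ℕ) : Type :=
  (Fin k → Mon (k + 2) (e + 1) → ℂ) × (Fin r → Mon (k + 2) (e + 1) → ℂ) ×
    (Fin r → Mon (k + 2) (2 * e + 2) → ℂ) × (Fin r → Fin (k + 1) → ℂ)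

/-- The equations of a certificate, in three blocks, each involving the unknowns of the previous
blocks and new ones. -/
abbrev Eqn (k r : ℕ) : Type :=
  (Fin k × Fin r) ⊕ ((Fin r × Fin r) ⊕ (Fin r × Fin r) ⊕ (Fin r × Fin r)) ⊕
    (Fin k × Fin r) ⊕ Fin r

variable {k e r : ℕ}

/-- The defining functions of the equations of a certificate. -/
noncomputable def eqn : Eqn k r → (Fin r × Fin (k + 2) → ℂ) × Unk k e r → ℂ
  | .inl (i, j), u => eval (fun l => u.1 (j, l)) (fm (u.2.1 i))
  | .inr (.inl (.inl (i, j))), u =>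
      eval (fun l => u.1 (j, l)) (fm (u.2.2.1 i)) - if i = j then 1 else 0
  | .inr (.inl (.inr (.inl (i, j)))), u => eval (fun l => u.1 (j, l)) (fm (u.2.2.2.1 i))
  | .inr (.inl (.inr (.inr (i, j)))), u =>
      J (fun i => fm (u.2.1 i)) (fm (u.2.2.2.1 i)) (fun l => u.1 (j, l)) - if i = j then 1 else 0
  | .inr (.inr (.inl (i, j))), u => eval (Fin.cons 1 (u.2.2.2.2 j)) (fm (u.2.1 i))
  | .inr (.inr (.inr j)), u =>
      ∑ i, u.1 (i, 0) * eval (Fin.cons 1 (u.2.2.2.2 j)) (fm (u.2.2.2.1 i))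

/-- The product of the inequations of a certificate. -/
noncomputable def ineqn (u : (Fin r × Fin (k + 2) → ℂ) × Unk k e r) : ℂ :=
  (∏ i, u.1 (i, 0)) *
    (∏ i, ∏ j, if i = j then 1 else
      J (fun i => fm (u.2.1 i)) (fm (u.2.2.1 i)) (fun l => u.1 (j, l))) *
    (∏ j, ∑ i, u.1 (i, 0) *
      J (fun i => fm (u.2.1 i)) (fm (u.2.2.2.1 i)) (Fin.cons 1 (u.2.2.2.2 j))) *
    (∏ i, ∏ j, if i = j then 1 else u.2.2.2.2 i 0 - u.2.2.2.2 j 0) *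
    ∏ i, ∏ j, (u.2.2.2.2 j 0 * u.1 (i, 0) - u.1 (i, 1))

section

variable (k e r)

theorem pf_a (i : Fin r) (l : Fin (k + 2)) :
    PolyFun fun u : (Fin r × Fin (k + 2) → ℂ) × Unk k e r => u.1 (i, l) :=
  PolyFun.lin
    { toFun := fun u : (Fin r × Fin (k + 2) → ℂ) × Unk k e r => u.1 (i, l)
      map_add' := fun _ _ => rfl
      map_smul' := fun _ _ => rfl }

theorem pf_q (i : Fin k) (m : Mon (k + 2) (e + 1)) :
    PolyFun fun u : (Fin r × Fin (k + 2) → ℂ) × Unk k e r => u.2.1 i m :=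
  PolyFun.lin
    { toFun := fun u : (Fin r × Fin (k + 2) → ℂ) × Unk k e r => u.2.1 i m
      map_add' := fun _ _ => rfl
      map_smul' := fun _ _ => rfl }

theorem pf_h (i : Fin r) (m : Mon (k + 2) (e + 1)) :
    PolyFun fun u : (Fin r × Fin (k + 2) → ℂ) × Unk k e r => u.2.2.1 i m :=
  PolyFun.lin
    { toFun := fun u : (Fin r × Fin (k + 2) → ℂ) × Unk k e r => u.2.2.1 i m
      map_add' := fun _ _ => rfl
      map_smul' := fun _ _ => rfl }

theorem pf_w (i : Fin r) (m : Mon (k + 2) (2 * e + 2)) :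
    PolyFun fun u : (Fin r × Fin (k + 2) → ℂ) × Unk k e r => u.2.2.2.1 i m :=
  PolyFun.lin
    { toFun := fun u : (Fin r × Fin (k + 2) → ℂ) × Unk k e r => u.2.2.2.1 i m
      map_add' := fun _ _ => rfl
      map_smul' := fun _ _ => rfl }

theorem pf_b (i : Fin r) (l : Fin (k + 1)) :
    PolyFun fun u : (Fin r × Fin (k + 2) → ℂ) × Unk k e r => u.2.2.2.2 i l :=
  PolyFun.lin
    { toFun := fun u : (Fin r × Fin (k + 2) → ℂ) × Unk k e r => u.2.2.2.2 i l
      map_add' := fun _ _ => rfl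
      map_smul' := fun _ _ => rfl }

theorem pf_b' (i : Fin r) (l) :
    PolyFun fun u : (Fin r × Fin (k + 2) → ℂ) × Unk k e r =>
      (Fin.cons 1 (u.2.2.2.2 i) : Fin (k + 2) → ℂ) l := by
  refine Fin.cases ?_ (fun l => ?_) l
  · exact PolyFun.const 1
  · exact pf_b k e r i l

end

theorem pf_eqn (l : Eqn k r) : PolyFun (eqn (e := e) l) := by
  rcases l with ⟨i, j⟩ | (⟨i, j⟩ | ⟨i, j⟩ | ⟨i, j⟩) | ⟨i, j⟩ | j
  · exact PolyFun.eval_fm (pf_a k e r j) (pf_q k e r i)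
  · exact (PolyFun.eval_fm (pf_a k e r j) (pf_h k e r i)).sub (PolyFun.const _)
  · exact PolyFun.eval_fm (pf_a k e r j) (pf_w k e r i)
  · exact (PolyFun.J_fm (pf_a k e r j) (pf_q k e r) (pf_w k e r i)).sub (PolyFun.const _)
  · exact PolyFun.eval_fm (pf_b' k e r j) (pf_q k e r i)
  · exact PolyFun.sum _ fun i _ =>
      (pf_a k e r i 0).mul (PolyFun.eval_fm (pf_b' k e r j) (pf_w k e r i))

theorem pf_ite {E : Type*} [AddCommGroup E] [Module ℂ E] {p : Prop} [Decidable p] {f : E → ℂ}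
    (hf : PolyFun f) : PolyFun fun u => if p then 1 else f u := by
  split_ifs
  · exact PolyFun.const 1
  · exact hf

theorem pf_ineqn : PolyFun (ineqn (k := k) (e := e) (r := r)) := by
  refine ((((PolyFun.prod _ fun i _ => pf_a k e r i 0).mul (PolyFun.prod _ fun i _ =>
    PolyFun.prod _ fun j _ => pf_ite ?_)).mul (PolyFun.prod _ fun j _ => PolyFun.sum _ fun i _ =>
      (pf_a k e r i 0).mul ?_)).mul (PolyFun.prod _ fun i _ =>
    PolyFun.prod _ fun j _ => pf_ite ?_)).mul (PolyFun.prod _ fun i _ =>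
    PolyFun.prod _ fun j _ => ?_)
  · exact PolyFun.J_fm (pf_a k e r j) (pf_q k e r) (pf_h k e r i)
  · exact PolyFun.J_fm (pf_b' k e r j) (pf_q k e r) (pf_w k e r i)
  · exact (pf_b k e r i 0).sub (pf_b k e r j 0)
  · exact ((pf_b k e r j 0).mul (pf_a k e r i 0)).sub (pf_a k e r i 1)

theorem nonempty_goodData {t : Fin r × Fin (k + 2) → ℂ} {y : Unk k e r}
    (h0 : ∀ l, eqn l (t, y) = 0) (h1 : ineqn (t, y) ≠ 0) :
    Nonempty (GoodData k e r fun i j => t (i, j)) := by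
  simp only [ineqn, mul_ne_zero_iff, Finset.prod_ne_zero_iff] at h1
  obtain ⟨⟨⟨⟨h1, h2⟩, h3⟩, h4⟩, h5⟩ := h1
  exact ⟨{
    q := fun i => fm (y.1 i)
    h := fun i => fm (y.2.1 i)
    w := fun i => fm (y.2.2.1 i)
    b := fun j => Fin.cons 1 (y.2.2.2 j)
    q_hom := fun i => isHomogeneous_fm _
    h_hom := fun i => isHomogeneous_fm _
    w_hom := fun i => isHomogeneous_fm _
    b_zero := fun j => rfl
    q_a := fun i j => h0 (.inl (i, j))
    h_a := fun i j => sub_eq_zero.1 (h0 (.inr (.inl (.inl (i, j)))))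
    w_a := fun i j => h0 (.inr (.inl (.inr (.inl (i, j)))))
    J_w := fun i j => sub_eq_zero.1 (h0 (.inr (.inl (.inr (.inr (i, j))))))
    q_b := fun i j => h0 (.inr (.inr (.inl (i, j))))
    s_b := fun j => by
      have := h0 (.inr (.inr (.inr j)))
      simpa [eqn] using this
    a_zero := fun i => h1 i (mem_univ _)
    J_h := fun i j hij => by
      have := h2 i (mem_univ _) j (mem_univ _)
      rwa [if_neg hij] at this
    J_b := fun j => by
      have := h3 j (mem_univ _)
      simpa only [J_sum, J_C_mul] using this
    b_ne := fun i j hij => by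
      have := h4 i (mem_univ _) j (mem_univ _)
      rw [if_neg hij] at this
      exact sub_ne_zero.1 this
    b_ne_a := fun i j => sub_ne_zero.1 (h5 i (mem_univ _) j (mem_univ _)) }⟩

end GenericGood

end WaringTwo

namespace WaringTwo

open Finset

variable {k e r : ℕ}

set_option maxHeartbeats 2000000 in
/-- Certificates deform: if one configuration of points has a certificate, so does a generic one.
The equations of a certificate have surjective differential in the unknowns: their differential is
block triangular, the diagonal blocks being surjective by the dual forms `h`, by `TZ_surjective`
and by the transversality of `s` to the curve at the points `b`. -/
theorem generic_good (x : Fin r × Fin (k + 2) → ℂ) (D : GoodData k e r fun i j => x (i, j)) :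
    Generic fun t : Fin r × Fin (k + 2) → ℂ => Nonempty (GoodData k e r fun i j => t (i, j)) := by
  choose cq hq using fun i => exists_fm (D.q_hom i)
  choose ch hh using fun i => exists_fm (D.h_hom i)
  choose cw hw using fun i => exists_fm (D.w_hom i)
  have hb : ∀ j, (Fin.cons 1 (Fin.tail (D.b j)) : Fin (k + 2) → ℂ) = D.b j := fun j => by
    rw [← D.b_zero j]
    exact Fin.cons_self_tail _
  let y : Unk k e r := (cq, ch, cw, fun j => Fin.tail (D.b j))
  have h0 : ∀ l, eqn l (x, y) = 0 := by
    rintro (⟨i, j⟩ | (⟨i, j⟩ | ⟨i, j⟩ | ⟨i, j⟩) | ⟨i, j⟩ | j)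
    · simp only [eqn, y, hq]; exact D.q_a i j
    · simp only [eqn, y, hh]; exact sub_eq_zero.2 (D.h_a i j)
    · simp only [eqn, y, hw]; exact D.w_a i j
    · simp only [eqn, y, hw, hq]; exact sub_eq_zero.2 (D.J_w i j)
    · simp only [eqn, y, hb, hq]; exact D.q_b i j
    · have := D.s_b j
      simp only [eqn, y, hb, hw]
      simpa using this
  have h1 : ineqn (x, y) ≠ 0 := by
    simp only [ineqn, mul_ne_zero_iff, Finset.prod_ne_zero_iff, y, hq, hh, hw, hb]
    refine ⟨⟨⟨⟨fun i _ => D.a_zero i, fun i _ j _ => ?_⟩, fun j _ => ?_⟩, fun i _ j _ => ?_⟩,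
      fun i _ j _ => sub_ne_zero.2 (D.b_ne_a i j)⟩
    · split_ifs with h
      · exact one_ne_zero
      · exact D.J_h i j h
    · have := D.J_b j
      simpa only [J_sum, J_C_mul] using this
    · split_ifs with h
      · exact one_ne_zero
      · exact sub_ne_zero.2 (D.b_ne i j h)
  obtain ⟨L, hL⟩ : ∃ L : Eqn k r → Unk k e r →ₗ[ℂ] ℂ, ∀ l v,
      HasDerivAt (fun ε : ℂ => eqn l (x, y + ε • v)) (L l v) 0 := by
    refine ⟨fun l => (fderiv ℂ (fun z => eqn l (x, z)) y : Unk k e r →L[ℂ] ℂ), fun l v => ?_⟩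
    have hd : ContDiff ℂ 1 fun z : Unk k e r => eqn l (x, z) :=
      (pf_eqn l).contDiff.comp (contDiff_const.prodMk contDiff_id)
    exact ((hd.differentiable one_ne_zero) y).hasFDerivAt.hasLineDerivAt v
  suffices hs : ∀ ρ : Eqn k r → ℂ, ∃ v, ∀ l, L l v = ρ l by
    obtain ⟨F, hF, h⟩ := generic_exists (fun l => eqn (e := e) l) pf_eqn ineqn pf_ineqn x y h0 h1
      fun ρ => by
        obtain ⟨v, hv⟩ := hs ρ
        exact ⟨v, fun l => hv l ▸ hL l v⟩
    refine ⟨F, hF, fun t ht => ?_⟩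
    obtain ⟨z, hz0, hz1⟩ := h t ht
    exact nonempty_goodData hz0 hz1
  have LA : ∀ i j δ, L (.inl (i, j)) (δ, 0, 0, 0) = evL (fun l => x (j, l)) (δ i) := by
    intro i j δ
    refine (hL _ _).unique (hasDerivAt_of_affine (evL (fun l => x (j, l)) (cq i)) _ fun ε => ?_)
    have h3 := (map_add (evL fun l => x (j, l)) (cq i) (ε • δ i))
    rw [map_smul] at h3
    exact h3
  have LB0 : ∀ i j δ δ', L (.inl (i, j)) (0, δ, δ', 0) = 0 := by
    intro i j δ δ'
    refine (hL _ _).unique (hasDerivAt_of_affine 0 _ fun ε => ?_)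
    have := h0 (.inl (i, j))
    simpa [eqn] using this
  have LB1 : ∀ i j δ δ', L (.inr (.inl (.inl (i, j)))) (0, δ, δ', 0) =
      evL (fun l => x (j, l)) (δ i) := by
    intro i j δ δ'
    refine (hL _ _).unique (hasDerivAt_of_affine 0 _ fun ε => ?_)
    have h2 := h0 (.inr (.inl (.inl (i, j))))
    have h3 := (map_add (evL fun l => x (j, l)) (ch i) (ε • δ i))
    rw [map_smul] at h3
    have h4 : evL (fun l => x (j, l)) (ch i) - (if i = j then 1 else 0) = 0 := h2
    change evL (fun l => x (j, l)) (ch i + ε • δ i) - (if i = j then 1 else 0) = _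
    rw [h3, smul_eq_mul]
    linear_combination h4
  have LB2 : ∀ i j δ δ', L (.inr (.inl (.inr (.inl (i, j))))) (0, δ, δ', 0) =
      D.TZ (δ' i) (.inl j) := by
    intro i j δ δ'
    refine (hL _ _).unique (hasDerivAt_of_affine 0 _ fun ε => ?_)
    have h2 := h0 (.inr (.inl (.inr (.inl (i, j)))))
    have h3 := (map_add (evL fun l => x (j, l)) (cw i) (ε • δ' i))
    rw [map_smul] at h3
    have h4 : evL (fun l => x (j, l)) (cw i) = 0 := h2
    change evL (fun l => x (j, l)) (cw i + ε • δ' i) = _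
    rw [h3, h4]
    rfl
  have LB3 : ∀ i j δ δ', L (.inr (.inl (.inr (.inr (i, j))))) (0, δ, δ', 0) =
      D.TZ (δ' i) (.inr j) := by
    intro i j δ δ'
    refine (hL _ _).unique (hasDerivAt_of_affine 0 _ fun ε => ?_)
    have h2 := h0 (.inr (.inl (.inr (.inr (i, j)))))
    have h3 := (map_add (JL D.q fun l => x (j, l)) (cw i) (ε • δ' i))
    rw [map_smul] at h3
    have hq' : (fun i => fm (cq i)) = D.q := funext hq
    have hq'' : ∀ ε : ℂ, (fun i => fm ((cq + ε • (0 : Fin k → Mon (k + 2) (e + 1) → ℂ)) i)) = D.q :=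
      fun ε => by rw [smul_zero, add_zero, hq']
    have h4 : J (fun i => fm (cq i)) (fm (cw i)) (fun l => x (j, l)) -
      (if i = j then 1 else 0) = 0 := h2
    rw [hq'] at h4
    change J (fun i => fm ((cq + ε • (0 : Fin k → Mon (k + 2) (e + 1) → ℂ)) i))
      (fm (cw i + ε • δ' i)) (fun l => x (j, l)) - (if i = j then 1 else 0) = _
    rw [hq'']
    change JL D.q (fun l => x (j, l)) (cw i + ε • δ' i) - (if i = j then 1 else 0) = _
    rw [h3, smul_eq_mul, zero_add]
    change _ = ε * JL D.q (fun l => x (j, l)) (δ' i)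
    change JL D.q (fun l => x (j, l)) (cw i) - (if i = j then 1 else 0) = 0 at h4
    linear_combination h4
  have LC0 : ∀ i j δ, L (.inl (i, j)) (0, 0, 0, δ) = 0 := by
    intro i j δ
    refine (hL _ _).unique (hasDerivAt_of_affine 0 _ fun ε => ?_)
    have := h0 (.inl (i, j))
    simpa [eqn] using this
  have LC1 : ∀ o δ, L (.inr (.inl o)) (0, 0, 0, δ) = 0 := by
    intro o δ
    refine (hL _ _).unique (hasDerivAt_of_affine 0 _ fun ε => ?_)
    have := h0 (.inr (.inl o))
    rcases o with ⟨i, j⟩ | ⟨i, j⟩ | ⟨i, j⟩ <;> simpa [eqn] using this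
  have hline : ∀ j (δ : Fin r → Fin (k + 1) → ℂ) (ε : ℂ),
      (Fin.cons 1 ((y + ε • (0, 0, 0, δ) : Unk k e r).2.2.2 j) : Fin (k + 2) → ℂ) =
        D.b j + ε • (Fin.cons 0 (δ j) : Fin (k + 2) → ℂ) := by
    intro j δ ε
    funext l
    refine Fin.cases ?_ (fun l => ?_) l
    · simp [D.b_zero]
    · simp [y, Fin.tail]
  have LC2 : ∀ i j δ, L (.inr (.inr (.inl (i, j)))) (0, 0, 0, δ) =
      ∑ l, δ j l * eval (D.b j) (pderiv l.succ (D.q i)) := by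
    intro i j δ
    refine (hL _ _).unique ?_
    have h2 := hasDerivAt_eval_line (D.q i) (D.b j) (Fin.cons 0 (δ j))
    rw [Fin.sum_univ_succ] at h2
    simp only [Fin.cons_zero, zero_mul, zero_add, Fin.cons_succ] at h2
    refine h2.congr_of_eventuallyEq (Filter.Eventually.of_forall fun ε => ?_)
    simp only [eqn, hline]
    simp [y, hq]
  have LC3 : ∀ j δ, L (.inr (.inr (.inr j))) (0, 0, 0, δ) =
      ∑ l, δ j l * eval (D.b j) (pderiv l.succ D.s) := by
    intro j δ
    refine (hL _ _).unique ?_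
    have h2 := hasDerivAt_eval_line D.s (D.b j) (Fin.cons 0 (δ j))
    rw [Fin.sum_univ_succ] at h2
    simp only [Fin.cons_zero, zero_mul, zero_add, Fin.cons_succ] at h2
    refine h2.congr_of_eventuallyEq (Filter.Eventually.of_forall fun ε => ?_)
    simp only [eqn, hline]
    simp [y, hw, GoodData.s]
  intro ρ
  -- the first block
  obtain ⟨vA, hA⟩ : ∃ vA, ∀ o, L (.inl o) vA = ρ (.inl o) := by
    refine ⟨(fun i => ∑ l, ρ (.inl (i, l)) • ch l, 0, 0, 0), fun ⟨i, j⟩ => ?_⟩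
    rw [LA, map_sum]
    simp only [map_smul]
    have h2 : ∀ l, evL (fun l => x (j, l)) (ch l) = if l = j then 1 else 0 := fun l => by
      rw [← D.h_a l j, ← hh]; rfl
    simp [h2]
  -- the second block
  obtain ⟨vB, hB0, hB⟩ : ∃ vB, (∀ o, L (.inl o) vB = 0) ∧
      ∀ o, L (.inr (.inl o)) vB = ρ (.inr (.inl o)) - L (.inr (.inl o)) vA := by
    choose δ' hδ' using fun i => D.TZ_surjective (Sum.elim
      (fun j => ρ (.inr (.inl (.inr (.inl (i, j))))) - L (.inr (.inl (.inr (.inl (i, j))))) vA)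
      (fun j => ρ (.inr (.inl (.inr (.inr (i, j))))) - L (.inr (.inl (.inr (.inr (i, j))))) vA))
    refine ⟨(0, fun i => ∑ l, (ρ (.inr (.inl (.inl (i, l)))) -
      L (.inr (.inl (.inl (i, l)))) vA) • ch l, δ', 0), fun ⟨i, j⟩ => LB0 _ _ _ _, ?_⟩
    rintro (⟨i, j⟩ | ⟨i, j⟩ | ⟨i, j⟩)
    · rw [LB1, map_sum]
      simp only [map_smul]
      have h2 : ∀ l, evL (fun l => x (j, l)) (ch l) = if l = j then 1 else 0 := fun l => by
        rw [← D.h_a l j, ← hh]; rfl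
      simp [h2]
    · rw [LB2, hδ']; rfl
    · rw [LB3, hδ']; rfl
  -- the third block
  obtain ⟨vC, hC0, hC1, hC⟩ : ∃ vC, (∀ o, L (.inl o) vC = 0) ∧ (∀ o, L (.inr (.inl o)) vC = 0) ∧
      ∀ o, L (.inr (.inr o)) vC = ρ (.inr (.inr o)) - L (.inr (.inr o)) (vA + vB) := by
    let M : Fin r → Matrix (Fin (k + 1)) (Fin (k + 1)) ℂ := fun b => Matrix.of fun i j =>
      eval (D.b b) (pderiv j.succ
        ((Fin.cons D.s D.q : Fin (k + 1) → MvPolynomial (Fin (k + 2)) ℂ) i))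
    have hM : ∀ j, IsUnit (M j).det := fun j => isUnit_iff_ne_zero.2 (D.J_b j)
    let τ : Fin r → Fin (k + 1) → ℂ := fun j => Fin.cons
      (ρ (.inr (.inr (.inr j))) - L (.inr (.inr (.inr j))) (vA + vB))
      (fun i => ρ (.inr (.inr (.inl (i, j)))) - L (.inr (.inr (.inl (i, j)))) (vA + vB))
    let δ : Fin r → Fin (k + 1) → ℂ := fun j => (M j)⁻¹.mulVec (τ j)
    have hδ : ∀ j, (M j).mulVec (δ j) = τ j := fun j => by
      simp only [δ, Matrix.mulVec_mulVec, Matrix.mul_nonsing_inv _ (hM j), Matrix.one_mulVec]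
    refine ⟨(0, 0, 0, δ), fun ⟨i, j⟩ => LC0 _ _ _, fun o => LC1 _ _, ?_⟩
    rintro (⟨i, j⟩ | j)
    · rw [LC2]
      have := congrFun (hδ j) i.succ
      simp only [Matrix.mulVec, dotProduct, M, Matrix.of_apply, Fin.cons_succ, τ] at this
      rw [← this]
      exact Finset.sum_congr rfl fun l _ => mul_comm _ _
    · rw [LC3]
      have := congrFun (hδ j) 0
      simp only [Matrix.mulVec, dotProduct, M, Matrix.of_apply, Fin.cons_zero, τ] at this
      rw [← this]
      exact Finset.sum_congr rfl fun l _ => mul_comm _ _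
  refine ⟨vA + vB + vC, ?_⟩
  rintro (o | o | o)
  · rw [map_add, map_add, hA, hB0, hC0]; ring
  · rw [map_add, map_add, hB, hC1]; ring
  · rw [map_add, hC]; ring

end WaringTwo

/-! ### From one certificate to generic points -/

namespace WaringTwo

open Finset

/-- A single configuration of points with a certificate makes the result true generically. -/
theorem generic_twoDec {k e r : ℕ} (hke : k * e = 2) (hr : 3 ≤ r)
    (hsat : ∀ (b : Fin r → Fin (k + 2) → ℂ) (D : GoodData k e r b), Saturated D)
    (x : Fin r × Fin (k + 2) → ℂ) (D : GoodData k e r fun i j => x (i, j)) :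
    Generic fun t : Fin r × Fin (k + 2) → ℂ =>
      TwoDec (2 * e + 2) (k + 1) r fun i j => t (i, j) := by
  obtain ⟨G, hG, h⟩ := generic_good x D
  obtain ⟨F, hF, h'⟩ := generic_transfer (moment r (k + 2) (2 * e + 2)) x
    (injAt_moment x fun v hv => D.rigid v hv) G hG
  refine ⟨F, hF, fun t ht => core hke hr _ fun b hb => ?_⟩
  have h1 := h' t ht (fun o => b o.1 o.2) ((moment_eq_iff _ _).2 fun g hg => (hb g hg).symm)
  obtain ⟨Db⟩ := h _ h1
  exact ⟨Db, hsat _ _⟩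

end WaringTwo

/-! ### Certificates on cuspidal rational curves -/

namespace WaringTwo

open Finset Lagrange

section Curve

variable {n : ℕ} (p : Fin n → Polynomial ℂ)

/-- The point with parameter `t` of a parametrized curve. -/
noncomputable def pt (t : ℂ) : Fin n → ℂ := fun i => (p i).eval t

theorem eval_pt (s : MvPolynomial (Fin n) ℂ) (t : ℂ) :
    eval (pt p t) s = (aeval p s).eval t := by
  induction s using MvPolynomial.induction_on with
  | C a => simp
  | add f g hf hg => simp [hf, hg]
  | mul_X f i hf => simp [hf, pt]

theorem derivative_aeval_curve (s : MvPolynomial (Fin n) ℂ) :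
    Polynomial.derivative (aeval p s) =
      ∑ j, aeval p (pderiv j s) * Polynomial.derivative (p j) := by
  induction s using MvPolynomial.induction_on with
  | C a => simp
  | add f g hf hg => simp [hf, hg, add_mul, Finset.sum_add_distrib]
  | mul_X f i hf =>
    have h1 : ∀ j, aeval p (pderiv j (f * X i)) * Polynomial.derivative (p j) =
        aeval p (pderiv j f) * Polynomial.derivative (p j) * p i +
          aeval p f * (aeval p (pderiv j (X i)) * Polynomial.derivative (p j)) := fun j => by
      rw [pderiv_mul, map_add, map_mul, map_mul, aeval_X]
      ring
    rw [map_mul, aeval_X, Polynomial.derivative_mul, hf, Finset.sum_congr rfl fun j _ => h1 j,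
      Finset.sum_add_distrib, ← Finset.sum_mul, ← Finset.mul_sum]
    congr 2
    rw [Finset.sum_eq_single i]
    · simp
    · intro j _ hj
      rw [pderiv_X_of_ne (Ne.symm hj), map_zero, zero_mul]
    · simp

/-- If all monomials of degree at most `N`, except `N - 1`, are restrictions of forms of degree `d`
to the curve `p`, so are all polynomials of degree at most `N` without term of degree `N - 1`. -/
theorem exists_section {d N : ℕ}
    (h : ∀ m, m ≤ N → m ≠ N - 1 → ∃ s : MvPolynomial (Fin n) ℂ, s.IsHomogeneous d ∧
      aeval p s = (Polynomial.X : Polynomial ℂ) ^ m)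
    (f : Polynomial ℂ) (hf : f.natDegree ≤ N) (hf' : f.coeff (N - 1) = 0) :
    ∃ s : MvPolynomial (Fin n) ℂ, s.IsHomogeneous d ∧ aeval p s = f := by
  classical
  have h' : ∀ m : ℕ, ∃ s : MvPolynomial (Fin n) ℂ, s.IsHomogeneous d ∧
      (m ≤ N → m ≠ N - 1 → aeval p s = (Polynomial.X : Polynomial ℂ) ^ m) := by
    intro m
    by_cases hm : m ≤ N ∧ m ≠ N - 1
    · obtain ⟨s, h1, h2⟩ := h m hm.1 hm.2
      exact ⟨s, h1, fun _ _ => h2⟩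
    · exact ⟨0, isHomogeneous_zero _ _ _, fun h1 h2 => absurd ⟨h1, h2⟩ hm⟩
  choose s hs1 hs2 using h'
  refine ⟨∑ m ∈ range (N + 1), C (f.coeff m) * s m, IsHomogeneous.sum _ _ _ fun m _ => by
    simpa using (isHomogeneous_C _ (f.coeff m)).mul (hs1 m), ?_⟩
  rw [map_sum]
  conv_rhs => rw [f.as_sum_range' (N + 1) (by omega)]
  refine Finset.sum_congr rfl fun m hm => ?_
  rw [mem_range] at hm
  rw [← Polynomial.C_mul_X_pow_eq_monomial, map_mul, aeval_C]
  by_cases h1 : m = N - 1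
  · rw [h1, hf']; simp
  · rw [hs2 m (by omega) h1]; rfl

end Curve

theorem nextCoeff_nodal {r : ℕ} (S : Finset (Fin r)) (α : Fin r → ℂ) :
    (nodal S α).nextCoeff = -∑ i ∈ S, α i := by
  rw [nodal, Polynomial.prod_X_sub_C_nextCoeff]

theorem coeff_of_monic {f : Polynomial ℂ} {N : ℕ} (hN : f.natDegree = N) (hpos : 0 < N)
    (h0 : f.nextCoeff = 0) (c : ℂ) :
    (Polynomial.C c * f).natDegree ≤ N ∧ (Polynomial.C c * f).coeff (N - 1) = 0 := by
  refine ⟨(Polynomial.natDegree_C_mul_le _ _).trans hN.le, ?_⟩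
  rw [Polynomial.nextCoeff_of_natDegree_pos (by omega), hN] at h0
  rw [Polynomial.coeff_C_mul, h0, mul_zero]

section Witness

variable {k e r : ℕ}

/-- A certificate constructed on a rational curve. The forms of degree `e + 1` and `2e + 2` restrict
to the polynomials of degree at most `r`, resp. `2r`, without second highest term. -/
theorem exists_goodData_of_curve (hke : k * e = 2) (p : Fin (k + 2) → Polynomial ℂ)
    (hp0 : p 0 = 1) (hp1 : p 1 = Polynomial.X)
    (q : Fin k → MvPolynomial (Fin (k + 2)) ℂ) (hq : ∀ i, (q i).IsHomogeneous (e + 1))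
    (hqp : ∀ i, aeval p (q i) = 0)
    (hJ : ∀ s t, J q s (pt p t) = (Polynomial.derivative (aeval p s)).eval t)
    (h1 : ∀ f : Polynomial ℂ, f.natDegree ≤ r → f.coeff (r - 1) = 0 →
      ∃ s : MvPolynomial (Fin (k + 2)) ℂ, s.IsHomogeneous (e + 1) ∧ aeval p s = f)
    (h2 : ∀ f : Polynomial ℂ, f.natDegree ≤ 2 * r → f.coeff (2 * r - 1) = 0 →
      ∃ s : MvPolynomial (Fin (k + 2)) ℂ, s.IsHomogeneous (2 * e + 2) ∧ aeval p s = f)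
    (α β : Fin r → ℂ) (hα : Function.Injective α) (hβ : Function.Injective β)
    (hαβ : ∀ i j, α i ≠ β j) (hsum : ∑ i, α i + ∑ i, β i = 0) (hσ : ∑ i, α i ≠ 0)
    (hd : ∀ i j, α j - α i + ∑ l, α l ≠ 0) (hr : 3 ≤ r) :
    ∃ x : Fin r × Fin (k + 2) → ℂ, Nonempty (GoodData k e r fun i j => x (i, j)) := by
  classical
  -- `A` and `B` have the nodes of `a` and `b` as roots; the sum of all nodes vanishes, so `A * B` has
  -- no second highest term, whereas `A` itself has one
  set σ := ∑ i, α i with hσdef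
  let A : Polynomial ℂ := nodal univ α
  let B : Polynomial ℂ := nodal univ β
  let N : Fin r → Polynomial ℂ := fun i => nodal (univ.erase i) α
  have hAm : A.Monic := nodal_monic
  have hBm : B.Monic := nodal_monic
  have hNm : ∀ i, (N i).Monic := fun i => nodal_monic
  have hAd : A.natDegree = r := by simp [A, natDegree_nodal]
  have hBd : B.natDegree = r := by simp [B, natDegree_nodal]
  have hNd : ∀ i, (N i).natDegree = r - 1 := fun i => by simp [N, natDegree_nodal]
  have hAn : A.nextCoeff = -σ := nextCoeff_nodal _ _
  have hBn : B.nextCoeff = σ := by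
    rw [nextCoeff_nodal]; linear_combination -hsum
  have hNn : ∀ i, (N i).nextCoeff = α i - σ := fun i => by
    rw [nextCoeff_nodal, Finset.sum_erase_eq_sub (mem_univ i)]; ring
  have hAα : ∀ j, A.eval (α j) = 0 := fun j => eval_nodal_at_node (mem_univ j)
  have hBβ : ∀ j, B.eval (β j) = 0 := fun j => eval_nodal_at_node (mem_univ j)
  have hAβ : ∀ j, A.eval (β j) ≠ 0 := fun j => eval_nodal_not_at_node fun i _ => (hαβ i j).symm
  have hBα : ∀ j, B.eval (α j) ≠ 0 := fun j => eval_nodal_not_at_node fun i _ => hαβ j i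
  have hA'α : ∀ j, (Polynomial.derivative A).eval (α j) ≠ 0 := fun j => by
    rw [eval_nodal_derivative_eval_node_eq (mem_univ j)]
    exact eval_nodal_not_at_node fun i hi h => (ne_of_mem_erase hi) (hα h.symm)
  have hB'β : ∀ j, (Polynomial.derivative B).eval (β j) ≠ 0 := fun j => by
    rw [eval_nodal_derivative_eval_node_eq (mem_univ j)]
    exact eval_nodal_not_at_node fun i hi h => (ne_of_mem_erase hi) (hβ h.symm)
  have hNα : ∀ i, (N i).eval (α i) ≠ 0 := fun i =>
    eval_nodal_not_at_node fun l hl h => (ne_of_mem_erase hl) (hα h.symm)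
  have hNα' : ∀ i j, i ≠ j → (N i).eval (α j) = 0 := fun i j hij =>
    eval_nodal_at_node (mem_erase.2 ⟨hij.symm, mem_univ j⟩)
  have hN'α : ∀ i j, i ≠ j → (Polynomial.derivative (N i)).eval (α j) ≠ 0 := fun i j hij => by
    rw [eval_nodal_derivative_eval_node_eq (mem_erase.2 ⟨hij.symm, mem_univ j⟩)]
    exact eval_nodal_not_at_node fun l hl h => (ne_of_mem_erase hl) (hα h.symm)
  -- the restriction of `s`
  obtain ⟨s, hs, hsp⟩ := h2 (A * B) (by
      rw [hAm.natDegree_mul hBm, hAd, hBd]; omega) (by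
      have := (coeff_of_monic (f := A * B) (N := 2 * r)
        (by rw [hAm.natDegree_mul hBm, hAd, hBd]; omega) (by omega)
        (by rw [hAm.nextCoeff_mul hBm, hAn, hBn]; ring) 1).2
      simpa using this)
  have hs'α : ∀ j, (Polynomial.derivative (A * B)).eval (α j) ≠ 0 := fun j => by
    simp only [Polynomial.derivative_mul, Polynomial.eval_add, Polynomial.eval_mul, hAα, zero_mul,
      add_zero]
    exact mul_ne_zero (hA'α j) (hBα j)
  have hs'β : ∀ j, (Polynomial.derivative (A * B)).eval (β j) ≠ 0 := fun j => by
    simp only [Polynomial.derivative_mul, Polynomial.eval_add, Polynomial.eval_mul, hBβ, mul_zero,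
      zero_add]
    exact mul_ne_zero (hAβ j) (hB'β j)
  -- the scaling of the points makes `J q s = (a j)₀`
  choose μ hμ using fun j => IsAlgClosed.exists_pow_nat_eq
    ((Polynomial.derivative (A * B)).eval (α j))⁻¹ (n := 2 * e + 2) (by omega)
  have hμ0 : ∀ j, μ j ≠ 0 := fun j h => by
    have := hμ j
    rw [h, zero_pow (by omega)] at this
    exact inv_ne_zero (hs'α j) this.symm
  let x : Fin r × Fin (k + 2) → ℂ := fun o => μ o.1 * pt p (α o.1) o.2
  have hx : ∀ j, (fun l => x (j, l)) = μ j • pt p (α j) := fun j => rfl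
  have hx0 : ∀ j, x (j, 0) = μ j := fun j => by simp [x, pt, hp0]
  have hev : ∀ {d : ℕ} {f : MvPolynomial (Fin (k + 2)) ℂ} (_ : f.IsHomogeneous d) (j : Fin r),
      eval (fun l => x (j, l)) f = μ j ^ d * (aeval p f).eval (α j) := fun hf j => by
    rw [hx, eval_smul_of_homogeneous hf, eval_pt]
  have hJh : ∀ {f : MvPolynomial (Fin (k + 2)) ℂ} (_ : f.IsHomogeneous (e + 1)) (j : Fin r),
      J q f (fun l => x (j, l)) =
        μ j ^ (e + k * e) * (Polynomial.derivative (aeval p f)).eval (α j) := fun hf j => by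
    rw [hx, J_smul _ _ hq hf, hJ]
  have hJw : ∀ {f : MvPolynomial (Fin (k + 2)) ℂ} (_ : f.IsHomogeneous (2 * e + 2)) (j : Fin r),
      J q f (fun l => x (j, l)) =
        μ j ^ (2 * e + 3) * (Polynomial.derivative (aeval p f)).eval (α j) := fun hf j => by
    rw [hx, J_smul (δ := 2 * e + 1) _ _ hq hf, hJ, hke]
  -- the dual forms
  choose h hh hhp using fun i => h1
    (Polynomial.C ((μ i ^ (e + 1) * ((N i).eval (α i) * σ))⁻¹) *
      (N i * (Polynomial.X - Polynomial.C (α i - σ)))) (by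
      refine (coeff_of_monic ?_ (by omega) ?_ _).1
      · rw [(hNm i).natDegree_mul (Polynomial.monic_X_sub_C _), hNd, Polynomial.natDegree_X_sub_C]
        omega
      · rw [(hNm i).nextCoeff_mul (Polynomial.monic_X_sub_C _), hNn, Polynomial.nextCoeff_X_sub_C]
        ring) (by
      refine (coeff_of_monic ?_ (by omega) ?_ _).2
      · rw [(hNm i).natDegree_mul (Polynomial.monic_X_sub_C _), hNd, Polynomial.natDegree_X_sub_C]
        omega
      · rw [(hNm i).nextCoeff_mul (Polynomial.monic_X_sub_C _), hNn, Polynomial.nextCoeff_X_sub_C]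
        ring)
  -- the forms with prescribed derivatives
  let κ : Fin r → ℂ := fun i => (μ i ^ (2 * e + 3) *
    ((Polynomial.derivative A).eval (α i) * ((N i).eval (α i) * (2 * σ))))⁻¹
  have hG : ∀ i, ∃ g : MvPolynomial (Fin (k + 2)) ℂ, g.IsHomogeneous (2 * e + 2) ∧
      aeval p g = Polynomial.C (κ i) *
        (A * (N i * (Polynomial.X - Polynomial.C (α i - 2 * σ)))) := fun i => by
    have hm := (hNm i).mul (Polynomial.monic_X_sub_C (α i - 2 * σ))
    have hd' : (A * (N i * (Polynomial.X - Polynomial.C (α i - 2 * σ)))).natDegree = 2 * r := by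
      rw [hAm.natDegree_mul hm, (hNm i).natDegree_mul (Polynomial.monic_X_sub_C _), hNd, hAd,
        Polynomial.natDegree_X_sub_C]
      omega
    have hn : (A * (N i * (Polynomial.X - Polynomial.C (α i - 2 * σ)))).nextCoeff = 0 := by
      rw [hAm.nextCoeff_mul hm, (hNm i).nextCoeff_mul (Polynomial.monic_X_sub_C _), hNn, hAn,
        Polynomial.nextCoeff_X_sub_C]
      ring
    exact h2 _ (coeff_of_monic hd' (by omega) hn _).1 (coeff_of_monic hd' (by omega) hn _).2
  choose g hg hgp using hG
  have hga : ∀ i j, (aeval p (g i)).eval (α j) = 0 := fun i j => by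
    simp [hgp, hAα]
  have hg' : ∀ i j, μ j ^ (2 * e + 3) * (Polynomial.derivative (aeval p (g i))).eval (α j) =
      if i = j then 1 else 0 := fun i j => by
    rw [hgp]
    simp only [Polynomial.derivative_mul, Polynomial.eval_add, Polynomial.eval_mul, hAα, zero_mul,
      add_zero, Polynomial.derivative_C, Polynomial.eval_C,
      Polynomial.eval_sub, Polynomial.eval_X, zero_add]
    split_ifs with hij
    · subst hij
      have e1 := hA'α i
      have e2 := hNα i
      have e3 := hμ0 i
      simp only [κ]
      field_simp
      ring
    · rw [hNα' i j hij]; ring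
  let T : MvPolynomial (Fin (k + 2)) ℂ := s - ∑ i, C (μ i) * g i
  have hT : T.IsHomogeneous (2 * e + 2) := hs.sub (IsHomogeneous.sum _ _ _ fun i _ => by
    simpa using (isHomogeneous_C _ (μ i)).mul (hg i))
  have hTa : ∀ j, (aeval p T).eval (α j) = 0 := fun j => by
    simp [T, hsp, hAα, hga, Polynomial.eval_finsetSum]
  have hTd : ∀ j, μ j ^ (2 * e + 3) * (Polynomial.derivative (aeval p T)).eval (α j) = 0 :=
      fun j => by
    have e1 : (Polynomial.derivative (aeval p T)).eval (α j) =
        (Polynomial.derivative (A * B)).eval (α j) -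
          ∑ i, μ i * (Polynomial.derivative (aeval p (g i))).eval (α j) := by
      simp only [T, map_sub, map_sum, map_mul, hsp, aeval_C, Polynomial.eval_sub,
        Polynomial.eval_finsetSum]
      congr 1
      refine Finset.sum_congr rfl fun i _ => ?_
      change (Polynomial.derivative (Polynomial.C (μ i) * _)).eval _ = _
      simp
    rw [e1, mul_sub, Finset.mul_sum]
    have e2 : ∀ i, μ j ^ (2 * e + 3) *
        (μ i * (Polynomial.derivative (aeval p (g i))).eval (α j)) =
          if i = j then μ i else 0 := fun i => by
      rw [mul_left_comm, hg', mul_ite, mul_one, mul_zero]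
    rw [Finset.sum_congr rfl fun i _ => e2 i, Finset.sum_ite_eq' univ j μ, if_pos (mem_univ j),
      show 2 * e + 3 = 2 * e + 2 + 1 from rfl, pow_succ, hμ]
    have e3 := hs'α j
    field_simp
    ring
  have hr0 : (r : ℂ) ≠ 0 := by
    exact_mod_cast (show r ≠ 0 by omega)
  let w : Fin r → MvPolynomial (Fin (k + 2)) ℂ := fun i => g i + C ((r * μ i)⁻¹) * T
  have hw : ∀ i, (w i).IsHomogeneous (2 * e + 2) := fun i => (hg i).add (by
    simpa using (isHomogeneous_C _ ((r * μ i)⁻¹)).mul hT)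
  have hws : ∑ i, C (x (i, 0)) * w i = s := by
    simp only [hx0, w, mul_add, Finset.sum_add_distrib]
    have e1 : ∀ i, C (μ i) * (C ((r * μ i)⁻¹) * T) = C ((r : ℂ)⁻¹) * T := fun i => by
      rw [← mul_assoc, ← C_mul]
      congr 2
      have := hμ0 i
      field_simp
    rw [Finset.sum_congr rfl fun i _ => e1 i]
    simp only [Finset.sum_const, card_univ, Fintype.card_fin, nsmul_eq_mul]
    rw [← mul_assoc, show ((r : MvPolynomial (Fin (k + 2)) ℂ)) = C (r : ℂ) by simp, ← C_mul,
      mul_inv_cancel₀ hr0, C_1, one_mul]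
    simp [T]
  have hb : ∀ j, pt p (β j) 0 = 1 := fun j => by simp [pt, hp0]
  have hb1 : ∀ j, pt p (β j) 1 = β j := fun j => by simp [pt, hp1]
  refine ⟨x, ⟨{
    q := q, h := h, w := w, b := fun j => pt p (β j), q_hom := hq, h_hom := hh, w_hom := hw
    b_zero := hb
    q_a := fun i j => by rw [hev (hq i), hqp]; simp
    h_a := fun i j => ?_
    w_a := fun i j => by
      rw [hev (hw i)]
      simp [w, hga, hTa]
    J_w := fun i j => ?_
    q_b := fun i j => by rw [eval_pt, hqp]; simp
    s_b := fun j => ?_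
    a_zero := fun i => by rw [hx0]; exact hμ0 i
    J_h := fun i j hij => ?_
    J_b := fun j => ?_
    b_ne := fun i j hij => by rw [hb1, hb1]; exact fun h => hij (hβ h)
    b_ne_a := fun i j => ?_ }⟩⟩
  · rw [hev (hh i), hhp]
    simp only [Polynomial.eval_mul, Polynomial.eval_C, Polynomial.eval_sub, Polynomial.eval_X]
    split_ifs with hij
    · subst hij
      have e2 := hNα i
      have e3 := hμ0 i
      field_simp
      ring
    · rw [hNα' i j hij]; ring
  · rw [hJw (hw i)]
    simp only [w, map_add, Polynomial.eval_add, mul_add, hg']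
    rw [map_mul, aeval_C]
    change _ + _ * (Polynomial.derivative (Polynomial.C _ * _)).eval _ = _
    rw [Polynomial.derivative_C_mul, Polynomial.eval_mul, mul_left_comm, hTd]
    simp
  · rw [hws, eval_pt, hsp, Polynomial.eval_mul, hBβ, mul_zero]
  · rw [hJh (hh i), hhp]
    simp only [Polynomial.derivative_mul, Polynomial.eval_add, Polynomial.eval_mul, hNα' i j hij,
      Polynomial.derivative_C, Polynomial.eval_C, zero_mul,
      add_zero, Polynomial.eval_sub, Polynomial.eval_X, zero_add]
    refine mul_ne_zero (pow_ne_zero _ (hμ0 j)) (mul_ne_zero (inv_ne_zero (mul_ne_zero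
      (pow_ne_zero _ (hμ0 i)) (mul_ne_zero (hNα i) hσ))) (mul_ne_zero (hN'α i j hij) ?_))
    have := hd i j
    intro h0
    exact this (by linear_combination h0)
  · rw [hws, hJ, hsp]
    exact hs'β j
  · rw [hb1, hx0]
    have : x (i, 1) = μ i * α i := by simp [x, pt, hp1]
    rw [this, mul_comm]
    exact fun h => hαβ i j (mul_left_cancel₀ (hμ0 i) h).symm

end Witness

end WaringTwo

/-! ### The cases (6, 2, 9) and (4, 3, 8) -/

namespace WaringTwo

open Finset Lagrange

/-- The nodes `1, …, r` for the points `a`. -/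
noncomputable def nodeA (r : ℕ) (i : Fin r) : ℂ := (i : ℕ) + 1

/-- The nodes `-1, …, -r` for the points `b`. -/
noncomputable def nodeB (r : ℕ) (i : Fin r) : ℂ := -((i : ℕ) + 1)

theorem nodeA_injective (r : ℕ) : Function.Injective (nodeA r) := fun i j h => by
  have : ((i : ℕ) : ℂ) = (j : ℕ) := add_right_cancel h
  exact Fin.ext (by exact_mod_cast this)

theorem nodeB_injective (r : ℕ) : Function.Injective (nodeB r) := fun _ _ h =>
  nodeA_injective r (neg_injective h)

theorem nodeA_ne_nodeB (r : ℕ) (i j : Fin r) : nodeA r i ≠ nodeB r j := fun h => by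
  have h1 : ((i : ℕ) : ℂ) + 1 + ((j : ℕ) + 1) = 0 := by
    simp only [nodeA, nodeB] at h
    linear_combination h
  have h2 : (((i : ℕ) + 1 + ((j : ℕ) + 1) : ℕ) : ℂ) = 0 := by push_cast; exact h1
  exact absurd (Nat.cast_eq_zero.1 h2) (by omega)

theorem node_sum (r : ℕ) : ∑ i, nodeA r i + ∑ i, nodeB r i = 0 := by
  rw [← Finset.sum_add_distrib]
  simp [nodeA, nodeB]

theorem sum_nodeA_ne {r : ℕ} (i j : Fin r) (N : ℕ) (hN : ∑ i, nodeA r i = N) (hr : r < N) :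
    nodeA r j - nodeA r i + ∑ l, nodeA r l ≠ 0 := by
  rw [hN]
  intro h
  have h1 : (((j : ℕ) + N : ℕ) : ℂ) = ((i : ℕ) : ℂ) := by
    simp only [nodeA] at h
    push_cast
    linear_combination h
  have h2 := Nat.cast_injective h1
  omega

theorem isHomogeneous_X_pow {n : ℕ} (i : Fin n) (m : ℕ) :
    (X i ^ m : MvPolynomial (Fin n) ℂ).IsHomogeneous m := by
  simpa using (isHomogeneous_X ℂ i).pow m

theorem J_one (q : Fin 1 → MvPolynomial (Fin 3) ℂ) (s : MvPolynomial (Fin 3) ℂ) (x : Fin 3 → ℂ) :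
    J q s x = eval x (pderiv 1 s) * eval x (pderiv 2 (q 0)) -
      eval x (pderiv 2 s) * eval x (pderiv 1 (q 0)) := by
  rw [J, Jac, Matrix.det_fin_two]
  rfl

theorem J_two (q : Fin 2 → MvPolynomial (Fin 4) ℂ) (s : MvPolynomial (Fin 4) ℂ) (x : Fin 4 → ℂ) :
    J q s x =
      eval x (pderiv 1 s) * (eval x (pderiv 2 (q 0)) * eval x (pderiv 3 (q 1)) -
        eval x (pderiv 3 (q 0)) * eval x (pderiv 2 (q 1))) -
      eval x (pderiv 2 s) * (eval x (pderiv 1 (q 0)) * eval x (pderiv 3 (q 1)) -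
        eval x (pderiv 3 (q 0)) * eval x (pderiv 1 (q 1))) +
      eval x (pderiv 3 s) * (eval x (pderiv 1 (q 0)) * eval x (pderiv 2 (q 1)) -
        eval x (pderiv 2 (q 0)) * eval x (pderiv 1 (q 1))) := by
  rw [J, Jac, Matrix.det_fin_three]
  change eval x (pderiv 1 s) * eval x (pderiv 2 (q 0)) * eval x (pderiv 3 (q 1)) -
    eval x (pderiv 1 s) * eval x (pderiv 3 (q 0)) * eval x (pderiv 2 (q 1)) -
    eval x (pderiv 2 s) * eval x (pderiv 1 (q 0)) * eval x (pderiv 3 (q 1)) +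
    eval x (pderiv 2 s) * eval x (pderiv 3 (q 0)) * eval x (pderiv 1 (q 1)) +
    eval x (pderiv 3 s) * eval x (pderiv 1 (q 0)) * eval x (pderiv 2 (q 1)) -
    eval x (pderiv 3 s) * eval x (pderiv 2 (q 0)) * eval x (pderiv 1 (q 1)) = _
  ring

/-- The witness lies on the cuspidal cubic `(1 : t : t³)`. -/
theorem generic_six_two_nine :
    Generic fun t : Fin 9 × Fin 3 → ℂ => TwoDec 6 2 9 fun i j => t (i, j) := by
  let p : Fin 3 → Polynomial ℂ := ![1, Polynomial.X, Polynomial.X ^ 3]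
  let q : Fin 1 → MvPolynomial (Fin 3) ℂ := fun _ => X 2 * X 0 ^ 2 - X 1 ^ 3
  have key : ∀ d m : ℕ, m ≤ 3 * d → m ≠ 3 * d - 1 →
      ∃ s : MvPolynomial (Fin 3) ℂ, s.IsHomogeneous d ∧
        aeval p s = (Polynomial.X : Polynomial ℂ) ^ m := by
    intro d m h1 h2
    refine ⟨X 0 ^ (d - m % 3 - m / 3) * X 1 ^ (m % 3) * X 2 ^ (m / 3), ?_, ?_⟩
    · convert ((isHomogeneous_X_pow 0 _).mul (isHomogeneous_X_pow 1 _)).mul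
        (isHomogeneous_X_pow 2 _) using 1
      omega
    · simp only [map_mul, map_pow, aeval_X, p, Matrix.cons_val_zero, Matrix.cons_val_one,
        Matrix.cons_val, one_pow, one_mul, ← pow_mul, ← pow_add]
      congr 1
      omega
  have hsum : ∑ i, nodeA 9 i = (45 : ℕ) := by
    simp [nodeA, Fin.sum_univ_succ]; norm_num
  have hJ : ∀ s t, J q s (pt p t) = (Polynomial.derivative (aeval p s)).eval t := by
    intro s t
    have e1 : eval (pt p t) (pderiv 1 (q 0)) = -3 * t ^ 2 := by
      simp [q, pderiv_X, pt, p]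
    have e2 : eval (pt p t) (pderiv 2 (q 0)) = 1 := by
      simp [q, pderiv_X, pt, p]
    have d0 : (Polynomial.derivative (p 0)).eval t = 0 := by simp [p]
    have d1 : (Polynomial.derivative (p 1)).eval t = 1 := by simp [p]
    have d2 : (Polynomial.derivative (p 2)).eval t = 3 * t ^ 2 := by
      simp [p]; norm_num
    rw [derivative_aeval_curve, J_one, e1, e2, Fin.sum_univ_three]
    simp only [eval_pt, Polynomial.eval_add, Polynomial.eval_mul, d0, d1, d2]
    ring
  obtain ⟨x, ⟨D⟩⟩ := exists_goodData_of_curve (k := 1) (e := 2) (r := 9) (by norm_num) p rfl rfl q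
    (fun _ => ((isHomogeneous_X ℂ _).mul (isHomogeneous_X_pow 0 2)).sub (isHomogeneous_X_pow 1 3))
    (fun _ => by simp [q, p])
    hJ
    (fun f hf hf' => exists_section p (N := 9) (fun m => key 3 m) f hf hf')
    (fun f hf hf' => exists_section p (N := 18) (fun m => key 6 m) f hf hf')
    (nodeA 9) (nodeB 9) (nodeA_injective 9) (nodeB_injective 9) (nodeA_ne_nodeB 9) (node_sum 9)
    (by rw [hsum]; norm_num) (fun i j => sum_nodeA_ne i j 45 hsum (by norm_num)) (by norm_num)
  have h := generic_twoDec (k := 1) (e := 2) (r := 9) (by norm_num) (by norm_num)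
    (fun b D => saturated_one D) x D
  exact h

/-- The witness lies on the cuspidal quartic `(1 : t : t² : t⁴)`, the intersection of two quadrics. -/
theorem generic_four_three_eight :
    Generic fun t : Fin 8 × Fin 4 → ℂ => TwoDec 4 3 8 fun i j => t (i, j) := by
  let p : Fin 4 → Polynomial ℂ :=
    ![1, Polynomial.X, Polynomial.X ^ 2, Polynomial.X ^ 4]
  let q : Fin 2 → MvPolynomial (Fin 4) ℂ :=
    ![X 1 ^ 2 - X 0 * X 2, X 2 ^ 2 - X 0 * X 3]
  have key : ∀ d m : ℕ, m ≤ 4 * d → m ≠ 4 * d - 1 →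
      ∃ s : MvPolynomial (Fin 4) ℂ, s.IsHomogeneous d ∧
        aeval p s = (Polynomial.X : Polynomial ℂ) ^ m := by
    intro d m h1 h2
    refine ⟨X 0 ^ (d - m % 2 - m % 4 / 2 - m / 4) * X 1 ^ (m % 2) * X 2 ^ (m % 4 / 2) *
      X 3 ^ (m / 4), ?_, ?_⟩
    · convert (((isHomogeneous_X_pow 0 _).mul (isHomogeneous_X_pow 1 _)).mul
        (isHomogeneous_X_pow 2 _)).mul (isHomogeneous_X_pow 3 _) using 1
      omega
    · simp only [map_mul, map_pow, aeval_X, p, Matrix.cons_val_zero, Matrix.cons_val_one,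
        Matrix.cons_val, one_pow, one_mul, ← pow_mul, ← pow_add]
      congr 1
      omega
  have hsum : ∑ i, nodeA 8 i = (36 : ℕ) := by
    simp [nodeA, Fin.sum_univ_succ]; norm_num
  have hJ : ∀ s t, J q s (pt p t) = (Polynomial.derivative (aeval p s)).eval t := by
    intro s t
    have e1 : eval (pt p t) (pderiv 1 (q 0)) = 2 * t := by
      simp [q, pderiv_X, pt, p]
    have e2 : eval (pt p t) (pderiv 2 (q 0)) = -1 := by
      simp [q, pderiv_X, pt, p]
    have e3 : eval (pt p t) (pderiv 3 (q 0)) = 0 := by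
      simp [q, pderiv_X, p]
    have e4 : eval (pt p t) (pderiv 1 (q 1)) = 0 := by
      simp [q, pderiv_X, p]
    have e5 : eval (pt p t) (pderiv 2 (q 1)) = 2 * t ^ 2 := by
      simp [q, pderiv_X, pt, p]
    have e6 : eval (pt p t) (pderiv 3 (q 1)) = -1 := by
      simp [q, pderiv_X, pt, p]
    have d0 : (Polynomial.derivative (p 0)).eval t = 0 := by simp [p]
    have d1 : (Polynomial.derivative (p 1)).eval t = 1 := by simp [p]
    have d2 : (Polynomial.derivative (p 2)).eval t = 2 * t := by
      simp [p]; norm_num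
    have d3 : (Polynomial.derivative (p 3)).eval t = 4 * t ^ 3 := by
      simp [p]; norm_num
    rw [derivative_aeval_curve, J_two, e1, e2, e3, e4, e5, e6, Fin.sum_univ_four]
    simp only [eval_pt, Polynomial.eval_add, Polynomial.eval_mul, d0, d1, d2, d3]
    ring
  obtain ⟨x, ⟨D⟩⟩ := exists_goodData_of_curve (k := 2) (e := 1) (r := 8) (by norm_num) p rfl rfl q
    (fun i => by
      fin_cases i
      · exact (isHomogeneous_X_pow 1 2).sub ((isHomogeneous_X ℂ 0).mul (isHomogeneous_X ℂ 2))
      · exact (isHomogeneous_X_pow 2 2).sub ((isHomogeneous_X ℂ 0).mul (isHomogeneous_X ℂ 3)))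
    (fun i => by
      fin_cases i
      · simp [q, p]
      · simp [q, p]; ring)
    hJ
    (fun f hf hf' => exists_section p (N := 8) (fun m => key 2 m) f hf hf')
    (fun f hf hf' => exists_section p (N := 16) (fun m => key 4 m) f hf hf')
    (nodeA 8) (nodeB 8) (nodeA_injective 8) (nodeB_injective 8) (nodeA_ne_nodeB 8) (node_sum 8)
    (by rw [hsum]; norm_num) (fun i j => sum_nodeA_ne i j 36 hsum (by norm_num)) (by norm_num)
  have h := generic_twoDec (k := 2) (e := 1) (r := 8) (by norm_num) (by norm_num)
    (fun b D => saturated_two D) x D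
  exact h

end WaringTwo

/-! ### Cubic forms: tangent spaces -/

namespace WaringTwo

open Finset

theorem sum_nine {M : Type*} [AddCommMonoid M] (f : Fin 9 → M) :
    ∑ i, f i = f 0 + f 1 + f 2 + f 3 + f 4 + f 5 + f 6 + f 7 + f 8 := by
  rw [Fin.sum_univ_castSucc, Fin.sum_univ_eight]
  rfl

/-- Nine points of `ℂ⁶` at which the third powers have independent tangent spaces. -/
def tpts : Fin 9 → Fin 6 → ℂ :=
  ![![1, 0, 0, 0, 0, 0], ![0, 1, 0, 0, 0, 0], ![0, 0, 1, 0, 0, 0], ![0, 0, 0, 1, 0, 0],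
    ![0, 0, 0, 0, 1, 0], ![0, 0, 0, 0, 0, 1], ![1, 1, 1, 1, 1, 1], ![1, 1, 0, 1, 0, 2],
    ![2, 1, 2, 0, 1, 0]]

/-- The tangent spaces to the variety of cubes at the points `tpts` are independent, in terms of
the coefficients of a vanishing sum of tangent vectors. -/
theorem tpts_rigid_aux (v : Fin 9 → Fin 6 → ℂ)
    (h : ∀ i j k, ∑ l, (v l i * tpts l j * tpts l k + tpts l i * v l j * tpts l k +
      tpts l i * tpts l j * v l k) = 0) : v = 0 := by
  -- the coefficients of the squarefree cubic monomials involve only the last three points: a linear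
  -- system of 20 equations in 18 unknowns, with an explicit left inverse
  have H012 := h 0 1 2
  have H013 := h 0 1 3
  have H014 := h 0 1 4
  have H015 := h 0 1 5
  have H023 := h 0 2 3
  have H024 := h 0 2 4
  have H025 := h 0 2 5
  have H034 := h 0 3 4
  have H035 := h 0 3 5
  have H045 := h 0 4 5
  have H123 := h 1 2 3
  have H124 := h 1 2 4
  have H125 := h 1 2 5
  have H134 := h 1 3 4
  have H135 := h 1 3 5
  have H145 := h 1 4 5
  have H234 := h 2 3 4
  have H235 := h 2 3 5
  have H245 := h 2 4 5
  have H345 := h 3 4 5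
  simp [sum_nine, tpts] at H012 H013 H014 H015 H023 H024 H025 H034 H035 H045 H123 H124 H125 H134 H135 H145 H234 H235 H245 H345
  have v60 : v 6 0 = 0 := by
    linear_combination (-2) * H023 + (4) * H034 + (-1) * H045 + (8/3) * H123 + (-10/3) * H134 + (2/3) * H145 + (-1) * H234 + (-1/3) * H235 + (2/3) * H245
  have v61 : v 6 1 = 0 := by
    linear_combination (-1) * H023 + (2) * H034 + (-1) * H045 + (5/3) * H123 + (-4/3) * H134 + (2/3) * H145 + (-1) * H234 + (-1/3) * H235 + (2/3) * H245
  have v62 : v 6 2 = 0 := by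
    linear_combination (-2) * H023 + (2) * H034 + (8/3) * H123 + (-10/3) * H134 + (2/3) * H145 + (1) * H234 + (-1/3) * H235 + (-1/3) * H245
  have v63 : v 6 3 = 0 := by
    linear_combination (2) * H023 + (-1) * H025 + (-4) * H034 + (3) * H045 + (-4/3) * H123 + (14/3) * H134 + (-10/3) * H145 + (-1) * H234 + (2/3) * H235 + (2/3) * H245
  have v64 : v 6 4 = 0 := by
    linear_combination (-2) * H023 + (1) * H025 + (4) * H034 + (-3) * H045 + (2/3) * H123 + (-10/3) * H134 + (8/3) * H145 + (1) * H234 + (-1/3) * H235 + (-1/3) * H245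
  have v65 : v 6 5 = 0 := by
    linear_combination (2) * H023 + (-1) * H025 + (-2) * H034 + (1) * H045 + (-4/3) * H123 + (8/3) * H134 + (-4/3) * H145 + (-2) * H234 + (2/3) * H235 + (5/3) * H245
  have v70 : v 7 0 = 0 := by
    linear_combination (1/3) * H013 + (1/6) * H015 + (1/6) * H023 + (1/6) * H025 + (-1) * H034 + (1/6) * H035 + (-5/6) * H123 + (1/3) * H134 + (-1/3) * H135 + (1/3) * H145 + (1) * H234 + (1/6) * H235 + (-2/3) * H245
  have v71 : v 7 1 = 0 := by
    linear_combination (1/3) * H013 + (1/6) * H015 + (-1/3) * H023 + (1/6) * H025 + (-1/3) * H035 + (-1/3) * H123 + (-2/3) * H134 + (1/6) * H135 + (1/3) * H145 + (1) * H234 + (1/6) * H235 + (-2/3) * H245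
  have v72 : v 7 2 = 0 := by
    linear_combination (-1) * H023 + (1) * H025 + (2) * H034 + (-2) * H045 + (-2) * H134 + (2) * H145 + (1) * H234 + (-1) * H245
  have v73 : v 7 3 = 0 := by
    linear_combination (1/3) * H013 + (-1/3) * H015 + (-5/6) * H023 + (2/3) * H025 + (1) * H034 + (1/6) * H035 + (-1) * H045 + (1/6) * H123 + (-5/3) * H134 + (1/6) * H135 + (4/3) * H145 + (1) * H234 + (-1/3) * H235 + (-2/3) * H245
  have v74 : v 7 4 = 0 := by
    linear_combination (-1) * H034 + (1) * H045 + (1) * H234 + (-1) * H245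
  have v75 : v 7 5 = 0 := by
    linear_combination (-4/3) * H013 + (1/3) * H015 + (-2/3) * H023 + (1/3) * H025 + (2) * H034 + (1/3) * H035 + (-1) * H045 + (4/3) * H123 + (-4/3) * H134 + (1/3) * H135 + (2/3) * H145 + (-2/3) * H235 + (-1/3) * H245
  have v80 : v 8 0 = 0 := by
    linear_combination (1/6) * H012 + (1/3) * H014 + (1/3) * H023 + (1/6) * H024 + (-1) * H034 + (-1/2) * H123 + (-2/3) * H124 + (2/3) * H134 + (1/2) * H234
  have v81 : v 8 1 = 0 := by
    linear_combination (1/12) * H012 + (1/6) * H014 + (7/6) * H023 + (-1/6) * H024 + (-1/4) * H025 + (-2) * H034 + (1) * H045 + (-5/4) * H123 + (1/6) * H124 + (11/6) * H134 + (-1) * H145 + (1/4) * H235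
  have v82 : v 8 2 = 0 := by
    linear_combination (1/6) * H012 + (-2/3) * H014 + (1/3) * H023 + (1/6) * H024 + (-1/2) * H123 + (1/3) * H124 + (2/3) * H134 + (-1/2) * H234
  have v83 : v 8 3 = 0 := by
    linear_combination (1) * H023 + (-1) * H034 + (-1) * H123 + (1) * H134
  have v84 : v 8 4 = 0 := by
    linear_combination (-1/6) * H012 + (1/6) * H014 + (7/6) * H023 + (1/12) * H024 + (-1/4) * H025 + (-2) * H034 + (1) * H045 + (-1) * H123 + (1/6) * H124 + (11/6) * H134 + (-1) * H145 + (-1/4) * H234 + (1/4) * H235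
  have v85 : v 8 5 = 0 := by
    linear_combination (1) * H023 + (-2) * H034 + (1) * H045 + (-1) * H123 + (2) * H134 + (-1) * H145
  have v6 : v 6 = 0 := by funext j; fin_cases j <;> assumption
  have v7 : v 7 = 0 := by funext j; fin_cases j <;> assumption
  have v8 : v 8 = 0 := by funext j; fin_cases j <;> assumption
  -- the first six points are unit vectors, treated by the monomials `xᵢ²xⱼ`
  have hi : ∀ i j : Fin 6, v (Fin.castLE (by norm_num) i) j = 0 := by
    intro i j
    have h1 := h i i j
    rw [sum_nine, v6, v7, v8] at h1
    fin_cases i <;> fin_cases j <;> simp [tpts] at h1 ⊢ <;>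
      first | linear_combination h1 | linear_combination h1 / 3
  funext l
  rcases lt_or_ge (l : ℕ) 6 with hl | hl
  · exact funext fun j => hi ⟨l, hl⟩ j
  · fin_cases l <;> first | exact v6 | exact v7 | exact v8 | simp at hl

theorem tpts_injAt : InjAt (moment 9 6 3) fun x => tpts x.1 x.2 := by
  refine injAt_moment _ fun v hv => tpts_rigid_aux v fun i j k => ?_
  have h1 := hv (X i * X j * X k) (by
    simpa using ((isHomogeneous_X ℂ i).mul (isHomogeneous_X ℂ j)).mul (isHomogeneous_X ℂ k))
  rw [← h1]
  refine Finset.sum_congr rfl fun l _ => ?_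
  simp only [Derivation.leibniz, pderiv_X, Pi.single_apply, smul_eq_mul, mul_ite, mul_one,
    mul_zero, map_add, map_mul, eval_X, apply_ite (eval _), map_zero, mul_add,
    Finset.sum_add_distrib, Finset.sum_ite_eq, Finset.mem_univ, if_true]
  ring

/-- For a generic sum of nine cubes in six variables, a cubic hypersurface singular at the points
of one decomposition is singular at the points of all the others. -/
theorem generic_cubic_terracini : Generic fun t : Fin 9 × Fin 6 → ℂ =>
    ∀ b : Fin 9 → Fin 6 → ℂ, (∀ g : MvPolynomial (Fin 6) ℂ, g.IsHomogeneous 3 →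
      ∑ i, eval (b i) g = ∑ i, eval (fun j => t (i, j)) g) →
    ∀ s : MvPolynomial (Fin 6) ℂ, s.IsHomogeneous 3 →
      (∀ i j, eval (fun j => t (i, j)) (pderiv j s) = 0) → ∀ i j, eval (b i) (pderiv j s) = 0 := by
  obtain ⟨F, hF, h⟩ := generic_terracini (moment 9 6 3) _ tpts_injAt
  refine ⟨F, hF, fun t ht b hb s hs hs0 i j => ?_⟩
  obtain ⟨c, rfl⟩ := exists_fm hs
  have h1 : ∀ (t : Fin 9 × Fin 6 → ℂ) i j, eval (fun j => t (i, j)) (pderiv j (fm c)) =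
      ∑ m, c m * eval t (pderiv (i, j) (moment 9 6 3 m)) := by
    intro t i j
    simp only [fm_eq_sum, map_sum, eval_pderiv_moment, pderiv_C_mul, map_mul, eval_C]
  have := h t ht (fun x => b x.1 x.2) ((moment_eq_iff _ _).2 hb) c
    (fun x => by rw [← h1 t]; exact hs0 _ _) (i, j)
  rw [← h1 fun x => b x.1 x.2] at this
  exact this

end WaringTwo

/-! ### Nine points on a Veronese surface -/

namespace WaringTwo

open Finset

/-- First index of the quadratic monomials in three variables `x₀², x₀x₁, x₀x₂, x₁², x₁x₂, x₂²`. -/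
def α : Fin 6 → Fin 3 := ![0, 0, 0, 1, 1, 2]

/-- Second index of the quadratic monomials in three variables. -/
def β : Fin 6 → Fin 3 := ![0, 1, 2, 1, 2, 2]

/-- The quadratic Veronese map `ℂ³ → ℂ⁶`. -/
def v2 (p : Fin 3 → ℂ) (j : Fin 6) : ℂ := p (α j) * p (β j)

/-- Nine points of the plane at which the parametrization of nine-tuples in `ℂ⁶` by a Veronese
surface and nine of its points is a submersion. -/
def ppts : Fin 9 → Fin 3 → ℂ :=
  ![![1, 0, 0], ![0, 1, 0], ![0, 0, 1], ![1, 1, 0], ![1, 0, 1], ![0, 1, 1], ![1, 2, 2],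
    ![1, 2, 3], ![-1, 1, -2]]

/-- The cokernel of the differential of the parametrization vanishes at `ppts`: `h1` expresses
orthogonality to the deformations of the linear map, `h2` to those of the points. -/
theorem ppts_rigid (w : Fin 9 → Fin 6 → ℂ) (h1 : ∀ j m, ∑ i, w i j * v2 (ppts i) m = 0)
    (h2 : ∀ i (u : Fin 3 → ℂ),
      ∑ j, w i j * (u (α j) * ppts i (β j) + ppts i (α j) * u (β j)) = 0) : w = 0 := by
  have H0 : ∀ j, _ := fun j => h1 j 0
  have H1 : ∀ j, _ := fun j => h1 j 1
  have H2 : ∀ j, _ := fun j => h1 j 2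
  have H3 : ∀ j, _ := fun j => h1 j 3
  have H4 : ∀ j, _ := fun j => h1 j 4
  have H5 : ∀ j, _ := fun j => h1 j 5
  simp [sum_nine, v2, α, β, ppts] at H0 H1 H2 H3 H4 H5
  -- the points `v2 (ppts i)`, `i < 6`, are a basis of `ℂ⁶`, so `h1` expresses the first six rows
  -- of `w` through the last three
  have E0 : ∀ j, w 0 j = -((-3) * w 6 j + (-4) * w 7 j + (0) * w 8 j) := fun j => by
    linear_combination H0 j - H1 j - H2 j
  have E1 : ∀ j, w 1 j = -((-2) * w 6 j + (-4) * w 7 j + (4) * w 8 j) := fun j => by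
    linear_combination H3 j - H1 j - H4 j
  have E2 : ∀ j, w 2 j = -((-2) * w 6 j + (0) * w 7 j + (4) * w 8 j) := fun j => by
    linear_combination H5 j - H2 j - H4 j
  have E3 : ∀ j, w 3 j = -((2) * w 6 j + (2) * w 7 j + (-1) * w 8 j) := fun j => by
    linear_combination H1 j
  have E4 : ∀ j, w 4 j = -((2) * w 6 j + (3) * w 7 j + (2) * w 8 j) := fun j => by
    linear_combination H2 j
  have E5 : ∀ j, w 5 j = -((4) * w 6 j + (6) * w 7 j + (-2) * w 8 j) := fun j => by
    linear_combination H4 j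
  -- `h2` then becomes a linear system for the 18 entries of the last three rows, solved by an
  -- explicit left inverse
  have K60 := h2 6 (Pi.single 0 1)
  have K61 := h2 6 (Pi.single 1 1)
  have K62 := h2 6 (Pi.single 2 1)
  have K70 := h2 7 (Pi.single 0 1)
  have K71 := h2 7 (Pi.single 1 1)
  have K72 := h2 7 (Pi.single 2 1)
  have K80 := h2 8 (Pi.single 0 1)
  have K81 := h2 8 (Pi.single 1 1)
  have K82 := h2 8 (Pi.single 2 1)
  have K00 := h2 0 (Pi.single 0 1)
  have K01 := h2 0 (Pi.single 1 1)
  have K02 := h2 0 (Pi.single 2 1)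
  have K10 := h2 1 (Pi.single 0 1)
  have K11 := h2 1 (Pi.single 1 1)
  have K12 := h2 1 (Pi.single 2 1)
  have K20 := h2 2 (Pi.single 0 1)
  have K21 := h2 2 (Pi.single 1 1)
  have K22 := h2 2 (Pi.single 2 1)
  have K30 := h2 3 (Pi.single 0 1)
  have K31 := h2 3 (Pi.single 1 1)
  have K32 := h2 3 (Pi.single 2 1)
  have K40 := h2 4 (Pi.single 0 1)
  have K41 := h2 4 (Pi.single 1 1)
  have K42 := h2 4 (Pi.single 2 1)
  have K50 := h2 5 (Pi.single 0 1)
  have K51 := h2 5 (Pi.single 1 1)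
  have K52 := h2 5 (Pi.single 2 1)
  simp [Fin.sum_univ_six, α, β, ppts, E0, E1, E2, E3, E4, E5] at K60 K61 K62 K70 K71 K72 K80 K81 K82 K00 K01 K02 K10 K11 K12 K20 K21 K22 K30 K31 K32 K40 K41 K42 K50 K51 K52
  have v60 : w 6 0 = 0 := by
    linear_combination (3/2) * K60 + (2/3) * K61 + (-4/3) * K62 + (4/3) * K70 + (4/3) * K71 + (-8/3) * K81 + (-8/3) * K82 + (-2/3) * K00 + (-5/3) * K01 + (-1) * K02 + (2/3) * K10 + (-4/3) * K11 + (-1) * K12 + (2/3) * K20 + (5/3) * K21 + (8/3) * K22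
  have v61 : w 6 1 = 0 := by
    linear_combination (-2/3) * K61 + (4/3) * K62 + (-4/3) * K71 + (8/3) * K81 + (8/3) * K82 + (1) * K01 + (-2/3) * K10 + (4/3) * K11 + (1) * K12 + (-2/3) * K20 + (-5/3) * K21 + (-8/3) * K22
  have v62 : w 6 2 = 0 := by
    linear_combination (-1) * K60 + (-4/3) * K70 + (2/3) * K00 + (2/3) * K01 + (1) * K02
  have v63 : w 6 3 = 0 := by
    linear_combination (5/12) * K61 + (-1/2) * K62 + (1/3) * K71 + (-2/3) * K81 + (-1) * K82 + (-1/4) * K01 + (1/6) * K10 + (-1/3) * K11 + (-1/4) * K12 + (1/4) * K20 + (1/3) * K21 + (1) * K22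
  have v64 : w 6 4 = 0 := by
    linear_combination (1/3) * K62 + (2/3) * K82 + (-1/6) * K20 + (1/6) * K21 + (-2/3) * K22
  have v65 : w 6 5 = 0 := by
    linear_combination (1/4) * K60 + (1/12) * K62 + (1/3) * K70 + (-1/3) * K82 + (-1/6) * K00 + (-1/6) * K01 + (-1/4) * K02 + (1/12) * K20 + (-1/12) * K21 + (1/3) * K22
  have v70 : w 7 0 = 0 := by
    linear_combination (-9/8) * K60 + (-1/2) * K61 + (1) * K62 + (-1) * K70 + (-1) * K71 + (2) * K81 + (2) * K82 + (3/4) * K00 + (5/4) * K01 + (3/4) * K02 + (-1/2) * K10 + (1) * K11 + (3/4) * K12 + (-1/2) * K20 + (-5/4) * K21 + (-2) * K22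
  have v71 : w 7 1 = 0 := by
    linear_combination (1/2) * K61 + (-1) * K62 + (1) * K71 + (-2) * K81 + (-2) * K82 + (-1/2) * K01 + (1/2) * K10 + (-1) * K11 + (-3/4) * K12 + (1/2) * K20 + (5/4) * K21 + (2) * K22
  have v72 : w 7 2 = 0 := by
    linear_combination (3/4) * K60 + (1) * K70 + (-1/2) * K00 + (-1/2) * K01 + (-1/2) * K02
  have v73 : w 7 3 = 0 := by
    linear_combination (-1/8) * K61 + (1/4) * K62 + (1/2) * K81 + (1/2) * K82 + (1/8) * K01 + (-1/8) * K10 + (1/4) * K11 + (-1/8) * K20 + (-1/8) * K21 + (-1/2) * K22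
  have v74 : w 7 4 = 0 := by
    linear_combination (1/4) * K12 + (-1/4) * K21
  have v75 : w 7 5 = 0 := by
    linear_combination (-1/8) * K60 + (-1/6) * K70 + (1/6) * K72 + (1/12) * K00 + (1/12) * K01 + (1/12) * K02 + (-1/12) * K12 + (1/12) * K21
  have v80 : w 8 0 = 0 := by
    linear_combination (1/2) * K60 + (1/12) * K61 + (-1/6) * K62 + (2/3) * K70 + (1/6) * K71 + (-1/2) * K80 + (-1/3) * K81 + (-1/3) * K82 + (-1/3) * K00 + (-1/3) * K01 + (-1/2) * K02 + (-1/24) * K10 + (-1/6) * K11 + (-1/8) * K12 + (1/3) * K20 + (5/24) * K21 + (1/3) * K22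
  have v81 : w 8 1 = 0 := by
    linear_combination (1/6) * K61 + (-1/3) * K62 + (1/3) * K71 + (-2/3) * K81 + (-2/3) * K82 + (-1/12) * K10 + (-1/3) * K11 + (-1/4) * K12 + (1/6) * K20 + (5/12) * K21 + (2/3) * K22
  have v82 : w 8 2 = 0 := by
    linear_combination (-1/2) * K60 + (-2/3) * K70 + (1/3) * K00 + (1/3) * K01 + (1/2) * K02 + (-1/4) * K20
  have v83 : w 8 3 = 0 := by
    linear_combination (1/12) * K61 + (1/6) * K71 + (1/6) * K81 + (-1/24) * K10 + (-1/6) * K11 + (-1/8) * K12 + (1/24) * K21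
  have v84 : w 8 4 = 0 := by
    linear_combination (1/6) * K62 + (1/3) * K82 + (-1/12) * K20 + (-1/6) * K21 + (-1/3) * K22
  have v85 : w 8 5 = 0 := by
    linear_combination (1/8) * K60 + (1/24) * K62 + (1/6) * K70 + (-1/6) * K82 + (-1/12) * K00 + (-1/12) * K01 + (-1/8) * K02 + (1/24) * K20 + (-1/24) * K21 + (-1/12) * K22
  have v6 : w 6 = 0 := by funext j; fin_cases j <;> assumption
  have v7 : w 7 = 0 := by funext j; fin_cases j <;> assumption
  have v8 : w 8 = 0 := by funext j; fin_cases j <;> assumption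
  funext i j
  fin_cases i
  · exact (E0 j).trans (by simp [v6, v7, v8])
  · exact (E1 j).trans (by simp [v6, v7, v8])
  · exact (E2 j).trans (by simp [v6, v7, v8])
  · exact (E3 j).trans (by simp [v6, v7, v8])
  · exact (E4 j).trans (by simp [v6, v7, v8])
  · exact (E5 j).trans (by simp [v6, v7, v8])
  · exact congrFun v6 j
  · exact congrFun v7 j
  · exact congrFun v8 j

end WaringTwo

namespace WaringTwo

open Finset Topology Filter

/-- Nine points `A v₂(pᵢ)` of the Veronese surface moved by the linear map `A`; the parameters are
the entries of `A` and the coordinates of the `pᵢ`. -/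
def param (e : (Fin 6 × Fin 6) ⊕ (Fin 9 × Fin 3) → ℂ) (x : Fin 9 × Fin 6) : ℂ :=
  ∑ m, e (Sum.inl (x.2, m)) * (e (Sum.inr (x.1, α m)) * e (Sum.inr (x.1, β m)))

/-- The components of `param` as polynomials. -/
noncomputable def paramP (x : Fin 9 × Fin 6) :
    MvPolynomial ((Fin 6 × Fin 6) ⊕ (Fin 9 × Fin 3)) ℂ :=
  ∑ m, X (Sum.inl (x.2, m)) * (X (Sum.inr (x.1, α m)) * X (Sum.inr (x.1, β m)))

theorem eval_paramP (e x) : eval e (paramP x) = param e x := by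
  simp [paramP, param]

/-- The differential of `param` at the point given by the identity matrix and `ppts`. -/
def dparam : ((Fin 6 × Fin 6) ⊕ (Fin 9 × Fin 3) → ℂ) →ₗ[ℂ] (Fin 9 × Fin 6 → ℂ) where
  toFun v x := ∑ m, v (Sum.inl (x.2, m)) * v2 (ppts x.1) m +
    (v (Sum.inr (x.1, α x.2)) * ppts x.1 (β x.2) + ppts x.1 (α x.2) * v (Sum.inr (x.1, β x.2)))
  map_add' u v := by
    funext x
    simp only [Pi.add_apply, add_mul, Finset.sum_add_distrib]
    ring
  map_smul' c u := by
    funext x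
    simp only [Pi.smul_apply, smul_eq_mul, mul_assoc, ← Finset.mul_sum, RingHom.id_apply]
    ring

/-- The base point for the differential of `param`. -/
def parBase : (Fin 6 × Fin 6) ⊕ (Fin 9 × Fin 3) → ℂ :=
  Sum.elim (fun x => (1 : Matrix (Fin 6) (Fin 6) ℂ) x.1 x.2) fun x => ppts x.1 x.2

theorem hasDerivAt_param (v x) :
    HasDerivAt (fun ε : ℂ => param (parBase + ε • v) x) (dparam v x) 0 := by
  have h0 : ∀ y, HasDerivAt (fun ε : ℂ => (parBase + ε • v) y) (v y) 0 := fun y =>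
    hasDerivAt_of_affine (parBase y) (v y) fun ε => by simp
  have h1 : ∀ m, _ := fun m => (h0 (Sum.inl (x.2, m))).mul
    ((h0 (Sum.inr (x.1, α m))).mul (h0 (Sum.inr (x.1, β m))))
  have h2 := HasDerivAt.fun_sum (u := univ) fun m _ => h1 m
  refine h2.congr_deriv ?_
  simp only [dparam, LinearMap.coe_mk, AddHom.coe_mk, Finset.sum_add_distrib, Pi.mul_apply,
    zero_smul, add_zero]
  congr 1
  simp [parBase, Matrix.one_apply]

theorem dparam_surjective : Function.Surjective dparam := by
  by_contra h
  obtain ⟨c, hc, hc2⟩ := exists_relation_of_not_surjective _ h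
  refine hc ?_
  have := ppts_rigid (fun i j => c (i, j)) (fun j m => ?_) fun i u => ?_
  · funext ⟨i, j⟩
    exact congrFun (congrFun this i) j
  · have := hc2 (Sum.elim (Pi.single (j, m) 1) 0)
    rw [Fintype.sum_prod_type] at this
    rw [← this]
    refine Finset.sum_congr rfl fun i _ => ?_
    rw [Finset.sum_eq_single j]
    · rw [mul_eq_mul_left_iff]; left
      simp only [dparam, LinearMap.coe_mk, AddHom.coe_mk]
      rw [Finset.sum_eq_single m]
      · simp
      · intro m' _ hm; simp [hm]
      · simp
    · intro j' _ hj
      simp only [dparam, LinearMap.coe_mk, AddHom.coe_mk]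
      simp [hj]
    · simp
  · have := hc2 (Sum.elim 0 fun x => if x.1 = i then u x.2 else 0)
    rw [Fintype.sum_prod_type, Finset.sum_eq_single i] at this
    · rw [← this]
      refine Finset.sum_congr rfl fun j _ => ?_
      simp [dparam]
    · intro i' _ hi
      refine Finset.sum_eq_zero fun j _ => ?_
      simp [dparam, hi]
    · simp

theorem map_nhds_param : map param (𝓝 parBase) = 𝓝 (param parBase) := by
  refine map_nhds_of_polyFun param (fun x => ?_) _ fun ρ => ?_
  · have h : ∀ y, PolyFun fun e : (Fin 6 × Fin 6) ⊕ (Fin 9 × Fin 3) → ℂ => e y :=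
      fun y => PolyFun.lin (LinearMap.proj (R := ℂ) (φ := fun _ => ℂ) y)
    exact PolyFun.sum _ fun m _ => (h _).mul ((h _).mul (h _))
  · obtain ⟨v, hv⟩ := dparam_surjective ρ
    exact ⟨v, fun x => hv ▸ hasDerivAt_param v x⟩

/-- Nine generic points of `ℂ⁶` are the images under an invertible linear map of nine generic
points of the Veronese surface. -/
theorem generic_veronese (F : MvPolynomial (Fin 9 × Fin 3) ℂ) (hF : F ≠ 0) :
    Generic fun t : Fin 9 × Fin 6 → ℂ =>
      ∃ (A : Matrix (Fin 6) (Fin 6) ℂ) (p : Fin 9 → Fin 3 → ℂ), A.det ≠ 0 ∧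
        eval (fun x => p x.1 x.2) F ≠ 0 ∧ ∀ i, (fun j => t (i, j)) = A.mulVec (v2 (p i)) := by
  classical
  let M : Matrix (Fin 6) (Fin 6) (MvPolynomial ((Fin 6 × Fin 6) ⊕ (Fin 9 × Fin 3)) ℂ) :=
    Matrix.of fun i j => X (Sum.inl (i, j))
  let g := M.det * rename Sum.inr F
  have hM : ∀ e, eval e M.det = (Matrix.of fun i j => e (Sum.inl (i, j))).det := by
    intro e
    rw [RingHom.map_det]
    congr 1
    ext i j
    simp [M]
  have hg : g ≠ 0 := by
    refine mul_ne_zero (fun h => ?_) ?_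
    · have := hM parBase
      rw [h, map_zero] at this
      have h1 : (Matrix.of fun i j => parBase (Sum.inl (i, j))) = (1 : Matrix (Fin 6) (Fin 6) ℂ) :=
        rfl
      rw [h1, Matrix.det_one] at this
      exact zero_ne_one this
    · exact (rename_injective _ Sum.inr_injective).ne_iff' (map_zero _) |>.2 hF
  -- the image of `param` is dense, since it contains a neighbourhood of `param parBase`
  obtain ⟨F', hF', h⟩ := generic_of_dense (ι := Fin 9 × Fin 6)
    (fun x => X (Sum.inl x) - rename Sum.inr (paramP x)) (rename Sum.inr g) (fun G hG => by
      have hev : ∀ e, eval e (aeval paramP G) = eval (param e) G := fun e => by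
        rw [eval_aeval]
        simp only [eval_paramP]
      have h1 : aeval paramP G * g = 0 := by
        refine MvPolynomial.funext fun e => ?_
        rw [map_mul, map_zero]
        by_cases h0 : eval e g = 0
        · rw [h0, mul_zero]
        · have := hG (param e) e (fun x => by
            simp [eval_rename, Function.comp_def, ← eval_paramP]) (by
            rw [eval_rename]; exact h0)
          rw [hev, this, zero_mul]
      have h2 := (mul_eq_zero.1 h1).resolve_right hg
      refine eq_zero_of_eventually (x := param parBase) ?_
      rw [← map_nhds_param, eventually_map]
      refine Eventually.of_forall fun e => ?_
      rw [← hev, h2, map_zero])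
  refine ⟨F', hF', fun t ht => ?_⟩
  obtain ⟨e, h1, h2⟩ := h t ht
  rw [eval_rename, map_mul, hM, eval_rename] at h2
  refine ⟨Matrix.of fun i j => e (Sum.inl (i, j)), fun i l => e (Sum.inr (i, l)),
    (mul_ne_zero_iff.1 h2).1, (mul_ne_zero_iff.1 h2).2, fun i => funext fun j => ?_⟩
  have := h1 (i, j)
  rw [map_sub, eval_X, eval_rename, sub_eq_zero] at this
  exact this.trans (eval_paramP _ _)

end WaringTwo

/-! ### Sextics and cubics -/

namespace WaringTwo

open Finset

theorem eval_linForm {n : ℕ} (a x : Fin (n + 1) → ℂ) :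
    eval x (linForm a) = ∑ i, a i * x i := by
  simp [linForm]

/-- A symmetric `3 × 3` matrix with vanishing `2 × 2` minors is the square of a vector. -/
theorem exists_v2 (y : Fin 6 → ℂ) (h0 : y 3 * y 5 = y 4 ^ 2) (h1 : y 0 * y 5 = y 2 ^ 2) (h2 : y 1 * y 2 = y 0 * y 4)
    (h3 : y 0 * y 3 = y 1 ^ 2) : ∃ q, y = v2 q := by
  by_cases y0 : y 0 = 0
  · have y1 : y 1 = 0 := by simpa [y0] using h3.symm
    have y2 : y 2 = 0 := by simpa [y0] using h1.symm
    by_cases y3 : y 3 = 0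
    · have y4 : y 4 = 0 := by simpa [y3] using h0.symm
      obtain ⟨z, hz⟩ := IsAlgClosed.exists_pow_nat_eq (y 5) (n := 2) (by norm_num)
      refine ⟨![0, 0, z], funext fun j => ?_⟩
      fin_cases j <;> simp [v2, α, β, y0, y1, y2, y3, y4, ← hz, sq]
    · obtain ⟨z, hz⟩ := IsAlgClosed.exists_pow_nat_eq (y 3) (n := 2) (by norm_num)
      have hz0 : z ≠ 0 := by rintro rfl; exact y3 (by rw [← hz]; simp)
      refine ⟨![0, z, y 4 / z], funext fun j => ?_⟩
      fin_cases j <;> simp [v2, α, β, y0, y1, y2] <;> field_simp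
      · linear_combination -hz
      · linear_combination y 5 * hz + h0
  · obtain ⟨z, hz⟩ := IsAlgClosed.exists_pow_nat_eq (y 0) (n := 2) (by norm_num)
    have hz0 : z ≠ 0 := by rintro rfl; exact y0 (by rw [← hz]; simp)
    refine ⟨![z, y 1 / z, y 2 / z], funext fun j => ?_⟩
    fin_cases j <;> simp [v2, α, β] <;> field_simp
    · linear_combination -hz
    · linear_combination y 3 * hz + h3
    · linear_combination y 4 * hz - h2
    · linear_combination y 5 * hz + h1

theorem isHomogeneous_quad (w : Fin 6 → ℂ) :
    (∑ m, C (w m) * (X (α m) * X (β m)) : MvPolynomial (Fin 3) ℂ).IsHomogeneous 2 :=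
  IsHomogeneous.sum _ _ _ fun m _ => by
    simpa using (isHomogeneous_C (Fin 3) (w m)).mul
      ((isHomogeneous_X ℂ (α m)).mul (isHomogeneous_X ℂ (β m)))

/-- Sixth powers of ternary linear forms correspond to cubes of linear forms at the points of the
Veronese surface. -/
theorem sum_six_iff {I J : Type*} [Fintype I] [Fintype J] (A : Matrix (Fin 6) (Fin 6) ℂ)
    (hA : A.det ≠ 0) (p : I → Fin 3 → ℂ) (q : J → Fin 3 → ℂ) :
    ∑ i, linForm (p i) ^ 6 = ∑ j, linForm (q j) ^ 6 ↔
      ∑ i, linForm (A.mulVec (v2 (p i))) ^ 3 = ∑ j, linForm (A.mulVec (v2 (q j))) ^ 3 := by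
  constructor
  · intro h
    refine MvPolynomial.funext fun x => ?_
    have h1 := (apolar p q).1 h ((∑ m, C ((Matrix.vecMul x A) m) * (X (α m) * X (β m))) ^ 3)
      (by simpa using (isHomogeneous_quad _).pow 3)
    have h2 : ∀ u : Fin 3 → ℂ,
        eval u ((∑ m, C ((Matrix.vecMul x A) m) * (X (α m) * X (β m))) ^ 3) =
        eval x (linForm (A.mulVec (v2 u)) ^ 3) := by
      intro u
      rw [map_pow, map_pow, eval_linForm]
      congr 1
      have := Matrix.dotProduct_mulVec x A (v2 u)
      rw [dotProduct_comm] at this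
      simp only [dotProduct] at this
      rw [this]
      simp [v2]
    simpa only [h2, map_sum] using h1
  · intro h
    refine MvPolynomial.funext fun x => ?_
    -- the quadratic form `c`, paired with `v2 u`, gives the square of the pairing of `x` and `u`
    let c : Fin 6 → ℂ := fun m => (if α m = β m then 1 else 2) * (x (α m) * x (β m))
    have h6 : ∀ z : ℂ, z ^ 6 = (z ^ 2) ^ 3 := fun z => by ring
    have h1 := congrArg (eval (Matrix.vecMul c A⁻¹)) h
    have h2 : ∀ u : Fin 3 → ℂ, eval (Matrix.vecMul c A⁻¹) (linForm (A.mulVec (v2 u)) ^ 3) =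
        eval x (linForm u ^ 6) := by
      intro u
      have hA' : IsUnit A.det := isUnit_iff_ne_zero.2 hA
      rw [map_pow, map_pow, eval_linForm, eval_linForm, h6]
      congr 1
      have := Matrix.dotProduct_mulVec c A⁻¹ (A.mulVec (v2 u))
      rw [Matrix.mulVec_mulVec, Matrix.nonsing_inv_mul _ hA', Matrix.one_mulVec, dotProduct_comm,
        dotProduct_comm (Matrix.vecMul c A⁻¹)] at this
      simp only [dotProduct] at this
      rw [← this]
      simp [Fin.sum_univ_six, Fin.sum_univ_three, v2, α, β, c]
      ring
    simpa only [h2, map_sum] using h1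

/-- The correspondence of `sum_six_iff` respects equality of decompositions as multisets. -/
theorem eqv_six_iff {r : ℕ} (A : Matrix (Fin 6) (Fin 6) ℂ) (hA : A.det ≠ 0)
    (p q : Fin r → Fin 3 → ℂ) : Eqv (n := 2) 6 p q ↔
      Eqv (n := 5) 3 (fun i => A.mulVec (v2 (p i))) fun i => A.mulVec (v2 (q i)) := by
  let f : (Fin 3 → ℂ) → MvPolynomial (Fin 3) ℂ := fun x => linForm x ^ 6
  let g : (Fin 3 → ℂ) → MvPolynomial (Fin 6) ℂ := fun x => linForm (A.mulVec (v2 x)) ^ 3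
  have hfg : ∀ x y, f x = f y ↔ g x = g y := by
    intro x y
    have := sum_six_iff A hA (fun _ : Fin 1 => x) (fun _ : Fin 1 => y)
    simpa using this
  -- `f` and `g` identify the same vectors, so each factors through the other, and the multisets of
  -- values determine each other
  have h1 : g = Function.extend f g 0 ∘ f :=
    funext fun x => (Function.FactorsThrough.extend_apply (fun a b h => (hfg a b).1 h) _ x).symm
  have h2 : f = Function.extend g f 0 ∘ g :=
    funext fun x => (Function.FactorsThrough.extend_apply (fun a b h => (hfg a b).2 h) _ x).symm
  constructor
  · intro h
    have h3 := congrArg (Multiset.map (Function.extend f g 0)) h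
    rw [Multiset.map_map, Multiset.map_map] at h3
    have h4 : ∀ s : Fin r → Fin 3 → ℂ, ((Function.extend f g 0) ∘ fun i => linForm (s i) ^ 6) =
      fun i => g (s i) := fun s => funext fun i => (congrFun h1 (s i)).symm
    rw [h4, h4] at h3
    exact h3
  · intro h
    have h3 := congrArg (Multiset.map (Function.extend g f 0)) h
    rw [Multiset.map_map, Multiset.map_map] at h3
    have h4 : ∀ s : Fin r → Fin 3 → ℂ, ((Function.extend g f 0) ∘
      fun i => linForm (A.mulVec (v2 (s i))) ^ 3) =
      fun i => f (s i) := fun s => funext fun i => (congrFun h2 (s i)).symm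
    rw [h4, h4] at h3
    exact h3

/-- Converse of `twoDec_of_exists`: the second decomposition as a family of vectors. -/
theorem TwoDec.exists_second {d n r : ℕ} {a : Fin r → Fin (n + 1) → ℂ} (h : TwoDec d n r a) :
    ∃ b : Fin r → Fin (n + 1) → ℂ, ∑ i, linForm (b i) ^ d = ∑ i, linForm (a i) ^ d ∧
      ¬ Eqv d a b ∧ ∀ c : Fin r → Fin (n + 1) → ℂ,
        ∑ i, linForm (c i) ^ d = ∑ i, linForm (a i) ^ d → Eqv d a c ∨ Eqv d b c := by
  have key : ∀ x y : Multiset (MvPolynomial (Fin (n + 1)) ℂ), x ≠ y →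
      {D : Multiset (MvPolynomial (Fin (n + 1)) ℂ) |
      ∃ b : Fin r → Fin (n + 1) → ℂ, (∑ i, linForm (b i) ^ d) = ∑ i, linForm (a i) ^ d ∧
        D = Finset.univ.val.map fun i => linForm (b i) ^ d} = {x, y} →
      (univ.val.map fun i => linForm (a i) ^ d) = x → 
      ∃ b : Fin r → Fin (n + 1) → ℂ, ∑ i, linForm (b i) ^ d = ∑ i, linForm (a i) ^ d ∧
      ¬ Eqv d a b ∧ ∀ c : Fin r → Fin (n + 1) → ℂ,
        ∑ i, linForm (c i) ^ d = ∑ i, linForm (a i) ^ d → Eqv d a c ∨ Eqv d b c := by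
    intro x y hxy hS hx
    have hy : y ∈ ({x, y} : Set (Multiset (MvPolynomial (Fin (n + 1)) ℂ))) := by simp
    rw [← hS] at hy
    obtain ⟨b, hb, rfl⟩ := hy
    refine ⟨b, hb, fun h => hxy (hx.symm.trans h), fun c hc => ?_⟩
    have : (univ.val.map fun i => linForm (c i) ^ d) ∈
      ({x, univ.val.map fun i => linForm (b i) ^ d} :
        Set (Multiset (MvPolynomial (Fin (n + 1)) ℂ))) := by
      rw [← hS]; exact ⟨c, hc, rfl⟩
    rcases this with h | h
    · exact Or.inl (hx.trans h.symm)
    · exact Or.inr h.symm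
  obtain ⟨x, y, hxy, hS⟩ := Set.ncard_eq_two.1 h.2
  have ha : (univ.val.map fun i => linForm (a i) ^ d) ∈
      ({x, y} : Set (Multiset (MvPolynomial (Fin (n + 1)) ℂ))) := by
    rw [← hS]; exact ⟨a, rfl, rfl⟩
  rcases ha with ha | ha
  · exact key x y hxy hS ha
  · exact key y x hxy.symm (by rw [hS, Set.pair_comm]) ha

end WaringTwo

/-! ### The case (3, 5, 9) -/

namespace WaringTwo

open Finset

/-- The cubic hypersurface of singular symmetric matrices, moved by a linear change of coordinates
with inverse `B`: the secant variety of the Veronese surface. -/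
noncomputable def secantCubic (B : Matrix (Fin 6) (Fin 6) ℂ) : MvPolynomial (Fin 6) ℂ :=
  let Y : Fin 6 → MvPolynomial (Fin 6) ℂ := fun m => ∑ j, C (B m j) * X j
  Y 0 * Y 3 * Y 5 + C 2 * (Y 1 * Y 2 * Y 4) - Y 0 * Y 4 * Y 4 - Y 3 * Y 2 * Y 2 - Y 5 * Y 1 * Y 1

theorem isHomogeneous_secantCubic (B : Matrix (Fin 6) (Fin 6) ℂ) :
    (secantCubic B).IsHomogeneous 3 := by
  have hY : ∀ m, (∑ j, C (B m j) * X j : MvPolynomial (Fin 6) ℂ).IsHomogeneous 1 := fun m =>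
    IsHomogeneous.sum _ _ _ fun j _ => by
      simpa using (isHomogeneous_C (Fin 6) (B m j)).mul (isHomogeneous_X ℂ j)
  have h3 : ∀ i j k, ((∑ l, C (B i l) * X l) * (∑ l, C (B j l) * X l) * (∑ l, C (B k l) * X l) :
      MvPolynomial (Fin 6) ℂ).IsHomogeneous 3 := fun i j k => by
    simpa using ((hY i).mul (hY j)).mul (hY k)
  refine ((((h3 0 3 5).add ?_).sub (h3 0 4 4)).sub (h3 3 2 2)).sub (h3 5 1 1)
  simpa using (isHomogeneous_C (Fin 6) (2 : ℂ)).mul (h3 1 2 4)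

/-- The gradient of the determinant of the symmetric matrix with entries `y`: up to factors, its
`2 × 2` minors. -/
def minors (y : Fin 6 → ℂ) : Fin 6 → ℂ :=
  ![y 3 * y 5 - y 4 ^ 2, 2 * (y 2 * y 4 - y 5 * y 1), 2 * (y 1 * y 4 - y 3 * y 2),
    y 0 * y 5 - y 2 ^ 2, 2 * (y 1 * y 2 - y 0 * y 4), y 0 * y 3 - y 1 ^ 2]

/-- The gradient of the secant cubic at `x` is `Bᵀ` applied to the vector of `2 × 2` minors
at `B x`. -/
theorem eval_pderiv_secantCubic (B : Matrix (Fin 6) (Fin 6) ℂ) (x : Fin 6 → ℂ) (j : Fin 6) :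
    eval x (pderiv j (secantCubic B)) = Matrix.vecMul (minors (B.mulVec x)) B j := by
  have hY : ∀ m, eval x (∑ j, C (B m j) * X j) = B.mulVec x m := fun m => by
    simp [Matrix.mulVec, dotProduct]
  have hd : ∀ m, pderiv j (∑ j, C (B m j) * X j : MvPolynomial (Fin 6) ℂ) = C (B m j) := by
    intro m
    simp only [map_sum, pderiv_C_mul, pderiv_X]
    rw [Finset.sum_eq_single j]
    · simp
    · intro i _ hi
      simp [hi]
    · simp
  simp only [secantCubic, map_add, map_sub, Derivation.leibniz, hd, smul_eq_mul,
    map_mul, hY, eval_C]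
  simp [Matrix.vecMul, dotProduct, Fin.sum_univ_six, minors]
  ring

theorem minors_v2 (p : Fin 3 → ℂ) : minors (v2 p) = 0 := by
  funext j
  fin_cases j <;> simp [minors, v2, α, β] <;> ring

/-- The reduction of nine points of `ℂ⁶` on a Veronese surface to nine points of the plane. By `hT`
the secant cubic of the surface is singular at the points of every other decomposition, so these
lie on the same surface. -/
theorem twoDec_cubic (A : Matrix (Fin 6) (Fin 6) ℂ) (hA : A.det ≠ 0) (p : Fin 9 → Fin 3 → ℂ)
    (hp : TwoDec 6 2 9 p)
    (hT : ∀ b : Fin 9 → Fin 6 → ℂ, (∀ g : MvPolynomial (Fin 6) ℂ, g.IsHomogeneous 3 →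
      ∑ i, eval (b i) g = ∑ i, eval (A.mulVec (v2 (p i))) g) →
      ∀ s : MvPolynomial (Fin 6) ℂ, s.IsHomogeneous 3 →
      (∀ i j, eval (A.mulVec (v2 (p i))) (pderiv j s) = 0) → ∀ i j, eval (b i) (pderiv j s) = 0) :
    TwoDec 3 5 9 fun i => A.mulVec (v2 (p i)) := by
  have hA' : IsUnit A.det := isUnit_iff_ne_zero.2 hA
  have hinv : ∀ y : Fin 6 → ℂ, A⁻¹.mulVec (A.mulVec y) = y := fun y => by
    rw [Matrix.mulVec_mulVec, Matrix.nonsing_inv_mul _ hA', Matrix.one_mulVec]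
  have hinv' : ∀ y : Fin 6 → ℂ, A.mulVec (A⁻¹.mulVec y) = y := fun y => by
    rw [Matrix.mulVec_mulVec, Matrix.mul_nonsing_inv _ hA', Matrix.one_mulVec]
  have hdec : ∀ b : Fin 9 → Fin 6 → ℂ,
      ∑ i, linForm (n := 5) (b i) ^ 3 = ∑ i, linForm (n := 5) (A.mulVec (v2 (p i))) ^ 3 →
      ∃ q : Fin 9 → Fin 3 → ℂ, b = (fun i => A.mulVec (v2 (q i))) ∧
        ∑ i, linForm (n := 2) (q i) ^ 6 = ∑ i, linForm (n := 2) (p i) ^ 6 := by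
    intro b hb
    have h1 := hT b ((apolar b _).1 hb) (secantCubic A⁻¹) (isHomogeneous_secantCubic _)
      (fun i j => by rw [eval_pderiv_secantCubic, hinv, minors_v2, Matrix.zero_vecMul]; rfl)
    have h2 : ∀ i, ∃ q, A⁻¹.mulVec (b i) = v2 q := by
      intro i
      have h3 : Matrix.vecMul (minors (A⁻¹.mulVec (b i))) A⁻¹ = 0 := funext fun j => by
        rw [← eval_pderiv_secantCubic]; exact h1 i j
      have h4 : minors (A⁻¹.mulVec (b i)) = 0 := by
        have := congrArg (fun z => Matrix.vecMul z A) h3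
        simpa [Matrix.vecMul_vecMul, Matrix.nonsing_inv_mul _ hA'] using this
      have h5 := fun j => congrFun h4 j
      generalize A⁻¹.mulVec (b i) = y at h5
      have e0 := h5 0
      have e3 := h5 3
      have e4 := h5 4
      have e5 := h5 5
      simp [minors] at e0 e3 e4 e5
      exact exists_v2 y (by linear_combination e0) (by linear_combination e3)
        (by linear_combination e4) (by linear_combination e5)
    choose q hq using h2
    have hbq : b = fun i => A.mulVec (v2 (q i)) := funext fun i => by rw [← hq, hinv']
    exact ⟨q, hbq, (sum_six_iff A hA q p).2 (by rw [← hb, hbq])⟩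
  refine twoDec_of_exists _ (fun b hb i hi => ?_) (by norm_num) ?_
  · obtain ⟨q, rfl, hq⟩ := hdec b hb
    have h1 : v2 (q i) = 0 := by
      rw [← hinv (v2 (q i)), show A.mulVec (v2 (q i)) = 0 from hi, Matrix.mulVec_zero]
    have h2 : q i = 0 := by
      have e0 := congrFun h1 0
      have e3 := congrFun h1 3
      have e5 := congrFun h1 5
      simp [v2, α, β] at e0 e3 e5
      funext j
      fin_cases j
      exacts [e0, e3, e5]
    refine hp.1 8 (by norm_num) (fun j => q (i.succAbove j)) ?_
    rw [← hq, Fin.sum_univ_succAbove _ i, h2]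
    simp [linForm_zero]
  · obtain ⟨q, hq, hpq, h⟩ := hp.exists_second
    refine ⟨fun i => A.mulVec (v2 (q i)), (sum_six_iff A hA q p).1 hq,
      fun h0 => hpq ((eqv_six_iff A hA p q).2 h0), fun c hc => ?_⟩
    obtain ⟨c, rfl, hc'⟩ := hdec c hc
    exact (h c hc').imp (eqv_six_iff A hA p c).1 (eqv_six_iff A hA q c).1

theorem generic_and {ι : Type} [Fintype ι] {P Q : (ι → ℂ) → Prop} (hP : Generic P)
    (hQ : Generic Q) : Generic fun t => P t ∧ Q t := by
  obtain ⟨F, hF, h⟩ := hP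
  obtain ⟨G, hG, h'⟩ := hQ
  refine ⟨F * G, mul_ne_zero hF hG, fun t ht => ?_⟩
  rw [map_mul] at ht
  exact ⟨h t (left_ne_zero_of_mul ht), h' t (right_ne_zero_of_mul ht)⟩

theorem generic_mono {ι : Type} [Fintype ι] {P Q : (ι → ℂ) → Prop} (hP : Generic P)
    (h : ∀ t, P t → Q t) : Generic Q :=
  hP.imp fun _ hF => ⟨hF.1, fun t ht => h t (hF.2 t ht)⟩

theorem twoDec_cubic' (t : Fin 9 × Fin 6 → ℂ)
    (h : ∃ (A : Matrix (Fin 6) (Fin 6) ℂ) (p : Fin 9 → Fin 3 → ℂ), A.det ≠ 0 ∧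
      TwoDec 6 2 9 p ∧ ∀ i, (fun j => t (i, j)) = A.mulVec (v2 (p i)))
    (hT : ∀ b : Fin 9 → Fin 6 → ℂ, (∀ g : MvPolynomial (Fin 6) ℂ, g.IsHomogeneous 3 →
      ∑ i, eval (b i) g = ∑ i, eval (fun j => t (i, j)) g) →
    ∀ s : MvPolynomial (Fin 6) ℂ, s.IsHomogeneous 3 →
      (∀ i j, eval (fun j => t (i, j)) (pderiv j s) = 0) →
      ∀ i j, eval (b i) (pderiv j s) = 0) : TwoDec 3 5 9 fun i j => t (i, j) := by
  obtain ⟨A, p, hA, hp, ha⟩ := h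
  simp only [ha] at hT
  have ha' : (fun i j => t (i, j)) = fun i => A.mulVec (v2 (p i)) := funext ha
  rw [ha']
  exact twoDec_cubic A hA p hp hT

/-- `generic_six_two_nine` with the points of the plane as a family of vectors. -/
theorem exists_sextic : ∃ F : MvPolynomial (Fin 9 × Fin 3) ℂ, F ≠ 0 ∧
    ∀ p : Fin 9 → Fin 3 → ℂ, eval (fun x : Fin 9 × Fin 3 => p x.1 x.2) F ≠ 0 →
      TwoDec 6 2 9 p := by
  obtain ⟨F, hF, h⟩ := generic_six_two_nine
  exact ⟨F, hF, fun p hp => h (fun x => p x.1 x.2) hp⟩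

theorem generic_cubic_of_sextic : Generic fun t : Fin 9 × Fin 6 → ℂ =>
    ∃ (A : Matrix (Fin 6) (Fin 6) ℂ) (p : Fin 9 → Fin 3 → ℂ),
      A.det ≠ 0 ∧ TwoDec 6 2 9 p ∧ ∀ i, (fun j => t (i, j)) = A.mulVec (v2 (p i)) := by
  obtain ⟨F, hF, h⟩ := exists_sextic
  refine generic_mono (generic_veronese F hF) fun t ht => ?_
  obtain ⟨A, p, hA, hp, ha⟩ := ht
  exact ⟨A, p, hA, h _ hp, ha⟩

theorem generic_three_five_nine :
    Generic fun t : Fin 9 × Fin 6 → ℂ => TwoDec 3 5 9 fun i j => t (i, j) :=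
  generic_mono (generic_and generic_cubic_of_sextic
    generic_cubic_terracini) fun t ht => twoDec_cubic' t ht.1 ht.2

end WaringTwo

theorem waring_exceptional_two_decompositions (d n r : ℕ)
    (h : (d, n, r) = (6, 2, 9) ∨ (d, n, r) = (4, 3, 8) ∨ (d, n, r) = (3, 5, 9)) :
    Generic (ι := Fin r × Fin (n + 1)) fun t =>
      let a : Fin r → Fin (n + 1) → ℂ := fun i j => t (i, j)
      let f : MvPolynomial (Fin (n + 1)) ℂ := ∑ i, linForm (a i) ^ d
      (∀ s : ℕ, s < r → ∀ b : Fin s → Fin (n + 1) → ℂ, f ≠ ∑ i, linForm (b i) ^ d) ∧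
      {D : Multiset (MvPolynomial (Fin (n + 1)) ℂ) |
        ∃ b : Fin r → Fin (n + 1) → ℂ, (∑ i, linForm (b i) ^ d) = f ∧
          D = Finset.univ.val.map fun i => linForm (b i) ^ d}.ncard = 2 := by
  rcases h with h | h | h <;> simp only [Prod.mk.injEq] at h <;> obtain ⟨rfl, rfl, rfl⟩ := h
  · exact WaringTwo.generic_six_two_nine
  · exact WaringTwo.generic_four_three_eight
  · exact WaringTwo.generic_three_five_nine
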